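/- arXiv:0912.0832 — 16 statements merged into one kernel-verified Lean document; each statement's English description precedes it below -/
import Mathlib

section
/- Let O₁ and O₂ be open connected subsets of ℝ³ and let Φ : O₁ → O₂ be a C¹ diffeomorphism with the property that for every open set D ⊆ ℝ² and every C¹ function u : D → ℝ satisfying ∂u/∂t + u·∂u/∂x = 0 whose graph {(t,x,u(t,x)) : (t,x) ∈ D} is contained in O₁, there exist an open set D′ ⊆ ℝ² and a C¹ function ũ : D′ → ℝ satisfying ∂ũ/∂t + ũ·∂ũ/∂x = 0 such that Φ({(t,x,u(t,x)) : (t,x) ∈ D}) = {(t,x,ũ(t,x)) : (t,x) ∈ D′}. Then there exists an invertible real 3×3 matrix (sⱼⁱ) (upper index = row, lower index = column) such that for all (t,x,v) ∈ O₁: Φ(t,x,v) = ( (s₁¹t+s₂¹x+s₃¹)/(s₁³t+s₂³x+s₃³), (s₁²t+s₂²x+s₃²)/(s₁³t+s₂³x+s₃³), ((−Δ₃¹t+Δ₁¹)v+(Δ₃¹x+Δ₂¹)) / ((−Δ₃²t+Δ₁²)v+(Δ₃²x+Δ₂²)) ), where Δⱼⁱ is the 2×2 minor determinant obtained by deleting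 the i-th row and the j-th column of (sⱼⁱ). -/
/-- The determinant of the 2×2 matrix obtained from a 3×3 matrix `s` by deleting
row `i` and column `j`. -/
noncomputable def minor3 (s : Matrix (Fin 3) (Fin 3) ℝ) (i j : Fin 3) : ℝ :=
  (s.submatrix i.succAbove j.succAbove).det

/-- The graph `{(t, x, u (t, x)) : (t, x) ∈ D}` of a function `u` over `D ⊆ ℝ²`. -/
def burgersGraph (D : Set (ℝ × ℝ)) (u : ℝ × ℝ → ℝ) : Set (ℝ × ℝ × ℝ) :=
  (fun p : ℝ × ℝ => (p.1, p.2, u p)) '' D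

/-- `u` is a `C¹` solution of `∂u/∂t + u ∂u/∂x = 0` on the open set `D`. -/
def IsBurgersSolution (D : Set (ℝ × ℝ)) (u : ℝ × ℝ → ℝ) : Prop :=
  IsOpen D ∧ ContDiffOn ℝ 1 u D ∧
    ∀ p ∈ D, deriv (fun t => u (t, p.2)) p.1 + u p * deriv (fun x => u (p.1, x)) p.2 = 0


open Filter Topology

lemma burg_of_loc_const (D : Set (ℝ × ℝ)) (u : ℝ × ℝ → ℝ) (hD : IsOpen D)
    (h : ∀ r ∈ D, ∃ c : ℝ, u =ᶠ[𝓝 r] fun _ => c) : IsBurgersSolution D u := by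
  refine ⟨hD, ?_, ?_⟩
  · intro r hr
    obtain ⟨c, hc⟩ := h r hr
    exact (contDiffAt_const.congr_of_eventuallyEq hc).contDiffWithinAt
  · intro r hr
    obtain ⟨c, hc⟩ := h r hr
    have h1 : (fun t => u (t, r.2)) =ᶠ[𝓝 r.1] fun _ => c := by
      have : Tendsto (fun t : ℝ => (t, r.2)) (𝓝 r.1) (𝓝 r) := by
        have : Continuous (fun t : ℝ => (t, r.2)) := by fun_prop
        exact this.tendsto r.1
      exact this.eventually hc
    have h2 : (fun x => u (r.1, x)) =ᶠ[𝓝 r.2] fun _ => c := by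
      have : Tendsto (fun t : ℝ => (r.1, t)) (𝓝 r.2) (𝓝 r) := by
        have : Continuous (fun t : ℝ => (r.1, t)) := by fun_prop
        exact this.tendsto r.2
      exact this.eventually hc
    rw [h1.deriv_eq, h2.deriv_eq]
    simp

lemma fib_inj (O₁ : Set (ℝ × ℝ × ℝ)) (hO₁ : IsOpen O₁)
    (Φ Ψ : ℝ × ℝ × ℝ → ℝ × ℝ × ℝ)
    (hinv : ∀ p ∈ O₁, Ψ (Φ p) = p)
    (hsol : ∀ (D : Set (ℝ × ℝ)) (u : ℝ × ℝ → ℝ), IsBurgersSolution D u →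
      burgersGraph D u ⊆ O₁ →
      ∃ (D' : Set (ℝ × ℝ)) (u' : ℝ × ℝ → ℝ), IsBurgersSolution D' u' ∧
        Φ '' burgersGraph D u = burgersGraph D' u')
    (a b : ℝ × ℝ) (v w : ℝ) (hp : (a.1, a.2, v) ∈ O₁) (hq : (b.1, b.2, w) ∈ O₁)
    (h1 : (Φ (a.1, a.2, v)).1 = (Φ (b.1, b.2, w)).1)
    (h2 : (Φ (a.1, a.2, v)).2.1 = (Φ (b.1, b.2, w)).2.1) : a = b := by
  classical
  by_contra hab
  obtain ⟨U, W, hU, hW, haU, hbW, hUW⟩ := t2_separation hab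
  set D1 : Set (ℝ × ℝ) := U ∩ {r | (r.1, r.2, v) ∈ O₁} with hD1
  set D2 : Set (ℝ × ℝ) := W ∩ {r | (r.1, r.2, w) ∈ O₁} with hD2
  have hD1o : IsOpen D1 := hU.inter (hO₁.preimage (by fun_prop : Continuous fun r : ℝ × ℝ => (r.1, r.2, v)))
  have hD2o : IsOpen D2 := hW.inter (hO₁.preimage (by fun_prop : Continuous fun r : ℝ × ℝ => (r.1, r.2, w)))
  set u : ℝ × ℝ → ℝ := fun r => if r ∈ U then v else w with hu
  have hu1 : ∀ r ∈ U, u r = v := fun r hr => by simp [hu, hr]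
  have hu2 : ∀ r ∈ W, u r = w := fun r hr => by
    have : r ∉ U := fun h => Set.disjoint_left.1 hUW h hr
    simp [hu, this]
  obtain ⟨D', u', hb', him⟩ := hsol (D1 ∪ D2) u
    (burg_of_loc_const _ _ (hD1o.union hD2o) (by
      rintro r (hr | hr)
      · exact ⟨v, by filter_upwards [hU.mem_nhds hr.1] with s hs using hu1 s hs⟩
      · exact ⟨w, by filter_upwards [hW.mem_nhds hr.1] with s hs using hu2 s hs⟩))
    (by
      rintro _ ⟨r, hr | hr, rfl⟩
      · simpa [hu1 r hr.1] using hr.2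
      · simpa [hu2 r hr.1] using hr.2)
  have ma : Φ (a.1, a.2, v) ∈ burgersGraph D' u' := by
    rw [← him]
    refine ⟨_, ⟨a, Or.inl ⟨haU, hp⟩, ?_⟩, rfl⟩
    simp [hu1 a haU]
  have mb : Φ (b.1, b.2, w) ∈ burgersGraph D' u' := by
    rw [← him]
    refine ⟨_, ⟨b, Or.inr ⟨hbW, hq⟩, ?_⟩, rfl⟩
    simp [hu2 b hbW]
  obtain ⟨r, _, hr⟩ := ma
  obtain ⟨s, _, hs⟩ := mb
  have hrs : r = s := by
    rw [← hr, ← hs] at h1 h2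
    exact Prod.ext h1 h2
  have : Φ (a.1, a.2, v) = Φ (b.1, b.2, w) := by rw [← hr, ← hs, hrs]
  have := congrArg Ψ this
  rw [hinv _ hp, hinv _ hq] at this
  simp only [Prod.mk.injEq] at this
  exact hab (Prod.ext this.1 this.2.1)

/-- tangent planes go to tangent planes -/
lemma tangent_plane (O₁ : Set (ℝ × ℝ × ℝ)) 
    (Φ : ℝ × ℝ × ℝ → ℝ × ℝ × ℝ)
    (hsol : ∀ (D : Set (ℝ × ℝ)) (u : ℝ × ℝ → ℝ), IsBurgersSolution D u →
      burgersGraph D u ⊆ O₁ →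
      ∃ (D' : Set (ℝ × ℝ)) (u' : ℝ × ℝ → ℝ), IsBurgersSolution D' u' ∧
        Φ '' burgersGraph D u = burgersGraph D' u')
    (D : Set (ℝ × ℝ)) (u : ℝ × ℝ → ℝ) (hu : IsBurgersSolution D u)
    (hg : burgersGraph D u ⊆ O₁) (r : ℝ × ℝ) (hr : r ∈ D) (u1 : ℝ × ℝ →L[ℝ] ℝ)
    (hu1 : HasFDerivAt u u1 r) (M : ℝ × ℝ × ℝ →L[ℝ] ℝ × ℝ × ℝ)
    (hM : HasFDerivAt Φ M (r.1, r.2, u r)) :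
    ∃ m : ℝ, ∀ a b : ℝ, (M (a, b, u1 (a, b))).2.2 =
      m * ((M (a, b, u1 (a, b))).2.1 - (Φ (r.1, r.2, u r)).2.2 * (M (a, b, u1 (a, b))).1) := by
  obtain ⟨D', u', ⟨hDo', hc', he'⟩, him⟩ := hsol D u hu hg
  have key : ∀ s ∈ D, ((Φ (s.1, s.2, u s)).1, (Φ (s.1, s.2, u s)).2.1) ∈ D' ∧
      (Φ (s.1, s.2, u s)).2.2 = u' ((Φ (s.1, s.2, u s)).1, (Φ (s.1, s.2, u s)).2.1) := by
    intro s hs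
    have : Φ (s.1, s.2, u s) ∈ burgersGraph D' u' := by
      rw [← him]; exact ⟨_, ⟨s, hs, rfl⟩, rfl⟩
    obtain ⟨q, hq, hq'⟩ := this
    rw [← hq']
    exact ⟨hq, rfl⟩
  have hG : HasFDerivAt (fun s : ℝ × ℝ => (s.1, s.2, u s))
      ((ContinuousLinearMap.fst ℝ ℝ ℝ).prod ((ContinuousLinearMap.snd ℝ ℝ ℝ).prod u1)) r :=
    hasFDerivAt_fst.prodMk (hasFDerivAt_snd.prodMk hu1)
  have hF := HasFDerivAt.comp (g := Φ) r hM hG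
  set q : ℝ × ℝ := ((Φ (r.1, r.2, u r)).1, (Φ (r.1, r.2, u r)).2.1) with hq
  have hqD : q ∈ D' := (key r hr).1
  have hdu : DifferentiableAt ℝ u' q :=
    (hc'.contDiffAt (hDo'.mem_nhds hqD)).differentiableAt (by norm_num)
  have hU := hdu.hasFDerivAt
  set U := fderiv ℝ u' q
  have hU1 : deriv (fun t => u' (t, q.2)) q.1 = U (1, 0) := by
    have h1 : HasDerivAt (fun t : ℝ => (t, q.2)) (1, 0) q.1 :=
      (hasDerivAt_id _).prodMk (hasDerivAt_const _ _)
    exact (HasFDerivAt.comp_hasDerivAt (l := u') q.1 hU h1).deriv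
  have hU2 : deriv (fun t => u' (q.1, t)) q.2 = U (0, 1) := by
    have h1 : HasDerivAt (fun t : ℝ => (q.1, t)) (0, 1) q.2 :=
      (hasDerivAt_const _ _).prodMk (hasDerivAt_id _)
    exact (HasFDerivAt.comp_hasDerivAt (l := u') q.2 hU h1).deriv
  have hUeq := he' q hqD
  rw [hU1, hU2, ← (key r hr).2] at hUeq
  have hL := hF.snd.snd
  have hR := HasFDerivAt.comp (g := u') r hU (hF.fst.prodMk hF.snd.fst)
  have hev : (fun s : ℝ × ℝ => (Φ (s.1, s.2, u s)).2.2) =ᶠ[𝓝 r]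
      (fun s => u' ((Φ (s.1, s.2, u s)).1, (Φ (s.1, s.2, u s)).2.1)) := by
    filter_upwards [hu.1.mem_nhds hr] with s hs using (key s hs).2
  have huniq := hL.unique (hR.congr_of_eventuallyEq hev)
  refine ⟨U (0, 1), fun a b => ?_⟩
  have h3 := DFunLike.congr_fun huniq (a, b)
  simp at h3
  rw [h3]
  have hlin : ∀ y z : ℝ, U (y, z) = y * U (1, 0) + z * U (0, 1) := by
    intro y z
    have : (y, z) = y • ((1 : ℝ), (0 : ℝ)) + z • ((0 : ℝ), (1 : ℝ)) := by simp
    rw [this, map_add, map_smul, map_smul]; simp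
  rw [hlin]
  linear_combination (M (a, b, u1 (a, b))).1 * hUeq

lemma hd_fst {f : ℝ → ℝ × ℝ × ℝ} {f' : ℝ × ℝ × ℝ} {x : ℝ} (h : HasDerivAt f f' x) :
    HasDerivAt (fun y => (f y).1) f'.1 x := by
  exact (HasFDerivAt.comp_hasDerivAt x (hasFDerivAt_fst (𝕜 := ℝ) (p := f x)) h)

lemma hd_snd {f : ℝ → ℝ × ℝ × ℝ} {f' : ℝ × ℝ × ℝ} {x : ℝ} (h : HasDerivAt f f' x) :
    HasDerivAt (fun y => (f y).2.1) f'.2.1 x := by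
  have h1 := HasFDerivAt.comp_hasDerivAt x (hasFDerivAt_snd (𝕜 := ℝ) (p := f x)) h
  have h2 := HasFDerivAt.comp_hasDerivAt x (hasFDerivAt_fst (𝕜 := ℝ) (p := (f x).2)) h1
  exact h2

lemma hd_thd {f : ℝ → ℝ × ℝ × ℝ} {f' : ℝ × ℝ × ℝ} {x : ℝ} (h : HasDerivAt f f' x) :
    HasDerivAt (fun y => (f y).2.2) f'.2.2 x := by
  have h1 := HasFDerivAt.comp_hasDerivAt x (hasFDerivAt_snd (𝕜 := ℝ) (p := f x)) h
  have h2 := HasFDerivAt.comp_hasDerivAt x (hasFDerivAt_snd (𝕜 := ℝ) (p := (f x).2)) h1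
  exact h2

lemma deriv_facts
    (O₁ O₂ : Set (ℝ × ℝ × ℝ)) (hO₁ : IsOpen O₁) (hO₂ : IsOpen O₂)
    (Φ Ψ : ℝ × ℝ × ℝ → ℝ × ℝ × ℝ)
    (hΦ : ContDiffOn ℝ 1 Φ O₁) (hΨ : ContDiffOn ℝ 1 Ψ O₂)
    (hmaps : Set.MapsTo Φ O₁ O₂) (hmaps' : Set.MapsTo Ψ O₂ O₁)
    (hinv : ∀ p ∈ O₁, Ψ (Φ p) = p) (hinv' : ∀ q ∈ O₂, Φ (Ψ q) = q)
    (hsol : ∀ (D : Set (ℝ × ℝ)) (u : ℝ × ℝ → ℝ), IsBurgersSolution D u →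
      burgersGraph D u ⊆ O₁ →
      ∃ (D' : Set (ℝ × ℝ)) (u' : ℝ × ℝ → ℝ), IsBurgersSolution D' u' ∧
        Φ '' burgersGraph D u = burgersGraph D' u')
    (t x v : ℝ) (hp : (t, x, v) ∈ O₁) :
    ∃ M : ℝ × ℝ × ℝ →L[ℝ] ℝ × ℝ × ℝ, HasFDerivAt Φ M (t, x, v) ∧
      (M (0, 0, 1)).1 = 0 ∧ (M (0, 0, 1)).2.1 = 0 ∧
      ∃ a : ℝ, a ≠ 0 ∧ M (1, v, 0) = (a, a * (Φ (t, x, v)).2.2, 0) := by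
  set p : ℝ × ℝ × ℝ := (t, x, v) with hpdef
  have hM := ((hΦ.contDiffAt (hO₁.mem_nhds hp)).differentiableAt (by norm_num)).hasFDerivAt
  have hq : Φ p ∈ O₂ := hmaps hp
  have hN := ((hΨ.contDiffAt (hO₂.mem_nhds hq)).differentiableAt (by norm_num)).hasFDerivAt
  set M := fderiv ℝ Φ p
  set N := fderiv ℝ Ψ (Φ p)
  have hNM : ∀ y, N (M y) = y := by
    have h1 := HasFDerivAt.comp (g := Ψ) p hN hM
    have h2 : (Ψ ∘ Φ) =ᶠ[𝓝 p] id := by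
      filter_upwards [hO₁.mem_nhds hp] with y hy using hinv y hy
    have h3 := h1.unique ((hasFDerivAt_id p).congr_of_eventuallyEq h2)
    intro y
    simpa using DFunLike.congr_fun h3 y
  have hMN : ∀ y, M (N y) = y := by
    have hM' : HasFDerivAt Φ M (Ψ (Φ p)) := by rw [hinv p hp]; exact hM
    have h1 := HasFDerivAt.comp (g := Φ) (Φ p) hM' hN
    have h2 : (Φ ∘ Ψ) =ᶠ[𝓝 (Φ p)] id := by
      filter_upwards [hO₂.mem_nhds hq] with y hy using hinv' y hy
    have h3 := h1.unique ((hasFDerivAt_id _).congr_of_eventuallyEq h2)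
    intro y
    simpa using DFunLike.congr_fun h3 y
  -- vertical direction
  have hNv : (N (0, 0, 1)).1 = 0 ∧ (N (0, 0, 1)).2.1 = 0 := by
    set q := Φ p with hqdef
    have hcurve : HasDerivAt (fun h : ℝ => (q.1, q.2.1, h)) (0, 0, 1) q.2.2 :=
      (hasDerivAt_const _ _).prodMk ((hasDerivAt_const _ _).prodMk (hasDerivAt_id _))
    have hd := HasFDerivAt.comp_hasDerivAt (l := Ψ) q.2.2 hN hcurve
    have hcc : Continuous (fun h : ℝ => (q.1, q.2.1, h)) := by fun_prop
    have hev : ∀ᶠ h in 𝓝 q.2.2, (q.1, q.2.1, h) ∈ O₂ :=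
      hcc.continuousAt.eventually (hO₂.mem_nhds hq)
    have hfib : ∀ᶠ h in 𝓝 q.2.2, (Ψ (q.1, q.2.1, h)).1 = p.1 ∧ (Ψ (q.1, q.2.1, h)).2.1 = p.2.1 := by
      filter_upwards [hev] with h hh
      have e := hinv' _ hh
      have := fib_inj O₁ hO₁ Φ Ψ hinv hsol
        ((Ψ (q.1, q.2.1, h)).1, (Ψ (q.1, q.2.1, h)).2.1) (p.1, p.2.1)
        (Ψ (q.1, q.2.1, h)).2.2 p.2.2 (hmaps' hh) hp
        (by change (Φ (Ψ (q.1, q.2.1, h))).1 = (Φ p).1; rw [e])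
        (by change (Φ (Ψ (q.1, q.2.1, h))).2.1 = (Φ p).2.1; rw [e])
      simpa [Prod.ext_iff] using this
    have d1 := hd_fst hd
    have d2 := hd_snd hd
    have c1 : HasDerivAt (fun h => (Ψ (q.1, q.2.1, h)).1) 0 q.2.2 :=
      (hasDerivAt_const _ p.1).congr_of_eventuallyEq (by filter_upwards [hfib] with h hh using hh.1)
    have c2 : HasDerivAt (fun h => (Ψ (q.1, q.2.1, h)).2.1) 0 q.2.2 :=
      (hasDerivAt_const _ p.2.1).congr_of_eventuallyEq (by filter_upwards [hfib] with h hh using hh.2)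
    exact ⟨d1.unique c1, d2.unique c2⟩
  have hNv' : N (0, 0, 1) = (N (0, 0, 1)).2.2 • ((0 : ℝ), (0 : ℝ), (1 : ℝ)) := by
    ext <;> simp [hNv.1, hNv.2]
  have hk : (N (0, 0, 1)).2.2 • M (0, 0, 1) = (0, 0, 1) := by
    rw [← map_smul, ← hNv', hMN]
  have hk0 : (N (0, 0, 1)).2.2 ≠ 0 := by
    intro h
    rw [h] at hk
    simp [Prod.ext_iff] at hk
  have hlin : ∀ a b c : ℝ, M (a, b, c) = a • M (1, v, 0) + (b - a * v) • M (0, 1, 0) + c • M (0, 0, 1) := by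
    intro a b c
    have : (a, b, c) = a • ((1 : ℝ), v, (0 : ℝ)) + (b - a * v) • ((0 : ℝ), (1 : ℝ), (0 : ℝ))
      + c • ((0 : ℝ), (0 : ℝ), (1 : ℝ)) := by ext <;> simp
    rw [this, map_add, map_add, map_smul, map_smul, map_smul]
  refine ⟨M, hM, ?_, ?_, ?_⟩
  · have := congrArg Prod.fst hk
    simpa [hk0] using this
  · have := congrArg (fun y => y.2.1) hk
    simpa [hk0] using this
  -- constant solution
  obtain ⟨m0, hm0⟩ := tangent_plane O₁ Φ hsol {r : ℝ × ℝ | (r.1, r.2, v) ∈ O₁} (fun _ => v)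
    (burg_of_loc_const _ _ (hO₁.preimage (by fun_prop : Continuous fun r : ℝ × ℝ => (r.1, r.2, v)))
      (fun r _ => ⟨v, Eventually.of_forall fun _ => rfl⟩))
    (by rintro _ ⟨r, hr, rfl⟩; exact hr) (t, x) hp 0 (hasFDerivAt_const _ _) M hM
  -- pencil solution
  set u : ℝ × ℝ → ℝ := fun r => (r.2 - x + v) / (1 + r.1 - t) with hu
  have hcont : ContinuousOn (fun r : ℝ × ℝ => (r.1, r.2, u r)) {r | 0 < 1 + r.1 - t} := by
    refine continuousOn_fst.prodMk (continuousOn_snd.prodMk ?_)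
    refine ContinuousOn.div (by fun_prop) (by fun_prop) ?_
    intro r hr
    exact ne_of_gt hr
  have hho : IsOpen {r : ℝ × ℝ | 0 < 1 + r.1 - t} :=
    isOpen_lt continuous_const (by fun_prop)
  have hDo : IsOpen ({r : ℝ × ℝ | 0 < 1 + r.1 - t} ∩ (fun r : ℝ × ℝ => (r.1, r.2, u r)) ⁻¹' O₁) :=
    hcont.isOpen_inter_preimage hho hO₁
  have hut : u (t, x) = v := by simp [hu]
  have hud : HasFDerivAt u (ContinuousLinearMap.snd ℝ ℝ ℝ - v • ContinuousLinearMap.fst ℝ ℝ ℝ) (t, x) := by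
    have h1 : HasFDerivAt (fun r : ℝ × ℝ => r.2 - x + v) (ContinuousLinearMap.snd ℝ ℝ ℝ) (t, x) :=
      (hasFDerivAt_snd.sub_const x).add_const v
    have h2 : HasFDerivAt (fun r : ℝ × ℝ => 1 + r.1 - t) (ContinuousLinearMap.fst ℝ ℝ ℝ) (t, x) :=
      (hasFDerivAt_fst.const_add 1).sub_const t
    have h3 := h1.mul ((hasDerivAt_inv (x := 1 + t - t) (by simp)).comp_hasFDerivAt (t, x) h2)
    have e : u = (fun r : ℝ × ℝ => r.2 - x + v) * ((fun y : ℝ => y⁻¹) ∘ fun r : ℝ × ℝ => 1 + r.1 - t) := by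
      ext r; simp [hu, div_eq_mul_inv]
    rw [e]
    have e2 : (ContinuousLinearMap.snd ℝ ℝ ℝ - v • ContinuousLinearMap.fst ℝ ℝ ℝ) = (((t, x).2 - x + v) • -((1 + t - t) ^ 2)⁻¹ • ContinuousLinearMap.fst ℝ ℝ ℝ +
      ((fun y => y⁻¹) ∘ fun r : ℝ × ℝ => 1 + r.1 - t) (t, x) • ContinuousLinearMap.snd ℝ ℝ ℝ) := by
      ext <;> simp
    rw [e2]
    exact h3
  obtain ⟨m1, hm1⟩ := tangent_plane O₁ Φ hsol
    ({r : ℝ × ℝ | 0 < 1 + r.1 - t} ∩ (fun r : ℝ × ℝ => (r.1, r.2, u r)) ⁻¹' O₁) u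
    ⟨hDo, by
      refine ContDiffOn.div (by fun_prop) (by fun_prop) ?_
      rintro r ⟨hr, -⟩
      exact ne_of_gt hr, by
      rintro r ⟨hr, -⟩
      have hr : 1 + r.1 - t ≠ 0 := ne_of_gt hr
      have h1 : HasDerivAt (fun s => u (s, r.2)) (-(r.2 - x + v) / (1 + r.1 - t) ^ 2) r.1 := by
        have h1 : HasDerivAt (fun s : ℝ => 1 + s - t) 1 r.1 :=
          ((hasDerivAt_id _).const_add 1).sub_const t
        have := (hasDerivAt_const r.1 (r.2 - x + v)).fun_div h1 hr
        have e : (-(r.2 - x + v) / (1 + r.1 - t) ^ 2) = (0 * (1 + r.1 - t) - (r.2 - x + v) * 1) / (1 + r.1 - t) ^ 2 := by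
          ring
        rw [e]
        exact this
      have h2 : HasDerivAt (fun s => u (r.1, s)) (1 / (1 + r.1 - t)) r.2 := by
        have h1 : HasDerivAt (fun s : ℝ => s - x + v) 1 r.2 :=
          ((hasDerivAt_id _).sub_const x).add_const v
        exact h1.div_const (1 + r.1 - t)
      rw [h1.deriv, h2.deriv]
      simp only [hu]
      field_simp
      ring⟩
    (by rintro _ ⟨r, hr, rfl⟩; exact hr.2) (t, x)
    ⟨by simp, by simpa [hut] using hp⟩ _ hud M (by simpa only [hut] using hM)
  simp only [hut] at hm1
  have a0 := hm0 1 v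
  have b0 := hm0 0 1
  have a1 := hm1 1 v
  have b1 := hm1 0 1
  simp at a0 b0 a1 b1
  have hsplit : M (0, 1, 1) = M (0, 1, 0) + M (0, 0, 1) := by
    rw [hlin 0 1 1]; simp
  rw [hsplit] at b1
  change (M (1, v, 0)).2.2 = m0 * ((M (1, v, 0)).2.1 - (Φ p).2.2 * (M (1, v, 0)).1) at a0
  change (M (1, v, 0)).2.2 = m1 * ((M (1, v, 0)).2.1 - (Φ p).2.2 * (M (1, v, 0)).1) at a1
  change (M (0, 1, 0)).2.2 = m0 * ((M (0, 1, 0)).2.1 - (Φ p).2.2 * (M (0, 1, 0)).1) at b0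
  change (M (0, 1, 0) + M (0, 0, 1)).2.2 = m1 * ((M (0, 1, 0) + M (0, 0, 1)).2.1 - (Φ p).2.2 * (M (0, 1, 0) + M (0, 0, 1)).1) at b1
  simp only [Prod.snd_add, Prod.fst_add] at b1
  have hne : m0 ≠ m1 := by
    rintro rfl
    have e := hlin (N (0, 0, 1)).1 (N (0, 0, 1)).2.1 (N (0, 0, 1)).2.2
    have e' : M (N (0, 0, 1)) = (0, 0, 1) := hMN _
    change M (N (0, 0, 1)) = _ at e
    rw [e'] at e
    have e1 := congrArg Prod.fst e
    have e2 := congrArg (fun y => y.2.1) e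
    have e3 := congrArg (fun y => y.2.2) e
    simp only [Prod.snd_add, Prod.fst_add, Prod.smul_fst, Prod.smul_snd, smul_eq_mul] at e1 e2 e3
    have : (1 : ℝ) = 0 := by
      linear_combination e3 - m0 * (e2 - (Φ p).2.2 * e1) + (N (0, 0, 1)).1 * a0 + ((N (0, 0, 1)).2.1 - (N (0, 0, 1)).1 * v) * b0 + (N (0, 0, 1)).2.2 * (b1 - b0)
    norm_num at this
  have hz : (M (1, v, 0)).2.1 - (Φ p).2.2 * (M (1, v, 0)).1 = 0 := by
    have : (m0 - m1) * ((M (1, v, 0)).2.1 - (Φ p).2.2 * (M (1, v, 0)).1) = 0 := by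
      linear_combination a1 - a0
    exact (mul_eq_zero.1 this).resolve_left (sub_ne_zero.2 hne)
  have hform : M (1, v, 0) = ((M (1, v, 0)).1, (M (1, v, 0)).1 * (Φ p).2.2, 0) := by
    refine Prod.ext rfl (Prod.ext ?_ ?_)
    · simp only; linear_combination hz
    · simp only; rw [a0, hz, mul_zero]
  refine ⟨(M (1, v, 0)).1, ?_, hform⟩
  intro h
  have h0 : M (1, v, 0) = 0 := by rw [hform, h]; simp
  have := hNM (1, v, 0)
  rw [h0, map_zero] at this
  simp [Prod.ext_iff] at this

lemma const_of_hd {s : Set ℝ} (hs : IsOpen s) (hc : Convex ℝ s) {f : ℝ → ℝ}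
    (hf : ∀ y ∈ s, HasDerivAt f 0 y) {a b : ℝ} (ha : a ∈ s) (hb : b ∈ s) : f a = f b :=
  hs.is_const_of_deriv_eq_zero hc.isPreconnected
    (fun y hy => (hf y hy).differentiableAt.differentiableWithinAt)
    (fun y hy => (hf y hy).deriv) ha hb

def Good (Φ : ℝ × ℝ × ℝ → ℝ × ℝ × ℝ) (t x v : ℝ) : Prop :=
  ∃ M : ℝ × ℝ × ℝ →L[ℝ] ℝ × ℝ × ℝ, HasFDerivAt Φ M (t, x, v) ∧
      (M (0, 0, 1)).1 = 0 ∧ (M (0, 0, 1)).2.1 = 0 ∧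
      ∃ a : ℝ, a ≠ 0 ∧ M (1, v, 0) = (a, a * (Φ (t, x, v)).2.2, 0)

lemma box_vert (Φ : ℝ × ℝ × ℝ → ℝ × ℝ × ℝ) (t0 x0 v0 ε : ℝ)
    (hG : ∀ t x v, |t - t0| < ε → |x - x0| < ε → |v - v0| < ε → Good Φ t x v)
    (t x v : ℝ) (ht : |t - t0| < ε) (hx : |x - x0| < ε) (hv : |v - v0| < ε) :
    (Φ (t, x, v)).1 = (Φ (t, x, v0)).1 ∧ (Φ (t, x, v)).2.1 = (Φ (t, x, v0)).2.1 := by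
  have hv0 : v0 ∈ Metric.ball v0 ε := Metric.mem_ball_self ((abs_nonneg _).trans_lt hv)
  have hv' : v ∈ Metric.ball v0 ε := by simpa [Real.dist_eq] using hv
  have key : ∀ h ∈ Metric.ball v0 ε, HasDerivAt (fun h => (Φ (t, x, h)).1) 0 h ∧
      HasDerivAt (fun h => (Φ (t, x, h)).2.1) 0 h := by
    intro h hh
    obtain ⟨M, hM, h1, h2, -⟩ := hG t x h ht hx (by simpa [Real.dist_eq] using hh)
    have hcurve : HasDerivAt (fun h : ℝ => (t, x, h)) (0, 0, 1) h :=
      (hasDerivAt_const _ _).prodMk ((hasDerivAt_const _ _).prodMk (hasDerivAt_id _))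
    have hd := HasFDerivAt.comp_hasDerivAt (l := Φ) h hM hcurve
    have d1 := hd_fst hd
    have d2 := hd_snd hd
    rw [h1] at d1
    rw [h2] at d2
    exact ⟨d1, d2⟩
  exact ⟨const_of_hd Metric.isOpen_ball (convex_ball _ _) (fun y hy => (key y hy).1) hv' hv0,
    const_of_hd Metric.isOpen_ball (convex_ball _ _) (fun y hy => (key y hy).2) hv' hv0⟩

lemma box_line (Φ : ℝ × ℝ × ℝ → ℝ × ℝ × ℝ) (t0 x0 v0 ε : ℝ)
    (hG : ∀ t x v, |t - t0| < ε → |x - x0| < ε → |v - v0| < ε → Good Φ t x v)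
    (t x v t' x' : ℝ) (ht : |t - t0| < ε) (hx : |x - x0| < ε) (hv : |v - v0| < ε)
    (ht' : |t' - t0| < ε) (hx' : |x' - x0| < ε) (hl : x' - x = v * (t' - t)) :
    (Φ (t', x', v)).2.2 = (Φ (t, x, v)).2.2 ∧
    (Φ (t', x', v)).2.1 - (Φ (t, x, v)).2.1 =
      (Φ (t, x, v)).2.2 * ((Φ (t', x', v)).1 - (Φ (t, x, v)).1) := by
  set s : Set ℝ := {h : ℝ | |t + h - t0| < ε} ∩ {h : ℝ | |x + v * h - x0| < ε} with hs
  have hso : IsOpen s := by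
    refine (isOpen_lt (by fun_prop) (by fun_prop)).inter (isOpen_lt (by fun_prop) (by fun_prop))
  have hsc : Convex ℝ s := by
    rw [convex_iff_forall_pos]
    rintro a ⟨ha1, ha2⟩ b ⟨hb1, hb2⟩ p q hp hq hpq
    simp only [Set.mem_ofPred_eq, abs_lt] at ha1 ha2 hb1 hb2
    have hq' : q = 1 - p := by linarith
    subst hq'
    simp only [hs, Set.mem_inter_iff, Set.mem_ofPred_eq, abs_lt, smul_eq_mul]
    refine ⟨⟨?_, ?_⟩, ⟨?_, ?_⟩⟩ <;> nlinarith
  have h0 : (0 : ℝ) ∈ s := by simp [hs, ht, hx]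
  have h1 : t' - t ∈ s := by
    refine ⟨by simpa using ht', ?_⟩
    simp only [Set.mem_ofPred_eq, ← hl]
    simpa using hx'
  have key : ∀ h ∈ s, ∃ a : ℝ, HasDerivAt (fun h => Φ (t + h, x + v * h, v))
      (a, a * (Φ (t + h, x + v * h, v)).2.2, 0) h := by
    intro h hh
    obtain ⟨M, hM, -, -, a, -, ha⟩ := hG (t + h) (x + v * h) v hh.1 hh.2 hv
    have hcurve : HasDerivAt (fun h : ℝ => (t + h, x + v * h, v)) (1, v, 0) h := by
      refine ((hasDerivAt_id _).const_add t).prodMk (HasDerivAt.prodMk ?_ (hasDerivAt_const _ _))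
      simpa using ((hasDerivAt_id h).const_mul v).const_add x
    have hd := HasFDerivAt.comp_hasDerivAt (l := Φ) h hM hcurve
    rw [ha] at hd
    exact ⟨a, hd⟩
  have hV : ∀ h ∈ s, (Φ (t + h, x + v * h, v)).2.2 = (Φ (t, x, v)).2.2 := by
    intro h hh
    have := const_of_hd (f := fun h => (Φ (t + h, x + v * h, v)).2.2) hso hsc (fun y hy => by
      obtain ⟨a, ha⟩ := key y hy
      exact hd_thd ha) hh h0
    simpa using this
  have hX := const_of_hd (f := fun h => (Φ (t + h, x + v * h, v)).2.1 -
      (Φ (t, x, v)).2.2 * (Φ (t + h, x + v * h, v)).1) hso hsc (fun y hy => by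
      obtain ⟨a, ha⟩ := key y hy
      have := (hd_snd ha).sub ((hd_fst ha).const_mul (Φ (t, x, v)).2.2)
      simp only [hV y hy] at this
      have e : a * (Φ (t, x, v)).2.2 - (Φ (t, x, v)).2.2 * a = 0 := by ring
      rw [e] at this
      exact this) h1 h0
  have e1 : t + (t' - t) = t' := by ring
  have e2 : x + v * (t' - t) = x' := by rw [← hl]; ring
  have := hV _ h1
  simp only [e1, e2, add_zero, mul_zero] at this hX
  exact ⟨this, by linarith⟩

lemma box_mob (Φ : ℝ × ℝ × ℝ → ℝ × ℝ × ℝ) (t0 x0 v0 ε : ℝ)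
    (hG : ∀ t x v, |t - t0| < ε → |x - x0| < ε → |v - v0| < ε → Good Φ t x v)
    (hinj : ∀ t x v t' x' v', |t - t0| < ε → |x - x0| < ε → |v - v0| < ε →
      |t' - t0| < ε → |x' - x0| < ε → |v' - v0| < ε → Φ (t, x, v) = Φ (t', x', v') →
      (t, x, v) = (t', x', v'))
    (t x : ℝ) (ht : |t - t0| < ε) (hx : |x - x0| < ε) :
    ∃ A B C E : ℝ, A * E - B * C ≠ 0 ∧ ∀ v, |v - v0| < ε → C + v * E ≠ 0 ∧
      (Φ (t, x, v)).2.2 * (C + v * E) = A + v * B := by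
  have hε : 0 < ε := (abs_nonneg _).trans_lt ht
  obtain ⟨M, hM, -⟩ := hG t x v0 ht hx (by simpa using hε)
  have key : ∀ v, |v - v0| < ε → (M (1, 0, 0)).1 + v * (M (0, 1, 0)).1 ≠ 0 ∧
      (Φ (t, x, v)).2.2 * ((M (1, 0, 0)).1 + v * (M (0, 1, 0)).1) =
        (M (1, 0, 0)).2.1 + v * (M (0, 1, 0)).2.1 := by
    intro v hv
    obtain ⟨N, hN, -, -, a, ha0, ha⟩ := hG t x v ht hx hv
    have c1 : HasDerivAt (fun h : ℝ => (t + h, x + v * h, v)) (1, v, 0) 0 := by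
      refine ((hasDerivAt_id _).const_add t).prodMk (HasDerivAt.prodMk ?_ (hasDerivAt_const _ _))
      simpa using ((hasDerivAt_id (0 : ℝ)).const_mul v).const_add x
    have c2 : HasDerivAt (fun h : ℝ => (t + h, x + v * h, v0)) (1, v, 0) 0 := by
      refine ((hasDerivAt_id _).const_add t).prodMk (HasDerivAt.prodMk ?_ (hasDerivAt_const _ _))
      simpa using ((hasDerivAt_id (0 : ℝ)).const_mul v).const_add x
    have d1 := HasFDerivAt.comp_hasDerivAt (l := Φ) (0 : ℝ) (by simpa using hN) c1
    have d2 := HasFDerivAt.comp_hasDerivAt (l := Φ) (0 : ℝ) (by simpa using hM) c2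
    rw [ha] at d1
    have hev1 : ∀ᶠ h : ℝ in 𝓝 0, |t + h - t0| < ε := by
      refine ContinuousAt.eventually_lt (by fun_prop) (by fun_prop) (by simpa using ht)
    have hev2 : ∀ᶠ h : ℝ in 𝓝 0, |x + v * h - x0| < ε := by
      refine ContinuousAt.eventually_lt (by fun_prop) (by fun_prop) (by simpa using hx)
    have e1 : (fun h : ℝ => (Φ (t + h, x + v * h, v)).1) =ᶠ[𝓝 0] fun h => (Φ (t + h, x + v * h, v0)).1 := by
      filter_upwards [hev1, hev2] with h h1 h2
      exact (box_vert Φ t0 x0 v0 ε hG _ _ _ h1 h2 hv).1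
    have e2 : (fun h : ℝ => (Φ (t + h, x + v * h, v)).2.1) =ᶠ[𝓝 0] fun h => (Φ (t + h, x + v * h, v0)).2.1 := by
      filter_upwards [hev1, hev2] with h h1 h2
      exact (box_vert Φ t0 x0 v0 ε hG _ _ _ h1 h2 hv).2
    have q1 := (hd_fst d1).unique ((hd_fst d2).congr_of_eventuallyEq e1)
    have q2 := (hd_snd d1).unique ((hd_snd d2).congr_of_eventuallyEq e2)
    have hlin : M (1, v, 0) = M (1, 0, 0) + v • M (0, 1, 0) := by
      rw [← map_smul, ← map_add]; simp
    rw [hlin] at q1 q2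
    simp only [Prod.snd_add, Prod.fst_add, Prod.smul_fst, Prod.smul_snd, smul_eq_mul] at q1 q2
    rw [← q1, ← q2]
    exact ⟨ha0, by ring⟩
  refine ⟨(M (1, 0, 0)).2.1, (M (0, 1, 0)).2.1, (M (1, 0, 0)).1, (M (0, 1, 0)).1, ?_, key⟩
  set A := (M (1, 0, 0)).2.1
  set B := (M (0, 1, 0)).2.1
  set C := (M (1, 0, 0)).1
  set E := (M (0, 1, 0)).1
  intro hdet
  have hv1 : |v0 - v0| < ε := by simpa using hε
  have hv2 : |v0 + ε / 2 - v0| < ε := by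
    have : v0 + ε / 2 - v0 = ε / 2 := by ring
    rw [this, abs_of_pos (by linarith)]; linarith
  obtain ⟨n1, k1⟩ := key v0 hv1
  obtain ⟨n2, k2⟩ := key (v0 + ε / 2) hv2
  have hVV : (Φ (t, x, v0)).2.2 = (Φ (t, x, v0 + ε / 2)).2.2 := by
    have : ((Φ (t, x, v0)).2.2 - (Φ (t, x, v0 + ε / 2)).2.2) * ((C + v0 * E) * (C + (v0 + ε / 2) * E)) = 0 := by
      linear_combination (C + (v0 + ε / 2) * E) * k1 - (C + v0 * E) * k2 + ε / 2 * hdet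
    have := (mul_eq_zero.1 this).resolve_right (mul_ne_zero n1 n2)
    linarith
  obtain ⟨p1, p2⟩ := box_vert Φ t0 x0 v0 ε hG t x _ ht hx hv2
  have := hinj t x v0 t x (v0 + ε / 2) ht hx hv1 ht hx hv2
    (Prod.ext p1.symm (Prod.ext p2.symm hVV))
  simp only [Prod.mk.injEq, true_and] at this
  linarith

lemma alg_proj (p1 p2 q1 q2 P1 P2 Q1 Q2 μ m A B C E A' B' C' E' : ℝ) (hq : q1 - p1 ≠ 0)
    (hw : Q1 - P1 ≠ 0) (hμ : Q2 - P2 = μ * (Q1 - P1)) (hm : q2 - p2 = m * (q1 - p1))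
    (h1 : μ * (C + m * E) = A + m * B)
    (h2 : C' + m * E' ≠ 0) (h2' : μ * (C' + m * E') = A' + m * B')
    (hd : A * E - B * C ≠ 0) (hd' : A' * E' - B' * C' ≠ 0) :
    ∃ s : Matrix (Fin 3) (Fin 3) ℝ, IsUnit s.det ∧ ∀ t x T X : ℝ,
      (x - p2) - m * (t - p1) ≠ 0 →
      C * (t - p1) + E * (x - p2) ≠ 0 → C' * (t - q1) + E' * (x - q2) ≠ 0 →
      (X - P2) * (C * (t - p1) + E * (x - p2)) = (A * (t - p1) + B * (x - p2)) * (T - P1) →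
      (X - Q2) * (C' * (t - q1) + E' * (x - q2)) = (A' * (t - q1) + B' * (x - q2)) * (T - Q1) →
      s 2 0 * t + s 2 1 * x + s 2 2 ≠ 0 ∧
      (s 2 0 * t + s 2 1 * x + s 2 2) * T = s 0 0 * t + s 0 1 * x + s 0 2 ∧
      (s 2 0 * t + s 2 1 * x + s 2 2) * X = s 1 0 * t + s 1 1 * x + s 1 2 := by
  obtain ⟨g, rfl⟩ : ∃ g, q1 = p1 + g := ⟨q1 - p1, by ring⟩
  obtain ⟨w, rfl⟩ : ∃ w, Q1 = P1 + w := ⟨Q1 - P1, by ring⟩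
  obtain rfl : q2 = p2 + m * g := by linear_combination hm
  obtain rfl : Q2 = P2 + μ * w := by linear_combination hμ
  obtain rfl : A = μ * (C + m * E) - m * B := by linear_combination -h1
  obtain rfl : A' = μ * (C' + m * E') - m * B' := by linear_combination -h2'
  have hg : g ≠ 0 := by simpa using hq
  have hw : w ≠ 0 := by simpa using hw
  have hx2 : B - E * μ ≠ 0 := by
    intro h
    apply hd
    linear_combination (-C - m * E) * h
  have hy2 : B' - E' * μ ≠ 0 := by
    intro h
    apply hd'
    linear_combination (-C' - m * E') * h
  clear hm hμ h1 h2' hq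
  set x2 := B - E * μ with hx2d
  set y2 := B' - E' * μ with hy2d
  set A := μ * (C + m * E) - m * B with hA
  set A' := μ * (C' + m * E') - m * B' with hA'
  set l0 := y2 * C - x2 * C' with hl0
  set l1 := y2 * E - x2 * E' with hl1
  set l2 := -(y2 * (C * p1 + E * p2)) + x2 * (C' * (p1 + g) + E' * (p2 + m * g)) with hl2
  refine ⟨!![l0 * P1 + y2 * w * C, l1 * P1 + y2 * w * E, l2 * P1 - y2 * w * (C * p1 + E * p2);
    l0 * P2 + y2 * w * A, l1 * P2 + y2 * w * B, l2 * P2 - y2 * w * (A * p1 + B * p2);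
    l0, l1, l2], ?_, ?_⟩
  · rw [isUnit_iff_ne_zero, Matrix.det_fin_three]
    simp
    have : (y2 * w) ^ 2 * (A * E - B * C) * (x2 * (C' + m * E') * g) ≠ 0 :=
      mul_ne_zero (mul_ne_zero (pow_ne_zero _ (mul_ne_zero hy2 hw)) hd)
        (mul_ne_zero (mul_ne_zero hx2 h2) hg)
    intro h
    apply this
    rw [hl0, hl1, hl2] at h
    linear_combination -h
  · intro t x T X hc hP hQ e1 e2
    simp
    set dP := C * (t - p1) + E * (x - p2) with hdP
    set dQ := C' * (t - (p1 + g)) + E' * (x - (p2 + m * g)) with hdQ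
    set c := x - p2 - m * (t - p1) with hcd
    obtain ⟨lam, hlam⟩ : ∃ lam, T - P1 = lam * dP := ⟨(T - P1) / dP, by field_simp⟩
    obtain ⟨lam', hlam'⟩ : ∃ lam, T - (P1 + w) = lam * dQ := ⟨(T - (P1 + w)) / dQ, by field_simp⟩
    have hX : X - P2 = lam * (μ * dP + x2 * c) := by
      apply mul_right_cancel₀ hP
      rw [e1, hlam]
      simp only [hcd, hdP, hA, hx2d]
      ring
    have hX' : X - (P2 + μ * w) = lam' * (μ * dQ + y2 * c) := by
      apply mul_right_cancel₀ hQ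
      rw [e2, hlam']
      simp only [hcd, hdQ, hA', hy2d]
      ring
    have hll : lam * x2 = lam' * y2 := by
      apply mul_right_cancel₀ hc
      linear_combination hX' - hX + μ * hlam - μ * hlam'
    have hL : l0 * t + l1 * x + l2 = y2 * dP - x2 * dQ := by
      simp only [hl0, hl1, hl2, hdP, hdQ]; ring
    have hLl : (l0 * t + l1 * x + l2) * lam = y2 * w := by
      rw [hL]
      linear_combination -dQ * hll + y2 * hlam' - y2 * hlam
    refine ⟨?_, ?_, ?_⟩
    · intro h
      rw [h, zero_mul] at hLl
      exact mul_ne_zero hy2 hw hLl.symm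
    · linear_combination (l0 * t + l1 * x + l2) * hlam + dP * hLl
    · have : A * (t - p1) + B * (x - p2) = μ * dP + x2 * c := by
        simp only [hcd, hdP, hA, hx2d]; ring
      linear_combination (l0 * t + l1 * x + l2) * hX + (μ * dP + x2 * c) * hLl - y2 * w * this

lemma m00 (s : Matrix (Fin 3) (Fin 3) ℝ) : minor3 s 0 0 = s 1 1 * s 2 2 - s 1 2 * s 2 1 := by
  simp [minor3, Matrix.det_fin_two, Fin.succAbove]
lemma m01 (s : Matrix (Fin 3) (Fin 3) ℝ) : minor3 s 0 1 = s 1 0 * s 2 2 - s 1 2 * s 2 0 := by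
  simp [minor3, Matrix.det_fin_two, Fin.succAbove]
lemma m02 (s : Matrix (Fin 3) (Fin 3) ℝ) : minor3 s 0 2 = s 1 0 * s 2 1 - s 1 1 * s 2 0 := by
  simp [minor3, Matrix.det_fin_two, Fin.succAbove]
lemma m10 (s : Matrix (Fin 3) (Fin 3) ℝ) : minor3 s 1 0 = s 0 1 * s 2 2 - s 0 2 * s 2 1 := by
  simp [minor3, Matrix.det_fin_two, Fin.succAbove]
lemma m11 (s : Matrix (Fin 3) (Fin 3) ℝ) : minor3 s 1 1 = s 0 0 * s 2 2 - s 0 2 * s 2 0 := by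
  simp [minor3, Matrix.det_fin_two, Fin.succAbove]
lemma m12 (s : Matrix (Fin 3) (Fin 3) ℝ) : minor3 s 1 2 = s 0 0 * s 2 1 - s 0 1 * s 2 0 := by
  simp [minor3, Matrix.det_fin_two, Fin.succAbove]

def PF2 (Φ : ℝ × ℝ × ℝ → ℝ × ℝ × ℝ) (s : Matrix (Fin 3) (Fin 3) ℝ) (t x v : ℝ) : Prop :=
  s 2 0 * t + s 2 1 * x + s 2 2 ≠ 0 ∧
      (s 2 0 * t + s 2 1 * x + s 2 2) * (Φ (t, x, v)).1 = s 0 0 * t + s 0 1 * x + s 0 2 ∧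
      (s 2 0 * t + s 2 1 * x + s 2 2) * (Φ (t, x, v)).2.1 = s 1 0 * t + s 1 1 * x + s 1 2

def PF3 (Φ : ℝ × ℝ × ℝ → ℝ × ℝ × ℝ) (s : Matrix (Fin 3) (Fin 3) ℝ) (t x v : ℝ) : Prop :=
  ((-(minor3 s 1 2) * t + minor3 s 1 0) * v + (minor3 s 1 2 * x + minor3 s 1 1)) ≠ 0 ∧
  ((-(minor3 s 1 2) * t + minor3 s 1 0) * v + (minor3 s 1 2 * x + minor3 s 1 1)) *
    (Φ (t, x, v)).2.2 =
    ((-(minor3 s 0 2) * t + minor3 s 0 0) * v + (minor3 s 0 2 * x + minor3 s 0 1))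

lemma PF3_of (Φ : ℝ × ℝ × ℝ → ℝ × ℝ × ℝ) (s : Matrix (Fin 3) (Fin 3) ℝ) (t x v h : ℝ)
    (h1 : PF2 Φ s t x v) (h2 : PF2 Φ s (t + h) (x + v * h) v)
    (hne : (Φ (t + h, x + v * h, v)).1 ≠ (Φ (t, x, v)).1)
    (hV : (Φ (t + h, x + v * h, v)).2.1 - (Φ (t, x, v)).2.1 =
      (Φ (t, x, v)).2.2 * ((Φ (t + h, x + v * h, v)).1 - (Φ (t, x, v)).1)) : PF3 Φ s t x v := by
  obtain ⟨n1, a1, b1⟩ := h1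
  obtain ⟨n2, a2, b2⟩ := h2
  have hne' := sub_ne_zero.2 hne
  have hh : h ≠ 0 := by rintro rfl; simp at hne
  unfold PF3
  simp only [m00, m01, m02, m10, m11, m12]
  set T := (Φ (t, x, v)).1
  set X := (Φ (t, x, v)).2.1
  set V := (Φ (t, x, v)).2.2
  set T' := (Φ (t + h, x + v * h, v)).1
  set X' := (Φ (t + h, x + v * h, v)).2.1
  set L := s 2 0 * t + s 2 1 * x + s 2 2 with hL
  set L' := s 2 0 * (t + h) + s 2 1 * (x + v * h) + s 2 2 with hL'
  have k1 : h * ((-(s 0 0 * s 2 1 - s 0 1 * s 2 0) * t + (s 0 1 * s 2 2 - s 0 2 * s 2 1)) * v +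
        ((s 0 0 * s 2 1 - s 0 1 * s 2 0) * x + (s 0 0 * s 2 2 - s 0 2 * s 2 0))) =
      L * L' * (T' - T) := by
    linear_combination (-L) * a2 + L' * a1 
  have k2 : h * ((-(s 1 0 * s 2 1 - s 1 1 * s 2 0) * t + (s 1 1 * s 2 2 - s 1 2 * s 2 1)) * v +
        ((s 1 0 * s 2 1 - s 1 1 * s 2 0) * x + (s 1 0 * s 2 2 - s 1 2 * s 2 0))) =
      L * L' * (X' - X) := by
    linear_combination (-L) * b2 + L' * b1
  constructor
  · intro h0
    rw [h0, mul_zero] at k1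
    exact mul_ne_zero (mul_ne_zero n1 n2) hne' k1.symm
  · apply mul_left_cancel₀ hh
    rw [k2, hV]
    linear_combination V * k1

lemma scale_entries {s s' : Matrix (Fin 3) (Fin 3) ℝ} {c : ℝ} (h : s' = c • s) (i j : Fin 3) :
    s' i j = c * s i j := by rw [h]; simp

lemma PF_scale (Φ : ℝ × ℝ × ℝ → ℝ × ℝ × ℝ) (s s' : Matrix (Fin 3) (Fin 3) ℝ) (c : ℝ) (hc : c ≠ 0)
    (h : s' = c • s) (t x v : ℝ) (h2 : PF2 Φ s' t x v) (h3 : PF3 Φ s' t x v) :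
    PF2 Φ s t x v ∧ PF3 Φ s t x v := by
  unfold PF2 PF3 at *
  simp only [m00, m01, m02, m10, m11, m12, scale_entries h] at *
  obtain ⟨a1, a2, a3⟩ := h2
  obtain ⟨b1, b2⟩ := h3
  refine ⟨⟨?_, ?_, ?_⟩, ?_, ?_⟩
  · intro h0; apply a1; linear_combination c * h0
  · apply mul_left_cancel₀ hc; linear_combination a2
  · apply mul_left_cancel₀ hc; linear_combination a3
  · intro h0; apply b1; linear_combination c ^ 2 * h0
  · apply mul_left_cancel₀ (pow_ne_zero 2 hc); linear_combination b2


lemma box_line' (Φ : ℝ × ℝ × ℝ → ℝ × ℝ × ℝ) (t0 x0 v0 ε : ℝ)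
    (hG : ∀ t x v, |t - t0| < ε → |x - x0| < ε → |v - v0| < ε → Good Φ t x v)
    (hinj : ∀ t x v t' x' v', |t - t0| < ε → |x - x0| < ε → |v - v0| < ε →
      |t' - t0| < ε → |x' - x0| < ε → |v' - v0| < ε → Φ (t, x, v) = Φ (t', x', v') →
      (t, x, v) = (t', x', v'))
    (t x v t' x' : ℝ) (ht : |t - t0| < ε) (hx : |x - x0| < ε) (hv : |v - v0| < ε)
    (ht' : |t' - t0| < ε) (hx' : |x' - x0| < ε) (hl : x' - x = v * (t' - t)) :
    (Φ (t', x', v)).2.2 = (Φ (t, x, v)).2.2 ∧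
    (Φ (t', x', v0)).2.1 - (Φ (t, x, v0)).2.1 =
      (Φ (t, x, v)).2.2 * ((Φ (t', x', v0)).1 - (Φ (t, x, v0)).1) ∧
    (t' ≠ t → (Φ (t', x', v0)).1 ≠ (Φ (t, x, v0)).1) := by
  obtain ⟨a, b⟩ := box_line Φ t0 x0 v0 ε hG t x v t' x' ht hx hv ht' hx' hl
  obtain ⟨c1, c2⟩ := box_vert Φ t0 x0 v0 ε hG t x v ht hx hv
  obtain ⟨d1, d2⟩ := box_vert Φ t0 x0 v0 ε hG t' x' v ht' hx' hv
  rw [c1, c2, d1, d2] at b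
  refine ⟨a, b, fun hne h => hne ?_⟩
  have : Φ (t', x', v) = Φ (t, x, v) := by
    refine Prod.ext ?_ (Prod.ext ?_ a)
    · rw [d1, c1, h]
    · rw [d2, c2]
      rw [h] at b
      linarith
  exact congrArg Prod.fst (hinj t' x' v t x v ht' hx' hv ht hx hv this)

lemma local_form (Φ : ℝ × ℝ × ℝ → ℝ × ℝ × ℝ) (t0 x0 v0 ε : ℝ) (hε : 0 < ε)
    (hG : ∀ t x v, |t - t0| < ε → |x - x0| < ε → |v - v0| < ε → Good Φ t x v)
    (hinj : ∀ t x v t' x' v', |t - t0| < ε → |x - x0| < ε → |v - v0| < ε →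
      |t' - t0| < ε → |x' - x0| < ε → |v' - v0| < ε → Φ (t, x, v) = Φ (t', x', v') →
      (t, x, v) = (t', x', v')) :
    ∃ s : Matrix (Fin 3) (Fin 3) ℝ, IsUnit s.det ∧ ∀ᶠ p in 𝓝 (t0, x0, v0),
      PF2 Φ s p.1 p.2.1 p.2.2 ∧ PF3 Φ s p.1 p.2.1 p.2.2 := by
  obtain ⟨δ, hδ, hδ1⟩ : ∃ δ : ℝ, 0 < δ ∧ δ * (4 * (1 + |v0| + ε)) = ε :=
    ⟨ε / (4 * (1 + |v0| + ε)), by positivity, by field_simp⟩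
  have hv0a := abs_nonneg v0
  have hb1 : 4 * δ ≤ ε := by nlinarith [mul_nonneg hδ.le hv0a, mul_pos hδ hε]
  have hb2 : 4 * (δ * |v0|) < ε := by nlinarith [mul_nonneg hδ.le hv0a, mul_pos hδ hε]
  have hb3 : 4 * (δ * |v0|) + 4 * (δ * ε) < ε := by nlinarith [mul_nonneg hδ.le hv0a, mul_pos hδ hε]
  have hle1 : δ * v0 ≤ δ * |v0| := mul_le_mul_of_nonneg_left (le_abs_self _) hδ.le
  have hle2 : -(δ * |v0|) ≤ δ * v0 := by
    have := mul_le_mul_of_nonneg_left (neg_abs_le v0) hδ.le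
    linarith
  have hδε := mul_pos hδ hε
  set η := ε / 4 with hη
  set p1 := t0 + δ with hp1
  set p2 := x0 + v0 * δ with hp2
  set q1 := t0 + 2 * δ with hq1
  set q2 := x0 + 2 * v0 * δ + η * δ with hq2
  set m := v0 + η with hm
  have bp1 : |p1 - t0| < ε := by rw [abs_lt]; constructor <;> (simp only [hp1]; linarith)
  have bp2 : |p2 - x0| < ε := by rw [abs_lt]; constructor <;> (simp only [hp2]; linarith)
  have bq1 : |q1 - t0| < ε := by rw [abs_lt]; constructor <;> (simp only [hq1]; linarith)
  have bq2 : |q2 - x0| < ε := by rw [abs_lt]; constructor <;> (simp only [hq2, hη]; linarith)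
  have bm : |m - v0| < ε := by rw [abs_lt]; constructor <;> (simp only [hm, hη]; linarith)
  have hqp : q1 - p1 = δ := by simp only [hp1, hq1]; ring
  obtain ⟨A, B, C, E, hdet, hmob⟩ := box_mob Φ t0 x0 v0 ε hG hinj p1 p2 bp1 bp2
  obtain ⟨A', B', C', E', hdet', hmob'⟩ := box_mob Φ t0 x0 v0 ε hG hinj q1 q2 bq1 bq2
  have hmm : q2 - p2 = m * (q1 - p1) := by rw [hqp]; simp only [hp2, hq2, hm]; ring
  obtain ⟨f1, f2, f3⟩ := box_line' Φ t0 x0 v0 ε hG hinj p1 p2 m q1 q2 bp1 bp2 bm bq1 bq2 hmm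
  obtain ⟨s, hs, hform⟩ := alg_proj p1 p2 q1 q2 (Φ (p1, p2, v0)).1 (Φ (p1, p2, v0)).2.1
    (Φ (q1, q2, v0)).1 (Φ (q1, q2, v0)).2.1 (Φ (p1, p2, m)).2.2 m A B C E A' B' C' E'
    (by rw [hqp]; exact hδ.ne') (sub_ne_zero.2 (f3 (by linarith))) f2 hmm
    (hmob m bm).2 (hmob' m bm).1 (by rw [← f1]; exact (hmob' m bm).2) hdet hdet'
  refine ⟨s, hs, ?_⟩
  set U : ℝ × ℝ → Prop := fun r => |r.1 - t0| < ε ∧ |r.2 - x0| < ε ∧ r.1 - p1 ≠ 0 ∧ r.1 - q1 ≠ 0 ∧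
    |(r.2 - p2) / (r.1 - p1) - v0| < ε ∧ |(r.2 - q2) / (r.1 - q1) - v0| < ε ∧
    (r.2 - p2) - m * (r.1 - p1) ≠ 0 with hU
  have hU0 : ∀ᶠ r in 𝓝 (t0, x0), U r := by
    have z1 : t0 - p1 ≠ 0 := by simp only [hp1]; intro h; linarith
    have z2 : t0 - q1 ≠ 0 := by simp only [hq1]; intro h; linarith
    have e1 : (x0 - p2) / (t0 - p1) = v0 := by rw [div_eq_iff z1]; simp only [hp1, hp2]; ring
    have e2 : (x0 - q2) / (t0 - q1) = v0 + η / 2 := by rw [div_eq_iff z2]; simp only [hq1, hq2]; ring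
    have w1 : ∀ᶠ r : ℝ × ℝ in 𝓝 (t0, x0), |r.1 - t0| < ε :=
      ContinuousAt.eventually_lt (by fun_prop) (by fun_prop) (by simpa using hε)
    have w2 : ∀ᶠ r : ℝ × ℝ in 𝓝 (t0, x0), |r.2 - x0| < ε :=
      ContinuousAt.eventually_lt (by fun_prop) (by fun_prop) (by simpa using hε)
    have w3 : ∀ᶠ r : ℝ × ℝ in 𝓝 (t0, x0), r.1 - p1 ≠ 0 :=
      ContinuousAt.eventually_ne (by fun_prop) (by simpa using z1)
    have w4 : ∀ᶠ r : ℝ × ℝ in 𝓝 (t0, x0), r.1 - q1 ≠ 0 :=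
      ContinuousAt.eventually_ne (by fun_prop) (by simpa using z2)
    have w5 : ∀ᶠ r : ℝ × ℝ in 𝓝 (t0, x0), |(r.2 - p2) / (r.1 - p1) - v0| < ε := by
      refine ContinuousAt.eventually_lt ?_ (by fun_prop) ?_
      · have hc : ContinuousAt (fun r : ℝ × ℝ => (r.2 - p2) / (r.1 - p1)) (t0, x0) :=
          ContinuousAt.div (f := fun r : ℝ × ℝ => r.2 - p2)
            (g := fun r : ℝ × ℝ => r.1 - p1) (by fun_prop) (by fun_prop) z1
        exact (hc.sub continuousAt_const).abs
      · simp only [e1]; simpa using hε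
    have w6 : ∀ᶠ r : ℝ × ℝ in 𝓝 (t0, x0), |(r.2 - q2) / (r.1 - q1) - v0| < ε := by
      refine ContinuousAt.eventually_lt ?_ (by fun_prop) ?_
      · have hc : ContinuousAt (fun r : ℝ × ℝ => (r.2 - q2) / (r.1 - q1)) (t0, x0) :=
          ContinuousAt.div (f := fun r : ℝ × ℝ => r.2 - q2)
            (g := fun r : ℝ × ℝ => r.1 - q1) (by fun_prop) (by fun_prop) z2
        exact (hc.sub continuousAt_const).abs
      · simp only [e2]
        rw [abs_lt]; constructor <;> (simp only [hη]; linarith)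
    have w7 : ∀ᶠ r : ℝ × ℝ in 𝓝 (t0, x0), (r.2 - p2) - m * (r.1 - p1) ≠ 0 := by
      refine ContinuousAt.eventually_ne (by fun_prop) ?_
      simp only [hp1, hp2, hm, hη]
      intro h
      have : δ * ε = 0 := by linear_combination 4 * h
      exact hδε.ne' this
    filter_upwards [w1, w2, w3, w4, w5, w6, w7] with r a1 a2 a3 a4 a5 a6 a7
    exact ⟨a1, a2, a3, a4, a5, a6, a7⟩
  have hPF2 : ∀ r : ℝ × ℝ, U r → ∀ v, |v - v0| < ε → PF2 Φ s r.1 r.2 v := by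
    rintro ⟨t, x⟩ ⟨u1, u2, u3, u4, u5, u6, u7⟩ v hv
    simp only at u1 u2 u3 u4 u5 u6 u7
    obtain ⟨c1, c2⟩ := box_vert Φ t0 x0 v0 ε hG t x v u1 u2 hv
    unfold PF2
    simp only
    rw [c1, c2]
    set s1 := (x - p2) / (t - p1) with hs1
    set s2 := (x - q2) / (t - q1) with hs2
    have k1 : x - p2 = s1 * (t - p1) := by rw [hs1]; field_simp
    have k2 : x - q2 = s2 * (t - q1) := by rw [hs2]; field_simp
    obtain ⟨-, g2, -⟩ := box_line' Φ t0 x0 v0 ε hG hinj p1 p2 s1 t x bp1 bp2 u5 u1 u2 k1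
    obtain ⟨-, g2', -⟩ := box_line' Φ t0 x0 v0 ε hG hinj q1 q2 s2 t x bq1 bq2 u6 u1 u2 k2
    obtain ⟨n1, n2⟩ := hmob s1 u5
    obtain ⟨n1', n2'⟩ := hmob' s2 u6
    apply hform t x _ _ u7
    · rw [k1]
      intro h
      apply mul_ne_zero u3 n1
      linear_combination h
    · rw [k2]
      intro h
      apply mul_ne_zero u4 n1'
      linear_combination h
    · rw [g2, k1]
      linear_combination (t - p1) * ((Φ (t, x, v0)).1 - (Φ (p1, p2, v0)).1) * n2
    · rw [g2', k2]
      linear_combination (t - q1) * ((Φ (t, x, v0)).1 - (Φ (q1, q2, v0)).1) * n2'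
  have hproj : Tendsto (fun p : ℝ × ℝ × ℝ => (p.1, p.2.1)) (𝓝 (t0, x0, v0)) (𝓝 (t0, x0)) := by
    have : Continuous (fun p : ℝ × ℝ × ℝ => (p.1, p.2.1)) := by fun_prop
    exact this.tendsto (t0, x0, v0)
  have hv : ∀ᶠ p in 𝓝 (t0, x0, v0), |p.2.2 - v0| < ε :=
    ContinuousAt.eventually_lt (by fun_prop) (by fun_prop) (by simpa using hε)
  filter_upwards [hproj.eventually (eventually_eventually_nhds.2 hU0), hv]
  rintro ⟨t, x, v⟩ hUr hv
  simp only at hUr hv ⊢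
  have hU1 : U (t, x) := hUr.self_of_nhds
  have hpf := hPF2 (t, x) hU1 v hv
  refine ⟨hpf, ?_⟩
  have hcv : Tendsto (fun h : ℝ => (t + h, x + v * h)) (𝓝 0) (𝓝 (t, x)) := by
    have : Continuous (fun h : ℝ => (t + h, x + v * h)) := by fun_prop
    simpa using this.tendsto 0
  have h1 : ∀ᶠ h in 𝓝[≠] (0 : ℝ), U (t + h, x + v * h) :=
    (hcv.eventually hUr).filter_mono nhdsWithin_le_nhds
  obtain ⟨h, hh, hh0⟩ := (h1.and eventually_mem_nhdsWithin).exists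
  have hh0 : h ≠ 0 := hh0
  have hl : x + v * h - x = v * (t + h - t) := by ring
  obtain ⟨-, -, r3⟩ := box_line' Φ t0 x0 v0 ε hG hinj t x v (t + h) (x + v * h) hU1.1 hU1.2.1 hv hh.1 hh.2.1 hl
  obtain ⟨-, r2⟩ := box_line Φ t0 x0 v0 ε hG t x v (t + h) (x + v * h) hU1.1 hU1.2.1 hv hh.1 hh.2.1 hl
  refine PF3_of Φ s t x v h hpf (hPF2 _ hh v hv) ?_ r2
  rw [(box_vert Φ t0 x0 v0 ε hG _ _ v hh.1 hh.2.1 hv).1, (box_vert Φ t0 x0 v0 ε hG t x v hU1.1 hU1.2.1 hv).1]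
  exact r3 (by simpa using hh0)

lemma PF2_unique (Φ : ℝ × ℝ × ℝ → ℝ × ℝ × ℝ) (s s' : Matrix (Fin 3) (Fin 3) ℝ) (hs : IsUnit s.det)
    (t x v : ℝ) (h : ∀ᶠ p in 𝓝 (t, x, v), PF2 Φ s p.1 p.2.1 p.2.2)
    (h' : ∀ᶠ p in 𝓝 (t, x, v), PF2 Φ s' p.1 p.2.1 p.2.2) : ∃ c : ℝ, c ≠ 0 ∧ s' = c • s := by
  have hb : ∀ᶠ p in 𝓝 (t, x, v), ∃ ρ : ℝ, ρ ≠ 0 ∧ ∀ i : Fin 3, s' i 0 * p.1 + s' i 1 * p.2.1 + s' i 2 =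
      ρ * (s i 0 * p.1 + s i 1 * p.2.1 + s i 2) := by
    filter_upwards [h, h'] with p ⟨a1, a2, a3⟩ ⟨b1, b2, b3⟩
    refine ⟨(s' 2 0 * p.1 + s' 2 1 * p.2.1 + s' 2 2) / (s 2 0 * p.1 + s 2 1 * p.2.1 + s 2 2),
      div_ne_zero b1 a1, ?_⟩
    intro i
    rw [div_mul_eq_mul_div, eq_div_iff a1]
    fin_cases i
    · simp only [Fin.zero_eta, Fin.mk_one, Fin.reduceFinMk]
      rw [← a2, ← b2]; ring
    · simp only [Fin.zero_eta, Fin.mk_one, Fin.reduceFinMk]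
      rw [← a3, ← b3]; ring
    · simp only [Fin.zero_eta, Fin.mk_one, Fin.reduceFinMk]
  have hcur : ∀ a b : ℝ, Tendsto (fun h : ℝ => (t + a * h, x + b * h, v)) (𝓝 0) (𝓝 (t, x, v)) := by
    intro a b
    have : Continuous (fun h : ℝ => (t + a * h, x + b * h, v)) := by fun_prop
    simpa using this.tendsto 0
  have hall := ((hcur 0 0).eventually hb).and (((hcur 1 0).eventually hb).and
    (((hcur 0 1).eventually hb).and ((hcur 1 1).eventually hb)))
  obtain ⟨δ, ⟨⟨r0, n0, e0⟩, ⟨r1, n1, e1⟩, ⟨r2, n2, e2⟩, ⟨r3, n3, e3⟩⟩, hδ⟩ :=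
    ((hall.filter_mono (nhdsWithin_le_nhds (s := {0}ᶜ))).and eventually_mem_nhdsWithin).exists
  have hδ : δ ≠ 0 := hδ
  simp only [zero_mul, one_mul, add_zero] at e0 e1 e2 e3
  have hz := Matrix.eq_zero_of_mulVec_eq_zero (M := s) (isUnit_iff_ne_zero.1 hs)
    (v := ![(r3 - r1) * (t + δ) + (r3 - r2) * t - (r3 - r0) * t,
      (r3 - r1) * x + (r3 - r2) * (x + δ) - (r3 - r0) * x,
      (r3 - r1) + (r3 - r2) - (r3 - r0)]) (by
        ext i
        simp [Matrix.mulVec, dotProduct, Fin.sum_univ_three]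
        linear_combination e1 i + e2 i - e0 i - e3 i)
  have z0 := congrFun hz 0
  have z1 := congrFun hz 1
  have z2 := congrFun hz 2
  simp at z0 z1 z2
  have k1 : r3 = r1 := by
    apply mul_right_cancel₀ hδ
    linear_combination z0 - t * z2
  have k2 : r3 = r2 := by
    apply mul_right_cancel₀ hδ
    linear_combination z1 - x * z2
  have k0 : r3 = r0 := by linarith
  subst k1 k2 k0
  refine ⟨r3, n0, ?_⟩
  have c0 : ∀ i, s' i 0 = r3 * s i 0 := by
    intro i
    apply mul_right_cancel₀ hδ
    linear_combination e1 i - e0 i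
  have c1 : ∀ i, s' i 1 = r3 * s i 1 := by
    intro i
    apply mul_right_cancel₀ hδ
    linear_combination e2 i - e0 i
  have c2 : ∀ i, s' i 2 = r3 * s i 2 := by
    intro i
    linear_combination e0 i - t * c0 i - x * c1 i
  ext i j
  fin_cases j
  · simpa using c0 i
  · simpa using c1 i
  · simpa using c2 i

theorem stmt0
    (O₁ O₂ : Set (ℝ × ℝ × ℝ)) (hO₁ : IsOpen O₁) (hO₂ : IsOpen O₂)
    (hc₁ : IsConnected O₁) (hc₂ : IsConnected O₂)
    (Φ Ψ : ℝ × ℝ × ℝ → ℝ × ℝ × ℝ)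
    (hΦ : ContDiffOn ℝ 1 Φ O₁) (hΨ : ContDiffOn ℝ 1 Ψ O₂)
    (hmaps : Set.MapsTo Φ O₁ O₂) (hmaps' : Set.MapsTo Ψ O₂ O₁)
    (hinv : ∀ p ∈ O₁, Ψ (Φ p) = p) (hinv' : ∀ q ∈ O₂, Φ (Ψ q) = q)
    (hsol : ∀ (D : Set (ℝ × ℝ)) (u : ℝ × ℝ → ℝ), IsBurgersSolution D u →
      burgersGraph D u ⊆ O₁ →
      ∃ (D' : Set (ℝ × ℝ)) (u' : ℝ × ℝ → ℝ), IsBurgersSolution D' u' ∧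
        Φ '' burgersGraph D u = burgersGraph D' u') :
    ∃ s : Matrix (Fin 3) (Fin 3) ℝ, IsUnit s.det ∧
      ∀ t x v : ℝ, (t, x, v) ∈ O₁ →
        Φ (t, x, v) =
          ((s 0 0 * t + s 0 1 * x + s 0 2) / (s 2 0 * t + s 2 1 * x + s 2 2),
           (s 1 0 * t + s 1 1 * x + s 1 2) / (s 2 0 * t + s 2 1 * x + s 2 2),
           ((-(minor3 s 0 2) * t + minor3 s 0 0) * v + (minor3 s 0 2 * x + minor3 s 0 1)) /
             ((-(minor3 s 1 2) * t + minor3 s 1 0) * v + (minor3 s 1 2 * x + minor3 s 1 1))) := by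
  have hgood : ∀ t x v, (t, x, v) ∈ O₁ → Good Φ t x v := fun t x v hp =>
    deriv_facts O₁ O₂ hO₁ hO₂ Φ Ψ hΦ hΨ hmaps hmaps' hinv hinv' hsol t x v hp
  have hloc : ∀ p ∈ O₁, ∃ s : Matrix (Fin 3) (Fin 3) ℝ, IsUnit s.det ∧ ∀ᶠ q in 𝓝 p,
      PF2 Φ s q.1 q.2.1 q.2.2 ∧ PF3 Φ s q.1 q.2.1 q.2.2 := by
    rintro ⟨t0, x0, v0⟩ hp
    obtain ⟨ε, hε, hball⟩ := Metric.isOpen_iff.1 hO₁ _ hp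
    have hin : ∀ t x v, |t - t0| < ε → |x - x0| < ε → |v - v0| < ε → (t, x, v) ∈ O₁ := by
      intro t x v h1 h2 h3
      apply hball
      simp only [Metric.mem_ball, Prod.dist_eq, Real.dist_eq, max_lt_iff]
      exact ⟨h1, h2, h3⟩
    refine local_form Φ t0 x0 v0 ε hε (fun t x v h1 h2 h3 => hgood t x v (hin t x v h1 h2 h3)) ?_
    intro t x v t' x' v' h1 h2 h3 h4 h5 h6 h
    rw [← hinv _ (hin t x v h1 h2 h3), ← hinv _ (hin t' x' v' h4 h5 h6), h]
  choose! S hS hSf using hloc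
  have hrel : ∀ p ∈ O₁, ∀ q ∈ O₁, ∃ c : ℝ, c ≠ 0 ∧ S q = c • S p := by
    intro p hp q hq
    refine hc₁.isPreconnected.induction₂ (fun p q => ∃ c : ℝ, c ≠ 0 ∧ S q = c • S p) ?_ ?_ ?_ hp hq
    · intro p hp
      filter_upwards [nhdsWithin_le_nhds (eventually_eventually_nhds.2 (hSf p hp)),
        self_mem_nhdsWithin] with q hq1 hq
      exact PF2_unique Φ (S p) (S q) (hS p hp) q.1 q.2.1 q.2.2 (hq1.mono fun _ h => h.1)
        ((hSf q hq).mono fun _ h => h.1)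
    · rintro p q r - - - ⟨c, hc, h⟩ ⟨d, hd, h'⟩
      exact ⟨d * c, mul_ne_zero hd hc, by rw [h', h, smul_smul]⟩
    · rintro p q - - ⟨c, hc, h⟩
      exact ⟨c⁻¹, inv_ne_zero hc, by rw [h, smul_smul, inv_mul_cancel₀ hc, one_smul]⟩
  obtain ⟨p0, hp0⟩ := hc₁.nonempty
  refine ⟨S p0, hS p0 hp0, ?_⟩
  intro t x v hp
  obtain ⟨c, hc, h⟩ := hrel p0 hp0 _ hp
  obtain ⟨h2, h3⟩ := (hSf _ hp).self_of_nhds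
  obtain ⟨⟨a1, a2, a3⟩, b1, b2⟩ := PF_scale Φ _ _ c hc h t x v h2 h3
  refine Prod.ext ?_ (Prod.ext ?_ ?_)
  · rw [eq_div_iff a1, ← a2, mul_comm]
  · rw [eq_div_iff a1, ← a3, mul_comm]
  · rw [eq_div_iff b1, ← b2, mul_comm]
end

section
/- Let E be a finite-dimensional real normed vector space, A : E → E linear, v ∈ E, w ∈ E* (a continuous linear functional), c ∈ ℝ, and suppose the linear map S : E × ℝ → E × ℝ, S(z,s) = (Az + s·v, ⟨w,z⟩ + c·s), is bijective. Let U ⊆ E be open with ⟨w,z⟩ + c ≠ 0 for all z ∈ U and define F : U → E by F(z) = (Az + v)/(⟨w,z⟩ + c). Then F is C² on U, the derivative F′(z) is an invertible linear map for every z ∈ U, and for ξ(z) := −w/(⟨w,z⟩ + c) ∈ E* one has, for all z ∈ U and all u, u′ ∈ E: F′(z)⁻¹·F″(z)(u,u′) = ⟨ξ(z),u⟩·u′ + ⟨ξ(z),u′⟩·u. -/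
theorem stmt2 {E : Type*} [NormedAddCommGroup E] [NormedSpace ℝ E] [FiniteDimensional ℝ E]
    (A : E →L[ℝ] E) (v : E) (w : E →L[ℝ] ℝ) (c : ℝ)
    (hS : Function.Bijective fun zs : E × ℝ => (A zs.1 + zs.2 • v, w zs.1 + c * zs.2))
    (U : Set E) (hU : IsOpen U) (hden : ∀ z ∈ U, w z + c ≠ 0)
    (F : E → E) (hF : ∀ z, F z = (w z + c)⁻¹ • (A z + v)) :
    ContDiffOn ℝ 2 F U ∧
      (∀ z ∈ U, ∃ G : E ≃L[ℝ] E, (fderiv ℝ F z : E →L[ℝ] E) = G) ∧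
      ∀ z ∈ U, ∀ u u' : E,
        (fderiv ℝ F z).inverse (fderiv ℝ (fderiv ℝ F) z u u') =
          (-(w z + c)⁻¹ * w u) • u' + (-(w z + c)⁻¹ * w u') • u := by
  have hFe : F = fun z => (w z + c)⁻¹ • (A z + v) := funext hF
  have hC : ContDiffOn ℝ 2 F U := by
    rw [hFe]
    apply ContDiffOn.smul
    · exact ContDiffOn.inv (by fun_prop) hden
    · fun_prop
  have hd : ∀ z, HasFDerivAt (fun z => w z + c) w z := fun z => w.hasFDerivAt.add_const c
  have hn : ∀ z, HasFDerivAt (fun z => A z + v) A z := fun z => A.hasFDerivAt.add_const v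
  have hi : ∀ z ∈ U, HasFDerivAt (fun z => (w z + c)⁻¹) (-((w z + c)^2)⁻¹ • w) z := fun z hz =>
    (hasDerivAt_inv (hden z hz)).comp_hasFDerivAt z (hd z)
  have h1 : ∀ z ∈ U, ∀ u, fderiv ℝ F z u =
      (w z + c)⁻¹ • A u - ((w z + c)⁻¹ * (w z + c)⁻¹ * w u) • (A z + v) := by
    intro z hz u
    have := ((hi z hz).smul (hn z)).fderiv
    rw [hFe]
    erw [this]
    simp
    have := hden z hz
    match_scalars <;> field_simp
  have hG : ∀ z ∈ U, ∃ G : E ≃L[ℝ] E, (fderiv ℝ F z : E →L[ℝ] E) = G := by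
    intro z hz
    have hinj : Function.Injective (fderiv ℝ F z : E →ₗ[ℝ] E) := by
      rw [← LinearMap.ker_eq_bot, LinearMap.ker_eq_bot']
      intro u hu
      have hu : fderiv ℝ F z u = 0 := hu
      rw [h1 z hz] at hu
      have hz0 := hden z hz
      have key := @hS.1 (u - ((w z + c)⁻¹ * w u) • z, -((w z + c)⁻¹ * w u)) (0, 0) (by
        simp only [Prod.mk.injEq]
        constructor
        · have := congrArg (fun x => (w z + c) • x) hu
          simp only [smul_sub, smul_smul, smul_zero, ← mul_assoc, mul_inv_cancel₀ hz0, one_mul,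
            one_smul] at this
          simp only [map_sub, map_smul, map_zero, zero_smul, add_zero]
          rw [← this]
          module
        · simp only [map_sub, map_smul, map_zero, smul_eq_mul]
          field_simp
          ring)
      simp only [Prod.mk.injEq] at key
      obtain ⟨k1, k2⟩ := key
      rw [neg_eq_zero] at k2
      simpa [k2] using k1
    refine ⟨(LinearEquiv.ofInjectiveEndo _ hinj).toContinuousLinearEquiv, ?_⟩
    ext u
    rfl
  refine ⟨hC, hG, ?_⟩
  intro z hz u u'
  have hz0 := hden z hz
  have hdd : DifferentiableAt ℝ (fderiv ℝ F) z :=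
    ((hC.contDiffAt (hU.mem_nhds hz)).fderiv_right (m := 1) (by norm_num)).differentiableAt
      (by norm_num)
  have h2 : fderiv ℝ (fderiv ℝ F) z u u' = fderiv ℝ F z
      ((-(w z + c)⁻¹ * w u) • u' + (-(w z + c)⁻¹ * w u') • u) := by
    have e1 : HasFDerivAt (fun y => fderiv ℝ F y u')
        ((ContinuousLinearMap.apply ℝ E u').comp (fderiv ℝ (fderiv ℝ F) z)) z :=
      (ContinuousLinearMap.apply ℝ E u').hasFDerivAt.comp z hdd.hasFDerivAt
    have e2 := ((hi z hz).smul_const (A u')).sub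
      ((((hi z hz).mul (hi z hz)).mul_const (w u')).smul (hn z))
    have e3 := e2.congr_of_eventuallyEq (f₁ := fun y => fderiv ℝ F y u') (by
      filter_upwards [hU.mem_nhds hz] with y hy
      exact h1 y hy u')
    have := congrArg (fun L : E →L[ℝ] E => L u) (e1.unique e3)
    simp at this
    rw [this, h1 z hz]
    simp only [map_add, map_smul, smul_eq_mul]
    match_scalars <;> field_simp <;> ring
  rw [h2]
  obtain ⟨G, hG⟩ := hG z hz
  rw [hG, ContinuousLinearMap.inverse_equiv]
  simp
end

section
/- Let E be a finite-dimensional real vector space and B : E × E → E a symmetric bilinear map. Then B satisfies B(v,v) ∈ ℝ·v for every v ∈ E (equivalently, B(L × L) ⊆ L for every one-dimensional subspace L of E) if and only if there exists a linear functional ξ ∈ E* such that B(u,v) = ⟨ξ,u⟩·v + ⟨ξ,v⟩·u for all u, v ∈ E. -/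
theorem stmt4 {E : Type*} [AddCommGroup E] [Module ℝ E] [FiniteDimensional ℝ E]
    (B : E →ₗ[ℝ] E →ₗ[ℝ] E) (hsymm : ∀ u v : E, B u v = B v u) :
    (∀ v : E, ∃ c : ℝ, B v v = c • v) ↔
      ∃ ξ : E →ₗ[ℝ] ℝ, ∀ u v : E, B u v = ξ u • v + ξ v • u := by
  constructor
  · intro h
    have h' : ∀ v : E, ∃ c : ℝ, B v v = c • v ∧ (v = 0 → c = 0) := by
      intro v
      by_cases hv : v = 0
      · exact ⟨0, by simp [hv], fun _ => rfl⟩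
      · obtain ⟨c, hc⟩ := h v
        exact ⟨c, hc, fun h0 => absurd h0 hv⟩
    choose c hc hc0 using h'
    have hsmul : ∀ (t : ℝ) (v : E), c (t • v) = t * c v := by
      intro t v
      by_cases hv : v = 0
      · simp [hv, hc0 0 rfl]
      by_cases ht : t = 0
      · simp [ht, hc0 0 rfl]
      have h1 := hc (t • v)
      simp only [map_smul, LinearMap.smul_apply, hc v, smul_smul] at h1
      have h2 := smul_left_injective ℝ hv h1
      apply mul_right_cancel₀ ht
      linarith
    have hadd : ∀ u v : E, c (u + v) = c u + c v := by
      intro u v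
      by_cases hu : u = 0
      · simp [hu, hc0 0 rfl]
      by_cases hd : ∃ t : ℝ, t • u = v
      · obtain ⟨t, rfl⟩ := hd
        have : u + t • u = (1 + t) • u := by module
        rw [this, hsmul, hsmul]; ring
      · have hli : LinearIndependent ℝ ![u, v] := by
          rw [LinearIndependent.pair_iff' hu]
          exact fun a ha => hd ⟨a, ha⟩
        rw [LinearIndependent.pair_iff] at hli
        have h1 := hc (u + v)
        have h2 := hc (u - v)
        simp only [map_add, map_sub, LinearMap.add_apply, LinearMap.sub_apply, hc u, hc v,
          hsymm v u] at h1 h2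
        have h3 : (c (u + v) + c (u - v) - 2 * c u) • u
            + (c (u + v) - c (u - v) - 2 * c v) • v = 0 := by
          have e : (c (u + v) + c (u - v) - 2 * c u) • u
            + (c (u + v) - c (u - v) - 2 * c v) • v
            = c (u + v) • (u + v) + c (u - v) • (u - v)
              - (2 * c u) • u - (2 * c v) • v := by module
          rw [e, ← h1, ← h2]; module
        obtain ⟨ha, hb⟩ := hli _ _ h3
        linarith
    refine ⟨{ toFun := fun v => c v / 2
              map_add' := fun u v => by rw [hadd]; ring
              map_smul' := fun t v => by simp [hsmul]; ring }, fun u v => ?_⟩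
    have h1 := hc (u + v)
    simp only [map_add, LinearMap.add_apply, hc u, hc v, hsymm v u, hadd] at h1
    have h2 : B u v = (1 / 2 : ℝ) • ((c u • u + B u v + (B u v + c v • v))
        - c u • u - c v • v) := by module
    rw [h2, h1]
    simp only [LinearMap.coe_mk, AddHom.coe_mk]
    module
  · rintro ⟨ξ, hξ⟩ v
    exact ⟨ξ v + ξ v, by rw [hξ, add_smul]⟩
end

section
/- Let E be a real vector space of finite dimension m ≥ 1 and let Sym²(E;E) denote the space of symmetric bilinear maps B : E × E → E. Define Q : Sym²(E;E) → Sym²(E;E) by (QB)(u,v) = (m+1)⁻¹·tr[B(u,·)]·v + (m+1)⁻¹·tr[B(v,·)]·u, where B(u,·) : E → E is the linear map v ↦ B(u,v). Then Q is linear, Q ∘ Q = Q, the range of Q is exactly the set of B ∈ Sym²(E;E) of the form B(u,v) = ⟨ξ,u⟩v + ⟨ξ,v⟩u for some ξ ∈ E* (equivalently, those B with B(v,v) ∈ ℝ·v for all v), and the kernel of Q is { B ∈ Sym²(E;E) : tr[B(u,·)] = 0 for all u ∈ E }. -/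
theorem stmt5 {E : Type*} [AddCommGroup E] [Module ℝ E] [FiniteDimensional ℝ E]
    (m : ℕ) (hm : 1 ≤ m) (hdim : Module.finrank ℝ E = m)
    (Q : (E →ₗ[ℝ] E →ₗ[ℝ] E) → (E →ₗ[ℝ] E →ₗ[ℝ] E))
    (hQ : ∀ B : E →ₗ[ℝ] E →ₗ[ℝ] E, ∀ u v : E,
      Q B u v = (((m : ℝ) + 1)⁻¹ * LinearMap.trace ℝ E (B u)) • v
        + (((m : ℝ) + 1)⁻¹ * LinearMap.trace ℝ E (B v)) • u) :
    (∀ B C : E →ₗ[ℝ] E →ₗ[ℝ] E, Q (B + C) = Q B + Q C) ∧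
    (∀ (c : ℝ) (B : E →ₗ[ℝ] E →ₗ[ℝ] E), Q (c • B) = c • Q B) ∧
    (∀ B : E →ₗ[ℝ] E →ₗ[ℝ] E, (∀ u v : E, B u v = B v u) →
      (∀ u v : E, Q B u v = Q B v u) ∧ Q (Q B) = Q B) ∧
    ({C | ∃ B : E →ₗ[ℝ] E →ₗ[ℝ] E, (∀ u v : E, B u v = B v u) ∧ Q B = C}
      = {C : E →ₗ[ℝ] E →ₗ[ℝ] E |
          ∃ ξ : E →ₗ[ℝ] ℝ, ∀ u v : E, C u v = ξ u • v + ξ v • u}) ∧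
    (∀ B : E →ₗ[ℝ] E →ₗ[ℝ] E, (∀ u v : E, B u v = B v u) →
      (Q B = 0 ↔ ∀ u : E, LinearMap.trace ℝ E (B u) = 0)) := by
  have hm0 : ((m : ℝ) + 1) ≠ 0 := by positivity
  have key : ∀ (C : E →ₗ[ℝ] E →ₗ[ℝ] E) (ξ : E →ₗ[ℝ] ℝ),
      (∀ u v : E, C u v = ξ u • v + ξ v • u) →
      ∀ u, LinearMap.trace ℝ E (C u) = ((m : ℝ) + 1) * ξ u := by
    intro C ξ h u
    have h1 : C u = ξ u • LinearMap.id + ξ.smulRight u := by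
      ext v
      simp [h]
    rw [h1, map_add, map_smul, LinearMap.trace_id, LinearMap.trace_smulRight, hdim, smul_eq_mul]
    ring
  have fixd : ∀ (C : E →ₗ[ℝ] E →ₗ[ℝ] E) (ξ : E →ₗ[ℝ] ℝ),
      (∀ u v : E, C u v = ξ u • v + ξ v • u) → Q C = C := by
    intro C ξ h
    ext u v
    rw [hQ, key C ξ h, key C ξ h, h, inv_mul_cancel_left₀ hm0, inv_mul_cancel_left₀ hm0]
  have form : ∀ B : E →ₗ[ℝ] E →ₗ[ℝ] E, ∃ ξ : E →ₗ[ℝ] ℝ,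
      ∀ u v : E, Q B u v = ξ u • v + ξ v • u := by
    intro B
    refine ⟨((m : ℝ) + 1)⁻¹ • (LinearMap.trace ℝ E ∘ₗ B), fun u v => ?_⟩
    rw [hQ]
    simp
  refine ⟨?_, ?_, ?_, ?_, ?_⟩
  · intro B C
    ext u v
    simp only [hQ, LinearMap.add_apply, map_add]
    module
  · intro c B
    ext u v
    simp only [hQ, LinearMap.smul_apply, map_smul, smul_eq_mul]
    module
  · intro B _
    obtain ⟨ξ, h⟩ := form B
    refine ⟨fun u v => ?_, fixd _ ξ h⟩
    rw [h, h, add_comm]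
  · ext C
    constructor
    · rintro ⟨B, _, rfl⟩
      exact form B
    · rintro ⟨ξ, h⟩
      exact ⟨C, fun u v => by rw [h, h, add_comm], fixd C ξ h⟩
  · intro B _
    constructor
    · intro h u
      have h2 := key (Q B) (((m : ℝ) + 1)⁻¹ • (LinearMap.trace ℝ E ∘ₗ B))
        (fun u v => by rw [hQ]; simp) u
      rw [h] at h2
      simp only [LinearMap.zero_apply, map_zero, LinearMap.smul_apply, LinearMap.comp_apply,
        smul_eq_mul] at h2
      rw [mul_inv_cancel_left₀ hm0] at h2
      exact h2.symm
    · intro h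
      ext u v
      simp [hQ, h]
end

section
/- Let E be a finite-dimensional real vector space, H ⊂ E a hyperplane and e ∈ E with e ∉ H, so that E = ℝe ⊕ H; let P⁽ᵉ⁾_H : E → H and ⟨P⁽ᴴ⁾_e, ·⟩ : E → ℝ be the projections determined by v = P⁽ᵉ⁾_H v + ⟨P⁽ᴴ⁾_e, v⟩·e. Let ker Q = { B ∈ Sym²(E;E) : tr[B(u,·)] = 0 for all u ∈ E }. Then for every B ∈ ker Q there exist unique a ∈ Sym²(H;ℝ) (a symmetric bilinear form on H), b ∈ Sym²(H;H), c : H → H linear, and d ∈ H, such that ⟨P⁽ᴴ⁾_e, B(e+h, e+h)⟩·h − P⁽ᵉ⁾_H B(e+h, e+h) = a(h,h)·h + b(h,h) + c(h) + d for all h ∈ H; and the assignment B ↦ (a,b,c,d) is a linear isomorphism from ker Q onto Sym²(H;ℝ) × Sym²(H;H) × Hom(H,H) × H. -/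
/-- The coefficient equation associating to a symmetric trace-free bilinear map
`B : E × E → E` the quadruple `(a, b, c, d)` of local coefficients of the projective
connection, relative to the splitting `E = ℝe ⊕ H` with projections `P` and `φ`. -/
def ProjCoeffRel {E : Type*} [AddCommGroup E] [Module ℝ E]
    (H : Submodule ℝ E) (e : E) (P : E →ₗ[ℝ] H) (φ : E →ₗ[ℝ] ℝ)
    (B : E →ₗ[ℝ] E →ₗ[ℝ] E)
    (q : (H →ₗ[ℝ] H →ₗ[ℝ] ℝ) × (H →ₗ[ℝ] H →ₗ[ℝ] H) × (H →ₗ[ℝ] H) × H) : Prop :=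
  ∀ h : H, φ (B (e + h) (e + h)) • h - P (B (e + h) (e + h))
    = q.1 h h • h + q.2.1 h h + q.2.2.1 h + q.2.2.2

section aux
variable {E : Type*} [AddCommGroup E] [Module ℝ E]

theorem aux_smul_mem {H : Submodule ℝ E} {e : E} (he : e ∉ H) {t : ℝ} (h : t • e ∈ H) : t = 0 := by
  by_contra ht
  exact he ((H.smul_mem_iff ht).1 h)

theorem aux_proj (H : Submodule ℝ E) (e : E) (he : e ∉ H)
    (P : E →ₗ[ℝ] H) (φ : E →ₗ[ℝ] ℝ) (hPφ : ∀ v : E, v = (P v : E) + φ v • e) :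
    φ e = 1 ∧ P e = 0 ∧ (∀ h : H, φ h = 0) ∧ (∀ h : H, P h = h) := by
  have h1 : φ e = 1 := by
    have : (1 - φ e) • e ∈ H := by
      have h := hPφ e
      have : (1 - φ e) • e = (P e : E) := by
        rw [sub_smul, one_smul, sub_eq_iff_eq_add]; exact h
      rw [this]; exact (P e).2
    linarith [aux_smul_mem he this]
  have h2 : ∀ h : H, φ h = 0 := by
    intro h
    have h' := hPφ h
    refine aux_smul_mem he ?_
    have : φ h • e = (h : E) - (P h : E) := by rw [eq_sub_iff_add_eq, add_comm]; exact h'.symm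
    rw [this]; exact H.sub_mem h.2 (P h).2
  refine ⟨h1, ?_, h2, ?_⟩
  · have h := hPφ e
    rw [h1, one_smul] at h
    exact Subtype.ext (by simpa using h)
  · intro h
    have h' := hPφ h
    rw [h2, zero_smul, add_zero] at h'
    exact Subtype.ext h'.symm

theorem aux_trace [FiniteDimensional ℝ E] (H : Submodule ℝ E) (e : E)
    (P : E →ₗ[ℝ] H) (φ : E →ₗ[ℝ] ℝ) (hPφ : ∀ v : E, v = (P v : E) + φ v • e)
    (A : E →ₗ[ℝ] E) :
    LinearMap.trace ℝ E A = φ (A e) + LinearMap.trace ℝ H (P ∘ₗ A ∘ₗ H.subtype) := by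
  have hA : A = (A ∘ₗ H.subtype) ∘ₗ P + φ.smulRight (A e) := by
    ext v
    conv_lhs => rw [hPφ v]
    simp
  conv_lhs => rw [hA]
  rw [map_add, LinearMap.trace_comp_comm', LinearMap.trace_smulRight, add_comm]

theorem aux_diag {V W : Type*} [AddCommGroup V] [Module ℝ V] [AddCommGroup W] [Module ℝ W]
    (b : V →ₗ[ℝ] V →ₗ[ℝ] W) (hs : ∀ x y, b x y = b y x) (h : ∀ x, b x x = 0) : b = 0 := by
  ext x y
  have h1 := h (x + y)
  simp only [map_add, LinearMap.add_apply, h, hs y x, zero_add, add_zero] at h1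
  rw [← two_smul ℝ] at h1
  simpa using h1

theorem aux_poly {V : Type*} [AddCommGroup V] [Module ℝ V]
    (a : V →ₗ[ℝ] V →ₗ[ℝ] ℝ) (b : V →ₗ[ℝ] V →ₗ[ℝ] V) (c : V →ₗ[ℝ] V) (d : V)
    (ha : ∀ x y, a x y = a y x) (hb : ∀ x y, b x y = b y x)
    (h : ∀ x, a x x • x + b x x + c x + d = 0) : a = 0 ∧ b = 0 ∧ c = 0 ∧ d = 0 := by
  have hd : d = 0 := by simpa using h 0
  subst hd
  have key : ∀ x, a x x • x = 0 ∧ b x x = 0 ∧ c x = 0 := by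
    intro x
    have h1 := h x
    have h2 := h (-x)
    have h3 := h ((2:ℝ) • x)
    simp only [map_neg, LinearMap.neg_apply, map_smul, LinearMap.smul_apply, smul_eq_mul] at h2 h3
    refine ⟨?_, ?_, ?_⟩
    · linear_combination (norm := module) (-(1/2:ℝ)) • h1 - (1/6:ℝ) • h2 + (1/6:ℝ) • h3
    · linear_combination (norm := module) (1/2:ℝ) • h1 + (1/2:ℝ) • h2
    · linear_combination (norm := module) (1:ℝ) • h1 - (1/3:ℝ) • h2 - (1/6:ℝ) • h3
  refine ⟨aux_diag a ha fun x => ?_, aux_diag b hb fun x => (key x).2.1, ?_, rfl⟩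
  · rcases smul_eq_zero.1 (key x).1 with h | h
    · exact h
    · simp [h]
  · ext x; exact (key x).2.2

/-- explicit coefficients -/
noncomputable def auxQ (H : Submodule ℝ E) (e : E) (P : E →ₗ[ℝ] H) (φ : E →ₗ[ℝ] ℝ)
    (B : E →ₗ[ℝ] E →ₗ[ℝ] E) :
    (H →ₗ[ℝ] H →ₗ[ℝ] ℝ) × (H →ₗ[ℝ] H →ₗ[ℝ] H) × (H →ₗ[ℝ] H) × H :=
  (LinearMap.mk₂ ℝ (fun x y : H => φ (B x y)) (by intros; simp) (by intros; simp)
      (by intros; simp) (by intros; simp),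
   LinearMap.mk₂ ℝ (fun x y : H => φ (B e x) • y + φ (B e y) • x - P (B x y))
      (by intros; simp; module) (by intros; simp; module)
      (by intros; simp; module) (by intros; simp; module),
   φ (B e e) • LinearMap.id - (2:ℝ) • (P ∘ₗ B e ∘ₗ H.subtype),
   - P (B e e))

theorem auxQ_rel (H : Submodule ℝ E) (e : E) (P : E →ₗ[ℝ] H) (φ : E →ₗ[ℝ] ℝ)
    (B : E →ₗ[ℝ] E →ₗ[ℝ] E) (hB : ∀ u v : E, B u v = B v u) :
    (∀ x y : H, (auxQ H e P φ B).1 x y = (auxQ H e P φ B).1 y x) ∧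
    (∀ x y : H, (auxQ H e P φ B).2.1 x y = (auxQ H e P φ B).2.1 y x) ∧
    ProjCoeffRel H e P φ B (auxQ H e P φ B) := by
  refine ⟨fun x y => ?_, fun x y => ?_, fun h => ?_⟩
  · simp [auxQ, hB x y]
  · simp only [auxQ, LinearMap.mk₂_apply, hB x y]; module
  · simp only [auxQ, LinearMap.mk₂_apply, map_add, LinearMap.add_apply, hB h e,
      LinearMap.sub_apply, LinearMap.smul_apply, LinearMap.id_apply, LinearMap.comp_apply,
      Submodule.subtype_apply]
    module

theorem aux_uniq (H : Submodule ℝ E) (e : E) (P : E →ₗ[ℝ] H) (φ : E →ₗ[ℝ] ℝ)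
    (B : E →ₗ[ℝ] E →ₗ[ℝ] E)
    (q q' : (H →ₗ[ℝ] H →ₗ[ℝ] ℝ) × (H →ₗ[ℝ] H →ₗ[ℝ] H) × (H →ₗ[ℝ] H) × H)
    (h1 : ∀ x y : H, q.1 x y = q.1 y x) (h2 : ∀ x y : H, q.2.1 x y = q.2.1 y x)
    (h1' : ∀ x y : H, q'.1 x y = q'.1 y x) (h2' : ∀ x y : H, q'.2.1 x y = q'.2.1 y x)
    (h : ProjCoeffRel H e P φ B q) (h' : ProjCoeffRel H e P φ B q') : q = q' := by
  obtain ⟨a, b, c, d⟩ := q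
  obtain ⟨a', b', c', d'⟩ := q'
  obtain ⟨r1, r2, r3, r4⟩ := aux_poly (a - a') (b - b') (c - c') (d - d')
    (fun x y => by simpa using congrArg₂ (· - ·) (h1 x y) (h1' x y))
    (fun x y => by simpa using congrArg₂ (· - ·) (h2 x y) (h2' x y))
    (fun x => by
      have := (h x).symm.trans (h' x)
      simp only [LinearMap.sub_apply] at this ⊢
      linear_combination (norm := module) this)
  have s1 : a = a' := sub_eq_zero.1 r1
  have s2 : b = b' := sub_eq_zero.1 r2
  have s3 : c = c' := sub_eq_zero.1 r3
  have s4 : d = d' := sub_eq_zero.1 r4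
  rw [s1, s2, s3, s4]

theorem aux_inj [FiniteDimensional ℝ E] (H : Submodule ℝ E) (e : E)
    (P : E →ₗ[ℝ] H) (φ : E →ₗ[ℝ] ℝ) (hPφ : ∀ v : E, v = (P v : E) + φ v • e)
    (B : E →ₗ[ℝ] E →ₗ[ℝ] E) (hB : ∀ u v : E, B u v = B v u)
    (ht : ∀ u : E, LinearMap.trace ℝ E (B u) = 0) (h0 : auxQ H e P φ B = 0) : B = 0 := by
  have ea : ∀ x y : H, φ (B x y) = 0 := fun x y => by
    simpa [auxQ] using congrArg (fun q => q.1 x y) h0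
  have eb : ∀ x y : H, φ (B e x) • y + φ (B e y) • x - P (B x y) = 0 := fun x y => by
    exact congrArg (fun q => q.2.1 x y) h0
  have ec : φ (B e e) • LinearMap.id - (2:ℝ) • (P ∘ₗ B e ∘ₗ H.subtype) = 0 :=
    congrArg (fun q => q.2.2.1) h0
  have ed : P (B e e) = 0 := neg_eq_zero.1 (congrArg (fun q => q.2.2.2) h0)
  have hn : (0:ℝ) ≤ Module.finrank ℝ H := Nat.cast_nonneg _
  have g : φ (B e e) = 0 := by
    have h1 := ht e
    rw [aux_trace H e P φ hPφ] at h1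
    have h2 := congrArg (LinearMap.trace ℝ H) ec
    simp only [map_sub, map_smul, LinearMap.trace_id, map_zero, smul_eq_mul] at h2
    have : (Module.finrank ℝ H + 2 : ℝ) * φ (B e e) = 0 := by linarith
    rcases mul_eq_zero.1 this with h | h
    · linarith
    · exact h
  have β : ∀ x : H, φ (B e x) = 0 := by
    intro x
    have h1 := ht x
    rw [aux_trace H e P φ hPφ] at h1
    have h3 : P ∘ₗ B x ∘ₗ H.subtype = φ (B e x) • LinearMap.id +
        (φ ∘ₗ B e ∘ₗ H.subtype).smulRight x := by
      ext1 y
      simpa using (sub_eq_zero.1 (eb x y)).symm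
    rw [h3] at h1
    simp only [map_add, map_smul, LinearMap.trace_id, LinearMap.trace_smulRight, smul_eq_mul,
      LinearMap.comp_apply, Submodule.subtype_apply, hB x e] at h1
    have : (Module.finrank ℝ H + 2 : ℝ) * φ (B e x) = 0 := by linarith
    rcases mul_eq_zero.1 this with h | h
    · linarith
    · exact h
  have z : ∀ v, P v = 0 → φ v = 0 → v = 0 := fun v h1 h2 => by rw [hPφ v, h1, h2]; simp
  have e1 : B e e = 0 := z _ ed g
  have e2 : ∀ x : H, B e x = 0 := fun x => z _ (by
    have := congrArg (fun f => f x) ec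
    simpa [g] using this) (β x)
  have e3 : ∀ x y : H, B x y = 0 := fun x y => z _ (by simpa [β] using eb x y) (ea x y)
  ext u v
  rw [hPφ u, hPφ v]
  simp [e1, e2, e3, hB _ e]

theorem aux_surj [FiniteDimensional ℝ E] (H : Submodule ℝ E) (e : E) (he : e ∉ H)
    (P : E →ₗ[ℝ] H) (φ : E →ₗ[ℝ] ℝ) (hPφ : ∀ v : E, v = (P v : E) + φ v • e)
    (q : (H →ₗ[ℝ] H →ₗ[ℝ] ℝ) × (H →ₗ[ℝ] H →ₗ[ℝ] H) × (H →ₗ[ℝ] H) × H)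
    (h1 : ∀ x y : H, q.1 x y = q.1 y x) (h2 : ∀ x y : H, q.2.1 x y = q.2.1 y x) :
    ∃ B : E →ₗ[ℝ] E →ₗ[ℝ] E, (∀ u v : E, B u v = B v u) ∧
      (∀ u : E, LinearMap.trace ℝ E (B u) = 0) ∧ ProjCoeffRel H e P φ B q := by
  obtain ⟨a, b, c, d⟩ := q
  simp only at h1 h2
  obtain ⟨p1, p2, p3, p4⟩ := aux_proj H e he P φ hPφ
  have hn : (Module.finrank ℝ H + 2 : ℝ) ≠ 0 := by positivity
  obtain ⟨γ, hγ⟩ : ∃ γ : ℝ, (Module.finrank ℝ H + 2 : ℝ) * γ = LinearMap.trace ℝ H c :=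
    ⟨_, mul_div_cancel₀ _ hn⟩
  obtain ⟨β, hβ⟩ : ∃ β : H →ₗ[ℝ] ℝ, ∀ x,
      (Module.finrank ℝ H + 2 : ℝ) * β x = LinearMap.trace ℝ H (b x) :=
    ⟨(Module.finrank ℝ H + 2 : ℝ)⁻¹ • (LinearMap.trace ℝ H ∘ₗ b), fun x => by
      simp [mul_inv_cancel_left₀ hn]⟩
  let X : E → E → H := fun u v => β (P u) • P v + β (P v) • P u - b (P u) (P v)
    + φ u • ((1/2:ℝ) • (γ • P v - c (P v))) + φ v • ((1/2:ℝ) • (γ • P u - c (P u)))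
    - (φ u * φ v) • d
  let Y : E → E → ℝ := fun u v => a (P u) (P v) + φ u * β (P v) + φ v * β (P u) + φ u * φ v * γ
  let B : E →ₗ[ℝ] E →ₗ[ℝ] E := LinearMap.mk₂ ℝ (fun u v => (X u v : E) + Y u v • e)
    (by intros; simp [X, Y]; module) (by intros; simp [X, Y]; module)
    (by intros; simp [X, Y]; module) (by intros; simp [X, Y]; module)
  have hBv : ∀ u v, B u v = (X u v : E) + Y u v • e := fun u v => rfl
  have hPB : ∀ u v, P (B u v) = X u v := fun u v => by rw [hBv]; simp [p2, p4]
  have hφB : ∀ u v, φ (B u v) = Y u v := fun u v => by rw [hBv]; simp [p1, p3]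
  have hs : ∀ u v : E, B u v = B v u := by
    intro u v
    rw [hBv, hBv]
    have hX : X u v = X v u := by simp only [X, h2 (P u) (P v)]; module
    have hY : Y u v = Y v u := by simp only [Y, h1 (P u) (P v)]; ring
    rw [hX, hY]
  refine ⟨B, hs, fun u => ?_, fun h => ?_⟩
  · rw [aux_trace H e P φ hPφ, hφB]
    have : P ∘ₗ B u ∘ₗ H.subtype = β (P u) • LinearMap.id + β.smulRight (P u) - b (P u)
        + φ u • ((1/2:ℝ) • (γ • LinearMap.id - c)) := by
      ext1 y
      simp [hPB, X, p3, p4]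
    rw [this]
    simp only [map_add, map_sub, map_smul, LinearMap.trace_id, LinearMap.trace_smulRight,
      smul_eq_mul, Y, p1, p2, map_zero, ← hγ, ← hβ]
    ring
  · rw [hPB, hφB]
    simp only [X, Y, map_add, LinearMap.add_apply, p1, p2, p3, p4, zero_add, add_zero]
    module

end aux

theorem stmt7 {E : Type*} [AddCommGroup E] [Module ℝ E] [FiniteDimensional ℝ E]
    (H : Submodule ℝ E) (e : E) (he : e ∉ H)
    (hcompl : IsCompl (Submodule.span ℝ {e}) H)
    (P : E →ₗ[ℝ] H) (φ : E →ₗ[ℝ] ℝ)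
    (hPφ : ∀ v : E, v = (P v : E) + φ v • e) :
    -- to every symmetric trace-free `B` corresponds a unique quadruple `(a,b,c,d)`
    -- with `a`, `b` symmetric satisfying the coefficient equation
    (∀ B : E →ₗ[ℝ] E →ₗ[ℝ] E, (∀ u v : E, B u v = B v u) →
      (∀ u : E, LinearMap.trace ℝ E (B u) = 0) →
      ∃! q : (H →ₗ[ℝ] H →ₗ[ℝ] ℝ) × (H →ₗ[ℝ] H →ₗ[ℝ] H) × (H →ₗ[ℝ] H) × H,
        (∀ x y : H, q.1 x y = q.1 y x) ∧ (∀ x y : H, q.2.1 x y = q.2.1 y x) ∧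
          ProjCoeffRel H e P φ B q) ∧
    -- conversely, every such quadruple arises from a unique symmetric trace-free `B`
    (∀ q : (H →ₗ[ℝ] H →ₗ[ℝ] ℝ) × (H →ₗ[ℝ] H →ₗ[ℝ] H) × (H →ₗ[ℝ] H) × H,
      (∀ x y : H, q.1 x y = q.1 y x) → (∀ x y : H, q.2.1 x y = q.2.1 y x) →
      ∃! B : E →ₗ[ℝ] E →ₗ[ℝ] E,
        ((∀ u v : E, B u v = B v u) ∧ (∀ u : E, LinearMap.trace ℝ E (B u) = 0)) ∧
          ProjCoeffRel H e P φ B q) ∧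
    -- the correspondence `B ↦ (a,b,c,d)` is additive …
    (∀ B B' : E →ₗ[ℝ] E →ₗ[ℝ] E,
      ∀ q q' : (H →ₗ[ℝ] H →ₗ[ℝ] ℝ) × (H →ₗ[ℝ] H →ₗ[ℝ] H) × (H →ₗ[ℝ] H) × H,
      ProjCoeffRel H e P φ B q → ProjCoeffRel H e P φ B' q' →
        ProjCoeffRel H e P φ (B + B') (q + q')) ∧
    -- … and homogeneous, hence a linear isomorphism
    (∀ (c : ℝ) (B : E →ₗ[ℝ] E →ₗ[ℝ] E),
      ∀ q : (H →ₗ[ℝ] H →ₗ[ℝ] ℝ) × (H →ₗ[ℝ] H →ₗ[ℝ] H) × (H →ₗ[ℝ] H) × H,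
      ProjCoeffRel H e P φ B q → ProjCoeffRel H e P φ (c • B) (c • q)) := by
  refine ⟨fun B hB ht => ?_, fun q h1 h2 => ?_, ?_, ?_⟩
  · obtain ⟨r1, r2, r3⟩ := auxQ_rel H e P φ B hB
    exact ⟨auxQ H e P φ B, ⟨r1, r2, r3⟩, fun q hq =>
      aux_uniq H e P φ B _ _ hq.1 hq.2.1 r1 r2 hq.2.2 r3⟩
  · obtain ⟨B, hB, ht, hr⟩ := aux_surj H e he P φ hPφ q h1 h2
    refine ⟨B, ⟨⟨hB, ht⟩, hr⟩, ?_⟩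
    rintro B' ⟨⟨hB', ht'⟩, hr'⟩
    have hs : ∀ u v : E, (B' - B) u v = (B' - B) v u := fun u v => by
      simp only [LinearMap.sub_apply, hB u v, hB' u v]
    refine sub_eq_zero.1 (aux_inj H e P φ hPφ (B' - B) hs (fun u => ?_) ?_)
    · rw [LinearMap.sub_apply, map_sub, ht, ht', sub_zero]
    · obtain ⟨r1, r2, r3⟩ := auxQ_rel H e P φ (B' - B) hs
      refine aux_uniq H e P φ (B' - B) _ _ r1 r2 (fun x y => rfl) (fun x y => rfl) r3 ?_
      intro h
      have := (hr' h).trans (hr h).symm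
      simp only [LinearMap.sub_apply, map_sub, Prod.fst_zero, Prod.snd_zero, LinearMap.zero_apply]
      linear_combination (norm := module) this
  · intro B B' q q' h h' x
    have h1 := h x
    have h2 := h' x
    simp only [LinearMap.add_apply, map_add, Prod.fst_add, Prod.snd_add] at h1 h2 ⊢
    linear_combination (norm := module) h1 + h2
  · intro t B q h x
    have h1 := h x
    simp only [LinearMap.smul_apply, map_smul, Prod.smul_fst, Prod.smul_snd, smul_eq_mul] at h1 ⊢
    linear_combination (norm := module) t • h1
end

section
/- Let U ⊆ ℝ² be open, G ⊆ U × ℝ open, and X¹, X², X³ : G → ℝ of class C¹ with X¹(z,y) ≠ 0 for all (z,y) ∈ G. Write R(z,y) = X²(z,y)/X¹(z,y). Suppose there exist functions a, b, c, d : U → ℝ such that for all (z,y) ∈ G (with z = (z₁,z₂)): ∂R/∂z₁(z,y) + R(z,y)·∂R/∂z₂(z,y) + (X³(z,y)/X¹(z,y))·∂R/∂y(z,y) = a(z)·R(z,y)³ + b(z)·R(z,y)² + c(z)·R(z,y) + d(z). If v : U → ℝ is a C¹ function with (z, v(z)) ∈ G for all z ∈ U satisfying X¹(z,v(z))·∂v/∂z₁(z)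 + X²(z,v(z))·∂v/∂z₂(z) = X³(z,v(z)), then the function u(z) := X²(z,v(z))/X¹(z,v(z)) satisfies, writing t = z₁ and x = z₂: ∂u/∂t + u·∂u/∂x = a(t,x)·u³ + b(t,x)·u² + c(t,x)·u + d(t,x) on U. -/
theorem stmt8
    (U : Set (ℝ × ℝ)) (hU : IsOpen U)
    (G : Set (ℝ × ℝ × ℝ)) (hG : IsOpen G)
    (hGU : ∀ p ∈ G, (p.1, p.2.1) ∈ U)
    (X1 X2 X3 : ℝ × ℝ × ℝ → ℝ)
    (hX1 : ContDiffOn ℝ 1 X1 G) (hX2 : ContDiffOn ℝ 1 X2 G) (hX3 : ContDiffOn ℝ 1 X3 G)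
    (hX1ne : ∀ p ∈ G, X1 p ≠ 0)
    (R : ℝ × ℝ × ℝ → ℝ) (hR : ∀ p, R p = X2 p / X1 p)
    (a b c d : ℝ × ℝ → ℝ)
    (habcd : ∀ p ∈ G,
      deriv (fun s => R (s, p.2.1, p.2.2)) p.1
        + R p * deriv (fun s => R (p.1, s, p.2.2)) p.2.1
        + (X3 p / X1 p) * deriv (fun s => R (p.1, p.2.1, s)) p.2.2
      = a (p.1, p.2.1) * R p ^ 3 + b (p.1, p.2.1) * R p ^ 2
          + c (p.1, p.2.1) * R p + d (p.1, p.2.1))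
    (v : ℝ × ℝ → ℝ) (hv : ContDiffOn ℝ 1 v U)
    (hvG : ∀ z ∈ U, (z.1, z.2, v z) ∈ G)
    (hvsol : ∀ z ∈ U,
      X1 (z.1, z.2, v z) * deriv (fun s => v (s, z.2)) z.1
        + X2 (z.1, z.2, v z) * deriv (fun s => v (z.1, s)) z.2
      = X3 (z.1, z.2, v z))
    (u : ℝ × ℝ → ℝ) (hu : ∀ z, u z = X2 (z.1, z.2, v z) / X1 (z.1, z.2, v z)) :
    ∀ z ∈ U,
      deriv (fun s => u (s, z.2)) z.1 + u z * deriv (fun s => u (z.1, s)) z.2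
        = a z * u z ^ 3 + b z * u z ^ 2 + c z * u z + d z := by
  rintro ⟨t, x⟩ hz
  have hp := hvG _ hz
  have hs := hvsol _ hz
  have hq := habcd _ hp
  have hne := hX1ne _ hp
  have huR : ∀ z, u z = R (z.1, z.2, v z) := fun z => by rw [hu, hR]
  have hu0 := huR (t, x)
  have hRd : DifferentiableAt ℝ R (t, x, v (t, x)) := by
    have h1 := (hX1.contDiffAt (hG.mem_nhds hp)).differentiableAt one_ne_zero
    have h2 := (hX2.contDiffAt (hG.mem_nhds hp)).differentiableAt one_ne_zero
    have e : R = fun p => X2 p / X1 p := funext hR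
    rw [e]
    simp only [div_eq_mul_inv]
    exact h2.mul (h1.inv hne)
  have hvd : DifferentiableAt ℝ v (t, x) :=
    (hv.contDiffAt (hU.mem_nhds hz)).differentiableAt one_ne_zero
  obtain ⟨L, hL⟩ : ∃ L, HasFDerivAt R L (t, x, v (t, x)) := ⟨_, hRd.hasFDerivAt⟩
  have v1 : HasDerivAt (fun s => v (s, x)) (deriv (fun s => v (s, x)) t) t := by
    apply DifferentiableAt.hasDerivAt
    exact DifferentiableAt.comp t (g := v) (f := fun s : ℝ => (s, x)) hvd (by fun_prop)
  have v2 : HasDerivAt (fun s => v (t, s)) (deriv (fun s => v (t, s)) x) x := by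
    apply DifferentiableAt.hasDerivAt
    exact DifferentiableAt.comp x (g := v) (f := fun s : ℝ => (t, s)) hvd (by fun_prop)
  have r1 : deriv (fun s => R (s, x, v (t, x))) t = L (1, 0, 0) :=
    (HasFDerivAt.comp_hasDerivAt (f := fun s : ℝ => (s, x, v (t, x))) t hL
      ((hasDerivAt_id t).prodMk ((hasDerivAt_const t x).prodMk (hasDerivAt_const t _)))).deriv
  have r2 : deriv (fun s => R (t, s, v (t, x))) x = L (0, 1, 0) :=
    (HasFDerivAt.comp_hasDerivAt (f := fun s : ℝ => (t, s, v (t, x))) x hL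
      ((hasDerivAt_const x t).prodMk ((hasDerivAt_id x).prodMk (hasDerivAt_const x _)))).deriv
  have r3 : deriv (fun s => R (t, x, s)) (v (t, x)) = L (0, 0, 1) :=
    (HasFDerivAt.comp_hasDerivAt (f := fun s : ℝ => (t, x, s)) (v (t, x)) hL
      ((hasDerivAt_const _ t).prodMk ((hasDerivAt_const _ x).prodMk (hasDerivAt_id _)))).deriv
  have u1 : deriv (fun s => R (s, x, v (s, x))) t = L (1, 0, deriv (fun s => v (s, x)) t) :=
    (HasFDerivAt.comp_hasDerivAt (f := fun s : ℝ => (s, x, v (s, x))) t hL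
      ((hasDerivAt_id t).prodMk ((hasDerivAt_const t x).prodMk v1))).deriv
  have u2 : deriv (fun s => R (t, s, v (t, s))) x = L (0, 1, deriv (fun s => v (t, s)) x) :=
    (HasFDerivAt.comp_hasDerivAt (f := fun s : ℝ => (t, s, v (t, s))) x hL
      ((hasDerivAt_const x t).prodMk ((hasDerivAt_id x).prodMk v2))).deriv
  have l1 : ∀ k : ℝ, L (1, 0, k) = L (1, 0, 0) + k * L (0, 0, 1) := fun k => by
    rw [← smul_eq_mul, ← map_smul, ← map_add]; simp
  have l2 : ∀ k : ℝ, L (0, 1, k) = L (0, 1, 0) + k * L (0, 0, 1) := fun k => by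
    rw [← smul_eq_mul, ← map_smul, ← map_add]; simp
  have hRp := hR (t, x, v (t, x))
  simp only [huR] at hs hq ⊢
  rw [r1, r2, r3] at hq
  rw [u1, u2, l1, l2, ← hq, ← hs, add_div, mul_div_cancel_left₀ _ hne, mul_div_right_comm, ← hRp]
  ring
end

section
/- Let m ≥ 1, let ν : ℝᵐ → ℝ be a linear functional, let u₋ ≠ u₊ be real numbers, let I = [min(u₋,u₊), max(u₋,u₊)], and let X : I → ℝᵐ be continuous. Suppose that for every k ∈ I: ⟨ν, ∫_{|k,u₊|} X(y) dy⟩ ≤ ⟨ν, ∫_{|u₋,k|} X(y) dy⟩, where ∫_{|a,b|} denotes the integral over the unoriented interval [min(a,b), max(a,b)]. Then: (i) the Rankine–Hugoniot identity ⟨ν, ∫_{|u₋,u₊|} X(y) dy⟩ = 0 holds; (ii) ⟨ν, X(u₊)⟩ ≤ 0; and (iii) ⟨ν, X(u₋)⟩ ≥ 0. -/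
open MeasureTheory

lemma aux_sign (f : ℝ → ℝ) (a b : ℝ) (hne : a ≠ b) (hf : ContinuousOn f (Set.uIcc a b))
    (h : ∀ k ∈ Set.uIcc a b, 0 ≤ ∫ y in Set.uIcc a k, f y) : 0 ≤ f a := by
  by_contra! hneg
  obtain ⟨δ, hδ, hd⟩ := Metric.continuousWithinAt_iff.1 (hf a Set.left_mem_uIcc) (-(f a) / 2)
    (by linarith)
  have hab : 0 < |b - a| := abs_pos.2 (sub_ne_zero.2 hne.symm)
  obtain ⟨t, ht0, ht1, htδ⟩ : ∃ t : ℝ, 0 < t ∧ t ≤ 1 ∧ t * |b - a| < δ := by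
    refine ⟨min 1 (δ / (2 * |b - a|)), by positivity, min_le_left _ _, ?_⟩
    calc _ ≤ δ / (2 * |b - a|) * |b - a| := by gcongr; exact min_le_right _ _
      _ = δ / 2 := by field_simp
      _ < δ := by linarith
  have hk : a + t * (b - a) ∈ Set.uIcc a b := by
    rw [Set.mem_uIcc]
    rcases le_total a b with hl | hl
    · left; constructor <;> nlinarith
    · right; constructor <;> nlinarith
  have hka : |(a + t * (b - a)) - a| = t * |b - a| := by
    rw [add_sub_cancel_left, abs_mul, abs_of_pos ht0]
  generalize a + t * (b - a) = k at hk hka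
  have hsub : Set.uIcc a k ⊆ Set.uIcc a b := Set.uIcc_subset_uIcc_left hk
  have hvol : volume.real (Set.uIcc a k) = |k - a| := by
    simp [Measure.real, Real.volume_interval]
  have hle : ∫ y in Set.uIcc a k, f y ≤ ∫ y in Set.uIcc a k, (f a / 2) := by
    apply setIntegral_mono_on
    · exact (hf.mono hsub).integrableOn_compact isCompact_uIcc
    · exact continuousOn_const.integrableOn_compact isCompact_uIcc
    · exact measurableSet_uIcc
    · intro y hy
      have h1 : |y - a| ≤ |k - a| := Set.abs_sub_left_of_mem_uIcc hy
      have h2 := hd (hsub hy) (by rw [Real.dist_eq]; linarith)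
      rw [Real.dist_eq] at h2
      linarith [(abs_lt.1 h2).2]
  rw [setIntegral_const, hvol, hka, smul_eq_mul] at hle
  have := h k hk
  have : 0 < t * |b - a| := by positivity
  nlinarith

theorem stmt10 (m : ℕ) (hm : 1 ≤ m) (ν : (Fin m → ℝ) →ₗ[ℝ] ℝ)
    (um up : ℝ) (hne : um ≠ up)
    (X : ℝ → (Fin m → ℝ)) (hX : ContinuousOn X (Set.uIcc um up))
    (hent : ∀ k ∈ Set.uIcc um up,
      ν (∫ y in Set.uIcc k up, X y) ≤ ν (∫ y in Set.uIcc um k, X y)) :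
    ν (∫ y in Set.uIcc um up, X y) = 0 ∧ ν (X up) ≤ 0 ∧ 0 ≤ ν (X um) := by
  have hνc : Continuous ν := ν.continuous_of_finiteDimensional
  have hint : ∀ s : Set ℝ, IntegrableOn X s → ν (∫ y in s, X y) = ∫ y in s, ν (X y) := by
    intro s hs
    exact ((⟨ν, hνc⟩ : (Fin m → ℝ) →L[ℝ] ℝ).integral_comp_comm hs).symm
  have hI : IntegrableOn X (Set.uIcc um up) := hX.integrableOn_compact isCompact_uIcc
  have h0 : ν (∫ y in Set.uIcc um up, X y) = 0 := by
    have h1 := hent um Set.left_mem_uIcc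
    have h2 := hent up Set.right_mem_uIcc
    simp at h1 h2
    exact le_antisymm h1 h2
  have hsum : ∀ k ∈ Set.uIcc um up,
      ν (∫ y in Set.uIcc um k, X y) + ν (∫ y in Set.uIcc k up, X y) = 0 := by
    intro k hk
    rw [← h0, ← map_add]
    congr 1
    have hU : Set.uIcc um k ∪ Set.uIcc k up = Set.uIcc um up := by
      rcases Set.mem_uIcc.1 hk with ⟨h1, h2⟩ | ⟨h1, h2⟩
      · rw [Set.uIcc_of_le h1, Set.uIcc_of_le h2, Set.uIcc_of_le (h1.trans h2),
          Set.Icc_union_Icc_eq_Icc h1 h2]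
      · rw [Set.uIcc_of_ge h1, Set.uIcc_of_ge h2, Set.uIcc_of_ge (h1.trans h2), Set.union_comm,
          Set.Icc_union_Icc_eq_Icc h1 h2]
    rw [← hU, setIntegral_union₀ _ measurableSet_uIcc.nullMeasurableSet]
    · exact hI.mono_set (hU ▸ Set.subset_union_left)
    · exact hI.mono_set (hU ▸ Set.subset_union_right)
    · refine measure_mono_null (t := {k}) ?_ (by simp)
      rintro y ⟨h1, h2⟩
      rw [Set.mem_uIcc] at h1 h2 hk
      rw [Set.mem_singleton_iff]
      grind
  refine ⟨h0, ?_, ?_⟩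
  · have := aux_sign (fun y => -ν (X y)) up um hne.symm
      (by rw [Set.uIcc_comm]; exact (hνc.comp_continuousOn hX).neg) (by
        intro k hk
        rw [Set.uIcc_comm] at hk
        rw [Set.uIcc_comm, integral_neg, ← hint _ (hI.mono_set (Set.uIcc_subset_uIcc_right hk))]
        linarith [hent k hk, hsum k hk])
    simpa using this
  · exact aux_sign (fun y => ν (X y)) um up hne (hνc.comp_continuousOn hX) (by
        intro k hk
        rw [← hint _ (hI.mono_set (Set.uIcc_subset_uIcc_left hk))]
        linarith [hent k hk, hsum k hk])
end

section
/- Let u₋ ≠ u₊ be real numbers, I = [min(u₋,u₊), max(u₋,u₊)], β : I → ℝ continuous with β(y) > 0 for all y ∈ I, ν = (ν₁,ν₂) a linear functional on ℝ², and define X(y) = β(y)·(1, y) ∈ ℝ². Suppose the Rankine–Hugoniot identity ⟨ν, ∫_{|u₋,u₊|} X(y) dy⟩ = 0 holds together with ⟨ν, X(u₊)⟩ ≤ 0 and ⟨ν, X(u₋)⟩ ≥ 0. Then for every k ∈ I: ⟨ν, ∫_{|k,u₊|} X(y) dy⟩ ≤ ⟨ν, ∫_{|u₋,k|} X(y) dy⟩,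 where ∫_{|a,b|} denotes the integral over the unoriented interval [min(a,b), max(a,b)]. -/
open MeasureTheory

theorem aff_nonneg (p q a b y : ℝ) (ha : 0 ≤ p + q * a) (hb : 0 ≤ p + q * b)
    (hy : y ∈ Set.uIcc a b) : 0 ≤ p + q * y := by
  rcases Set.mem_uIcc.1 hy with ⟨h1, h2⟩ | ⟨h1, h2⟩ <;> rcases le_total 0 q with hq | hq <;>
    nlinarith

theorem stmt11 (um up : ℝ) (hne : um ≠ up)
    (β : ℝ → ℝ) (hβc : ContinuousOn β (Set.uIcc um up))
    (hβpos : ∀ y ∈ Set.uIcc um up, 0 < β y)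
    (ν₁ ν₂ : ℝ)
    (hRH : ν₁ * (∫ y in Set.uIcc um up, β y) + ν₂ * (∫ y in Set.uIcc um up, y * β y) = 0)
    (hplus : ν₁ * β up + ν₂ * (up * β up) ≤ 0)
    (hminus : 0 ≤ ν₁ * β um + ν₂ * (um * β um)) :
    ∀ k ∈ Set.uIcc um up,
      ν₁ * (∫ y in Set.uIcc k up, β y) + ν₂ * (∫ y in Set.uIcc k up, y * β y)
        ≤ ν₁ * (∫ y in Set.uIcc um k, β y) + ν₂ * (∫ y in Set.uIcc um k, y * β y) := by
  intro k hk
  have s1 : Set.uIcc um k ⊆ Set.uIcc um up := Set.uIcc_subset_uIcc_left hk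
  have s2 : Set.uIcc k up ⊆ Set.uIcc um up := Set.uIcc_subset_uIcc_right hk
  have hyc : ContinuousOn (fun y => y * β y) (Set.uIcc um up) := continuousOn_id.mul hβc
  have I0 : IntegrableOn β (Set.uIcc um up) := hβc.integrableOn_compact isCompact_uIcc
  have I1 : IntegrableOn (fun y => y * β y) (Set.uIcc um up) :=
    hyc.integrableOn_compact isCompact_uIcc
  have key : ∀ s ⊆ Set.uIcc um up, ν₁ * (∫ y in s, β y) + ν₂ * (∫ y in s, y * β y)
      = ∫ y in s, (ν₁ + ν₂ * y) * β y := by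
    intro s hs
    rw [← integral_const_mul, ← integral_const_mul,
      ← integral_add ((I0.mono_set hs).const_mul _) ((I1.mono_set hs).const_mul _)]
    congr 1
    ext y
    ring
  have I : IntegrableOn (fun y => (ν₁ + ν₂ * y) * β y) (Set.uIcc um up) := by
    refine ContinuousOn.integrableOn_compact isCompact_uIcc (ContinuousOn.mul ?_ hβc)
    fun_prop
  have hU : Set.uIcc um k ∪ Set.uIcc k up = Set.uIcc um up :=
    Set.Subset.antisymm (Set.union_subset s1 s2) Set.uIcc_subset_uIcc_union_uIcc
  have hd : AEDisjoint volume (Set.uIcc um k) (Set.uIcc k up) := by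
    refine measure_mono_null (t := {k}) ?_ (by simp)
    rintro y ⟨h1, h2⟩
    rw [Set.mem_uIcc] at h1 h2 hk
    rw [Set.mem_singleton_iff]
    grind
  have hadd := setIntegral_union₀ hd measurableSet_uIcc.nullMeasurableSet
    (I.mono_set s1) (I.mono_set s2)
  rw [key _ subset_rfl, ← hU, hadd] at hRH
  rw [key _ s1, key _ s2]
  have lp : ν₁ + ν₂ * up ≤ 0 := by
    have := hβpos up Set.right_mem_uIcc
    by_contra! h
    nlinarith [mul_pos h this]
  have lm : 0 ≤ ν₁ + ν₂ * um := by
    have := hβpos um Set.left_mem_uIcc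
    by_contra! h
    nlinarith [mul_pos_of_neg_of_neg h (neg_lt_zero.2 this)]
  rcases le_total 0 (ν₁ + ν₂ * k) with h | h
  · have : 0 ≤ ∫ y in Set.uIcc um k, (ν₁ + ν₂ * y) * β y :=
      setIntegral_nonneg measurableSet_uIcc fun y hy =>
        mul_nonneg (aff_nonneg _ _ _ _ _ lm h hy) (hβpos y (s1 hy)).le
    linarith
  · have : ∫ y in Set.uIcc k up, (ν₁ + ν₂ * y) * β y ≤ 0 :=
      setIntegral_nonpos measurableSet_uIcc fun y hy => by
        have := aff_nonneg (-ν₁) (-ν₂) k up y (by linarith) (by linarith) hy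
        exact mul_nonpos_of_nonpos_of_nonneg (by linarith) (hβpos y (s2 hy)).le
    linarith
end

section
/- Let J ⊆ ℝ be an open interval and β : J → ℝ continuous. The following are equivalent: (a) for all s, t ∈ J with s < t, ∫ₛᵗ β(x) dx ≠ 0; (b) β(x)·β(y) ≥ 0 for all x, y ∈ J, and every nonempty open subinterval I ⊆ J contains a point x with β(x) ≠ 0. -/
theorem stmt12 (J : Set ℝ) (hJo : IsOpen J) (hJc : J.OrdConnected)
    (β : ℝ → ℝ) (hβ : ContinuousOn β J) :
    (∀ s ∈ J, ∀ t ∈ J, s < t → (∫ x in s..t, β x) ≠ 0) ↔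
      ((∀ x ∈ J, ∀ y ∈ J, 0 ≤ β x * β y) ∧
        ∀ a b : ℝ, a < b → Set.Ioo a b ⊆ J → ∃ x ∈ Set.Ioo a b, β x ≠ 0) := by
  have hint : ∀ s ∈ J, ∀ t ∈ J, IntervalIntegrable β MeasureTheory.volume s t :=
    fun s hs t ht => (hβ.mono (hJc.uIcc_subset hs ht)).intervalIntegrable
  constructor
  · intro h
    constructor
    · have key : ∀ x ∈ J, ∀ y ∈ J, x < y → 0 ≤ β x * β y := by
        intro x hx y hy hxy
        have hsub : Set.Icc x y ⊆ J := hJc.out hx hy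
        have hd : ∀ z ∈ Set.Icc x y, HasDerivAt (fun u => ∫ v in x..u, β v) (β z) z := by
          intro z hz
          exact intervalIntegral.integral_hasDerivAt_right (hint x hx z (hsub hz))
            (hβ.stronglyMeasurableAtFilter hJo z (hsub hz))
            (hβ.continuousAt (hJo.mem_nhds (hsub hz)))
        have hc : ContinuousOn (fun u => ∫ v in x..u, β v) (Set.Icc x y) :=
          fun z hz => (hd z hz).continuousAt.continuousWithinAt
        have hdiff : ∀ p ∈ J, ∀ q ∈ J, (∫ v in x..p, β v) = (∫ v in x..q, β v) →
            (∫ v in p..q, β v) = 0 := by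
          intro p hp q hq hpq
          rw [← intervalIntegral.integral_interval_sub_left (hint x hx q hq) (hint x hx p hp)]
          linarith
        have hi : Set.InjOn (fun u => ∫ v in x..u, β v) (Set.Icc x y) := by
          intro p hp q hq hpq
          rcases lt_trichotomy p q with hlt | heq | hlt
          · exact absurd (hdiff p (hsub hp) q (hsub hq) hpq) (h p (hsub hp) q (hsub hq) hlt)
          · exact heq
          · exact absurd (hdiff q (hsub hq) p (hsub hp) hpq.symm)
              (h q (hsub hq) p (hsub hp) hlt)
        have hdw : ∀ z ∈ Set.Icc x y,
            derivWithin (fun u => ∫ v in x..u, β v) (Set.Icc x y) z = β z := fun z hz =>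
          (hd z hz).hasDerivWithinAt.derivWithin (uniqueDiffOn_Icc hxy z hz)
        have hxm : x ∈ Set.Icc x y := ⟨le_rfl, hxy.le⟩
        have hym : y ∈ Set.Icc x y := ⟨hxy.le, le_rfl⟩
        rw [← hdw x hxm, ← hdw y hym]
        rcases hc.strictMonoOn_of_injOn_Icc' hxy.le hi with hm | hm
        · exact mul_nonneg hm.monotoneOn.derivWithin_nonneg hm.monotoneOn.derivWithin_nonneg
        · exact mul_nonneg_of_nonpos_of_nonpos hm.antitoneOn.derivWithin_nonpos
            hm.antitoneOn.derivWithin_nonpos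
      intro x hx y hy
      rcases lt_trichotomy x y with hlt | heq | hlt
      · exact key x hx y hy hlt
      · subst heq
        exact mul_self_nonneg _
      · rw [mul_comm]
        exact key y hy x hx hlt
    · intro a b hab hsub
      by_contra! hz
      obtain ⟨s, has, hsb⟩ := exists_between hab
      obtain ⟨t, hst, htb⟩ := exists_between hsb
      refine h s (hsub ⟨has, hsb⟩) t (hsub ⟨has.trans hst, htb⟩) hst ?_
      apply intervalIntegral.integral_zero_ae
      refine Filter.Eventually.of_forall fun x hx => ?_
      rw [Set.uIoc_of_le hst.le] at hx
      exact hz x ⟨has.trans hx.1, hx.2.trans_lt htb⟩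
  · rintro ⟨h1, h2⟩ s hs t ht hst
    have hsub : Set.Icc s t ⊆ J := hJc.out hs ht
    obtain ⟨z, hz, hz0⟩ := h2 s t hst (Set.Ioo_subset_Icc_self.trans hsub)
    have hzI := Set.Ioo_subset_Icc_self hz
    rcases lt_or_gt_of_ne hz0 with hneg | hpos
    · have hp : 0 < ∫ x in s..t, -β x := by
        refine intervalIntegral.integral_pos hst (hβ.mono hsub).neg (fun x hx => ?_)
          ⟨z, hzI, neg_pos.mpr hneg⟩
        have := h1 z (hsub hzI) x (hsub (Set.Ioc_subset_Icc_self hx))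
        by_contra! hcon
        nlinarith
      rw [intervalIntegral.integral_neg] at hp
      intro h0
      linarith
    · refine (intervalIntegral.integral_pos hst (hβ.mono hsub) (fun x hx => ?_) ⟨z, hzI, hpos⟩).ne'
      have := h1 z (hsub hzI) x (hsub (Set.Ioc_subset_Icc_self hx))
      by_contra! hcon
      nlinarith
end

section
/- Let J ⊆ ℝ be an open interval and β : J → ℝ continuous. The following are equivalent: (a) for all s, t ∈ J with s < t, ∫ₛᵗ β(x) dx ≠ 0; (b) for all s, t ∈ J with s < t, ∫ₛᵗ β(x) dx ≠ 0 and the barycenter B(s,t) := (∫ₛᵗ x·β(x) dx)/(∫ₛᵗ β(x) dx) satisfies s < B(s,t) < t. -/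
open Set in
theorem aux13 (β : ℝ → ℝ) (s t : ℝ) (hst : s < t) (hβ : ContinuousOn β (Icc s t))
    (hm : StrictMonoOn (fun x => ∫ y in s..x, β y) (Icc s t)) :
    s < (∫ x in s..t, x * β x) / (∫ x in s..t, β x) ∧
        (∫ x in s..t, x * β x) / (∫ x in s..t, β x) < t := by
  have hu : uIcc s t = Icc s t := uIcc_of_le hst.le
  have hi : IntervalIntegrable β MeasureTheory.volume s t :=
    ContinuousOn.intervalIntegrable (by rwa [hu])
  set F : ℝ → ℝ := fun x => ∫ y in s..x, β y with hF
  have hFc : ContinuousOn F (Icc s t) := by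
    have := intervalIntegral.continuousOn_primitive_interval' hi left_mem_uIcc
    rwa [hu] at this
  have hFi : IntervalIntegrable F MeasureTheory.volume s t :=
    ContinuousOn.intervalIntegrable (by rwa [hu])
  have hFd : ∀ x ∈ Ioo s t, HasDerivAt F (β x) x := by
    intro x hx
    apply intervalIntegral.integral_hasDerivAt_right
    · apply hi.mono_set
      rw [hu, uIcc_of_le hx.1.le]
      exact Icc_subset_Icc le_rfl hx.2.le
    · exact ContinuousOn.stronglyMeasurableAtFilter isOpen_Ioo
        (hβ.mono Ioo_subset_Icc_self) x hx
    · exact hβ.continuousAt (Icc_mem_nhds hx.1 hx.2)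
  have hp : ∫ x in s..t, x * β x = t * F t - s * F s - ∫ x in s..t, 1 * F x := by
    apply intervalIntegral.integral_mul_deriv_eq_deriv_mul_of_hasDerivAt (u := fun x => x)
    · exact continuousOn_id
    · rwa [hu]
    · intro x _
      exact hasDerivAt_id x
    · intro x hx
      rw [min_eq_left hst.le, max_eq_right hst.le] at hx
      exact hFd x hx
    · simp
    · exact hi
  have hs : s ∈ Icc s t := left_mem_Icc.2 hst.le
  have ht : t ∈ Icc s t := right_mem_Icc.2 hst.le
  have hF0 : F s = 0 := by simp [hF]
  have hpos : 0 < F t := by rw [← hF0]; exact hm hs ht hst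
  have h1 : 0 < ∫ x in s..t, F x := by
    apply intervalIntegral.integral_pos hst hFc
    · intro x hx
      rw [← hF0]; exact (hm hs (Ioc_subset_Icc_self hx) hx.1).le
    · exact ⟨t, ht, hpos⟩
  have h2 : 0 < ∫ x in s..t, (F t - F x) := by
    apply intervalIntegral.integral_pos hst (continuousOn_const.sub hFc)
    · intro x hx
      exact sub_nonneg.2 (hm.monotoneOn (Ioc_subset_Icc_self hx) ht hx.2)
    · exact ⟨s, hs, by change 0 < F t - F s; rw [hF0]; linarith⟩
  rw [intervalIntegral.integral_sub (by simp) hFi] at h2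
  simp only [intervalIntegral.integral_const, smul_eq_mul] at h2
  simp only [one_mul] at hp
  change s < _ / F t ∧ _ / F t < t
  rw [lt_div_iff₀ hpos, div_lt_iff₀ hpos, hp, hF0]
  constructor <;> nlinarith

open Set in
theorem stmt13 (J : Set ℝ) (hJo : IsOpen J) (hJc : J.OrdConnected)
    (β : ℝ → ℝ) (hβ : ContinuousOn β J) :
    (∀ s ∈ J, ∀ t ∈ J, s < t → (∫ x in s..t, β x) ≠ 0) ↔
      (∀ s ∈ J, ∀ t ∈ J, s < t → (∫ x in s..t, β x) ≠ 0 ∧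
        s < (∫ x in s..t, x * β x) / (∫ x in s..t, β x) ∧
        (∫ x in s..t, x * β x) / (∫ x in s..t, β x) < t) := by
  refine ⟨fun h s hs t ht hst => ⟨h s hs t ht hst, ?_⟩, fun h s hs t ht hst => (h s hs t ht hst).1⟩
  have hsub : Icc s t ⊆ J := hJc.out hs ht
  have hc := hβ.mono hsub
  have hu : uIcc s t = Icc s t := uIcc_of_le hst.le
  have hi : IntervalIntegrable β MeasureTheory.volume s t :=
    ContinuousOn.intervalIntegrable (by rwa [hu])
  have hFc : ContinuousOn (fun x => ∫ y in s..x, β y) (Icc s t) := by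
    have := intervalIntegral.continuousOn_primitive_interval' hi left_mem_uIcc
    rwa [hu] at this
  have hsi : ∀ x ∈ Icc s t, IntervalIntegrable β MeasureTheory.volume s x := by
    intro x hx
    apply hi.mono_set
    rw [hu, uIcc_of_le hx.1]
    exact Icc_subset_Icc le_rfl hx.2
  have hinj : InjOn (fun x => ∫ y in s..x, β y) (Icc s t) := by
    intro x hx y hy hxy
    have e := intervalIntegral.integral_interval_sub_left (hsi y hy) (hsi x hx)
    have e' := intervalIntegral.integral_interval_sub_left (hsi x hx) (hsi y hy)
    simp only at hxy
    rw [hxy, sub_self] at e e'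
    rcases lt_trichotomy x y with hl | hl | hl
    · exact absurd e.symm (h x (hsub hx) y (hsub hy) hl)
    · exact hl
    · exact absurd e'.symm (h y (hsub hy) x (hsub hx) hl)
  rcases hFc.strictMonoOn_of_injOn_Icc' hst.le hinj with hm | hm
  · exact aux13 β s t hst hc hm
  · have := aux13 (fun x => - β x) s t hst hc.neg (by
      intro x hx y hy hxy
      simpa using hm hx hy hxy)
    simpa [neg_div_neg_eq] using this
end

section
/- Let J ⊆ ℝ be an open interval and β : J → ℝ continuous, and suppose that for all s, t ∈ J with s ≠ t the vector v(s,t) := (∫ₛᵗ β(x) dx, ∫ₛᵗ x·β(x) dx) ∈ ℝ² is nonzero. Then the following are equivalent: (a) for all s, t ∈ J with s < t, ∫ₛᵗ β(x) dx ≠ 0; (b) for every s ∈ J, the map t ↦ [v(s,t)] from J \ {s} to the real projective line P(ℝ²) (sending t to the line ℝ·v(s,t)) is injective. -/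
open Set Filter Topology

lemma aux_slope {f : ℝ → ℝ} {f' x c : ℝ} (h : HasDerivAt f f' x) (hf : 0 < f') (hc : x < c) :
    ∃ y ∈ Ioo x c, f x < f y := by
  have h1 := hasDerivAt_iff_tendsto_slope.1 h
  have h2 : ∀ᶠ y in 𝓝[≠] x, 0 < slope f x y := h1.eventually (lt_mem_nhds hf)
  have h3 : ∀ᶠ y in 𝓝[>] x, 0 < slope f x y :=
    h2.filter_mono (nhdsWithin_mono _ (fun y hy => ne_of_gt hy))
  have h4 : ∀ᶠ y in 𝓝[>] x, y ∈ Ioo x c := Ioo_mem_nhdsGT hc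
  obtain ⟨y, hy, hyc⟩ := (h3.and h4).exists
  refine ⟨y, hyc, ?_⟩
  rw [slope_def_field] at hy
  have h5 : 0 < y - x := sub_pos.2 hyc.1
  have := (div_pos_iff_of_pos_right h5).1 hy
  linarith

lemma aux_mono {f f' : ℝ → ℝ} {a b : ℝ} (hab : a ≤ b)
    (h : ∀ x ∈ Icc a b, HasDerivAt f (f' x) x) (h0 : ∀ x ∈ Ioo a b, 0 ≤ f' x) : f a ≤ f b := by
  have : MonotoneOn f (Icc a b) := by
    refine monotoneOn_of_hasDerivWithinAt_nonneg (f' := f') (convex_Icc a b)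
      (fun y hy ↦ (h y hy).continuousAt.continuousWithinAt)
      (fun y hy ↦ (h y (interior_subset hy)).hasDerivWithinAt) ?_
    intro x hx
    rw [interior_Icc] at hx
    exact h0 x hx
  exact this (left_mem_Icc.2 hab) (right_mem_Icc.2 hab) hab

lemma aux_L {β F G : ℝ → ℝ} {a m b : ℝ} (ham : a < m) (hmb : m < b)
    (hF : ∀ x ∈ Icc a b, HasDerivAt F (β x) x)
    (hG : ∀ x ∈ Icc a b, HasDerivAt G (x * β x) x)
    (h0 : ∀ x ∈ Ioo a b, 0 ≤ β x) (hm : F a < F m) :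
    G b - G a < b * (F b - F a) := by
  have h1 := aux_mono (f := fun x => m * F x - G x) (f' := fun x => m * β x - x * β x) ham.le
    (fun x hx => ((hF x ⟨hx.1, hx.2.trans hmb.le⟩).const_mul m).sub (hG x ⟨hx.1, hx.2.trans hmb.le⟩))
    (fun x hx => by
      have := h0 x ⟨hx.1, hx.2.trans hmb⟩
      have := mul_nonneg (sub_nonneg.2 hx.2.le) this
      linarith)
  have h2 := aux_mono (f := fun x => b * F x - G x) (f' := fun x => b * β x - x * β x) hmb.le
    (fun x hx => ((hF x ⟨ham.le.trans hx.1, hx.2⟩).const_mul b).sub (hG x ⟨ham.le.trans hx.1, hx.2⟩))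
    (fun x hx => by
      have := h0 x ⟨ham.trans hx.1, hx.2⟩
      have := mul_nonneg (sub_nonneg.2 hx.2.le) this
      linarith)
  nlinarith [mul_pos (sub_pos.2 hmb) (sub_pos.2 hm)]

lemma aux_R {β F G : ℝ → ℝ} {b c : ℝ} (hbc : b ≤ c)
    (hF : ∀ x ∈ Icc b c, HasDerivAt F (β x) x)
    (hG : ∀ x ∈ Icc b c, HasDerivAt G (x * β x) x)
    (h0 : ∀ x ∈ Ioo b c, 0 ≤ β x) :
    b * (F c - F b) ≤ G c - G b := by
  have h1 := aux_mono (f := fun x => G x - b * F x) (f' := fun x => x * β x - b * β x) hbc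
    (fun x hx => (hG x hx).sub ((hF x hx).const_mul b))
    (fun x hx => by
      have := mul_nonneg (sub_nonneg.2 hx.1.le) (h0 x hx)
      linarith)
  linarith

/-- determinant -/
def DD (F G : ℝ → ℝ) (a b c : ℝ) : ℝ := (F b - F a) * (G c - G a) - (G b - G a) * (F c - F a)

lemma aux_posD {β F G : ℝ → ℝ} {a b c : ℝ} (hab : a < b) (hbc : b < c)
    (hF : ∀ x ∈ Icc a c, HasDerivAt F (β x) x)
    (hG : ∀ x ∈ Icc a c, HasDerivAt G (x * β x) x)
    (h0 : ∀ x ∈ Ioo a c, 0 ≤ β x) (hm : StrictMonoOn F (Icc a c)) :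
    0 < DD F G a b c := by
  have hL := aux_L (m := (a+b)/2) (by linarith) (by linarith)
    (fun x (hx : x ∈ Icc a b) => hF x ⟨hx.1, hx.2.trans hbc.le⟩)
    (fun x hx => hG x ⟨hx.1, hx.2.trans hbc.le⟩)
    (fun x hx => h0 x ⟨hx.1, hx.2.trans hbc⟩)
    (hm ⟨by linarith, by linarith⟩ ⟨by linarith, by linarith⟩ (by linarith))
  have hR := aux_R hbc.le (fun x hx => hF x ⟨hab.le.trans hx.1, hx.2⟩)
    (fun x hx => hG x ⟨hab.le.trans hx.1, hx.2⟩)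
    (fun x hx => h0 x ⟨hab.trans hx.1, hx.2⟩)
  have h1 : F a < F b := hm ⟨by linarith, by linarith⟩ ⟨by linarith, by linarith⟩ (by linarith)
  have h2 : F b < F c := hm ⟨by linarith, by linarith⟩ ⟨by linarith, by linarith⟩ (by linarith)
  unfold DD
  nlinarith [mul_nonneg (sub_pos.2 h1).le (sub_nonneg.2 hR),
    mul_pos (sub_pos.2 h2) (sub_pos.2 hL)]

lemma DD_neg (F G : ℝ → ℝ) (a b c : ℝ) :
    DD (fun x => - F x) (fun x => - G x) a b c = DD F G a b c := by
  unfold DD; ring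

lemma aux_A0 {β F G : ℝ → ℝ} {a b c : ℝ} (hab : a < b) (hbc : b < c)
    (hF : ∀ x ∈ Icc a c, HasDerivAt F (β x) x)
    (hG : ∀ x ∈ Icc a c, HasDerivAt G (x * β x) x)
    (hm : StrictMonoOn F (Icc a c)) :
    0 < DD F G a b c := by
  refine aux_posD hab hbc hF hG ?_ hm
  intro x hx
  by_contra! hneg
  obtain ⟨y, hy, hxy⟩ := aux_slope (hF x ⟨hx.1.le, hx.2.le⟩).neg (by linarith) hx.2
  have := hm ⟨hx.1.le, hx.2.le⟩ ⟨hx.1.le.trans hy.1.le, hy.2.le⟩ hy.1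
  simp only [Pi.neg_apply] at hxy
  linarith

lemma aux_A {β F G : ℝ → ℝ} {a b c : ℝ} (hab : a < b) (hbc : b < c)
    (hF : ∀ x ∈ Icc a c, HasDerivAt F (β x) x)
    (hG : ∀ x ∈ Icc a c, HasDerivAt G (x * β x) x)
    (hi : InjOn F (Icc a c)) :
    0 < DD F G a b c := by
  rcases ContinuousOn.strictMonoOn_of_injOn_Icc' (hab.trans hbc).le
    (fun x hx => (hF x hx).continuousAt.continuousWithinAt) hi with h | h
  · exact aux_A0 hab hbc hF hG h
  · rw [← DD_neg]
    refine aux_A0 (β := fun x => - β x) hab hbc (fun x hx => (hF x hx).neg)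
      (fun x hx => ?_) (fun x hx y hy hxy => neg_lt_neg (h hx hy hxy))
    have h9 := (hG x hx).neg
    rw [← mul_neg] at h9
    exact h9

lemma aux_B {β F G : ℝ → ℝ} {J : Set ℝ} (hJo : IsOpen J) (hJc : J.OrdConnected)
    (hβ : ContinuousOn β J)
    (hF : ∀ x ∈ J, HasDerivAt F (β x) x)
    (hG : ∀ x ∈ J, HasDerivAt G (x * β x) x)
    {p q : ℝ} (hp : p ∈ J) (hq : q ∈ J) (hpq : p < q) (hp0 : 0 < β p) (hq0 : β q < 0) :
    ∃ a ∈ J, ∃ b ∈ J, ∃ c ∈ J, a < b ∧ b < c ∧ DD F G a b c = 0 := by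
  have hsub : Icc p q ⊆ J := hJc.out hp hq
  -- positivity near p
  obtain ⟨δ, hpδ, hδq, hδ⟩ : ∃ d, p < d ∧ d < q ∧ ∀ x ∈ Icc p d, 0 < β x := by
    have hev : ∀ᶠ x in 𝓝 p, 0 < β x :=
      ((hβ.continuousAt (hJo.mem_nhds hp)).eventually (lt_mem_nhds hp0))
    obtain ⟨ε, hε, h⟩ := Metric.eventually_nhds_iff.1 hev
    refine ⟨p + min (ε/2) ((q-p)/2), ?_, ?_, ?_⟩
    · have : 0 < min (ε/2) ((q-p)/2) := lt_min (by linarith) (by linarith)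
      linarith
    · have := min_le_right (ε/2) ((q-p)/2)
      linarith
    · intro x hx
      apply h
      rw [Real.dist_eq, abs_lt]
      have := min_le_left (ε/2) ((q-p)/2)
      constructor <;> linarith [hx.1, hx.2]
  have hδsub : Icc p δ ⊆ J := fun x hx => hsub ⟨hx.1, hx.2.trans hδq.le⟩
  have hmono : StrictMonoOn F (Icc p δ) := by
    refine strictMonoOn_of_hasDerivWithinAt_pos (f' := β) (convex_Icc p δ)
      (fun y hy ↦ (hF y (hδsub hy)).continuousAt.continuousWithinAt)
      (fun y hy ↦ (hF y (hδsub (interior_subset hy))).hasDerivWithinAt) ?_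
    intro x hx
    exact hδ x (interior_subset hx)
  -- first negative
  let S : Set ℝ := {x | x ∈ Icc p q ∧ β x < 0}
  have hSne : S.Nonempty := ⟨q, ⟨hpq.le, le_rfl⟩, hq0⟩
  have hSb : BddBelow S := ⟨p, fun x hx => hx.1.1⟩
  set c := sInf S with hc
  have hcδ : δ ≤ c := le_csInf hSne (fun x hx => by
    by_contra! h
    exact absurd hx.2 (not_lt.2 (hδ x ⟨hx.1.1, h.le⟩).le))
  have hcq : c ≤ q := csInf_le hSb ⟨⟨hpq.le, le_rfl⟩, hq0⟩
  have hcJ : c ∈ J := hsub ⟨by linarith, hcq⟩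
  have hcsub : Icc p c ⊆ J := fun x hx => hsub ⟨hx.1, hx.2.trans hcq⟩
  have hE : G c - G p < c * (F c - F p) := by
    refine aux_L (m := (p + δ)/2) (β := β) (by linarith) (by linarith)
      (fun x hx => hF x (hcsub hx)) (fun x hx => hG x (hcsub hx)) ?_
      (hmono ⟨by linarith, by linarith⟩ ⟨by linarith, by linarith⟩ (by linarith))
    intro x hx
    by_contra! h
    exact absurd (csInf_le hSb (show x ∈ S from ⟨⟨hx.1.le, hx.2.le.trans hcq⟩, h⟩)) (not_le.2 hx.2)
  -- a negative point near c
  obtain ⟨r, hrS, hrE⟩ : ∃ r ∈ S, G r - G p < r * (F r - F p) := by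
    have hcl : c ∈ closure S := csInf_mem_closure hSne hSb
    have hFc := (hF c hcJ).continuousAt
    have hGc := (hG c hcJ).continuousAt
    have hev : ∀ᶠ x in 𝓝 c, G x - G p < x * (F x - F p) :=
      ContinuousAt.eventually_lt (hGc.sub continuousAt_const)
        (continuousAt_id.mul (hFc.sub continuousAt_const)) hE
    obtain ⟨r, h1, h2⟩ := mem_closure_iff_nhds.1 hcl _ hev
    exact ⟨r, h2, h1⟩
  have hrJ : r ∈ J := hsub hrS.1
  have hδr : δ ≤ r := hcδ.trans (csInf_le hSb hrS)
  -- u slightly right of r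
  obtain ⟨w, hrw, hwJ⟩ : ∃ w, r < w ∧ w ∈ J := by
    obtain ⟨ε, hε, h⟩ := Metric.isOpen_iff.1 hJo r hrJ
    refine ⟨r + ε/2, by linarith, h ?_⟩
    rw [Metric.mem_ball, Real.dist_eq, abs_lt]
    constructor <;> linarith
  have hder : HasDerivAt (fun u => -DD F G p r u)
      (-((F r - F p) * (r * β r) - (G r - G p) * β r)) r := by
    unfold DD
    exact ((((hG r hrJ).sub_const (G p)).const_mul _).sub
      (((hF r hrJ).sub_const (F p)).const_mul _)).neg
  obtain ⟨u, hu, hDu⟩ := aux_slope hder (by nlinarith [hrS.2, hrE]) hrw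
  have hDr : DD F G p r r = 0 := by unfold DD; ring
  have hDu' : DD F G p r u < 0 := by
    simp only [hDr] at hDu; linarith
  have hDp : 0 < DD F G p ((p+δ)/2) δ := aux_posD (β := β) (by linarith) (by linarith)
    (fun x hx => hF x (hδsub hx)) (fun x hx => hG x (hδsub hx))
    (fun x hx => (hδ x ⟨hx.1.le, hx.2.le⟩).le) hmono
  have hpw : Icc p w ⊆ J := hJc.out hp hwJ
  -- IVT
  let m := (p+δ)/2
  let b : ℝ → ℝ := fun τ => m + τ * (r - m)
  let d : ℝ → ℝ := fun τ => δ + τ * (u - δ)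
  have hpm : p < m := by simp only [m]; linarith
  have hmδ : m < δ := by simp only [m]; linarith
  have hb : ∀ τ ∈ Icc (0:ℝ) 1, p < b τ ∧ b τ < d τ ∧ d τ < w := by
    intro τ hτ
    have h1 : 0 ≤ τ := hτ.1
    have h2 : 0 ≤ 1 - τ := sub_nonneg.2 hτ.2
    simp only [b, d]
    refine ⟨?_, ?_, ?_⟩
    · nlinarith [mul_nonneg h1 (by linarith : 0 ≤ r - m)]
    · rcases h1.eq_or_lt with h | h
      · rw [← h]; linarith
      · nlinarith [mul_nonneg h2 (by linarith : 0 ≤ δ - m), mul_pos h (sub_pos.2 hu.1)]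
    · nlinarith [mul_nonneg h2 (by linarith [hu.1] : 0 ≤ u - δ), hu.2]
  have hcont : ContinuousOn (fun τ => DD F G p (b τ) (d τ)) (Icc 0 1) := by
    intro τ hτ
    obtain ⟨h1, h2, h3⟩ := hb τ hτ
    have hbJ : b τ ∈ J := hpw ⟨by linarith, by linarith⟩
    have hdJ : d τ ∈ J := hpw ⟨by linarith, by linarith⟩
    have cb : ContinuousAt b τ := by simp only [b]; fun_prop
    have cd : ContinuousAt d τ := by simp only [d]; fun_prop
    have k1 : ContinuousAt (fun τ => F (b τ)) τ := ContinuousAt.comp (hF _ hbJ).continuousAt cb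
    have k2 : ContinuousAt (fun τ => G (b τ)) τ := ContinuousAt.comp (hG _ hbJ).continuousAt cb
    have k3 : ContinuousAt (fun τ => F (d τ)) τ := ContinuousAt.comp (hF _ hdJ).continuousAt cd
    have k4 : ContinuousAt (fun τ => G (d τ)) τ := ContinuousAt.comp (hG _ hdJ).continuousAt cd
    unfold DD
    exact (((k1.sub continuousAt_const).mul (k4.sub continuousAt_const)).sub
      ((k2.sub continuousAt_const).mul (k3.sub continuousAt_const))).continuousWithinAt
  have hb1 : b 1 = r := by simp [b]
  have hd1 : d 1 = u := by simp [d]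
  have hb0 : b 0 = m := by simp [b]
  have hd0 : d 0 = δ := by simp [d]
  obtain ⟨τ, hτ, h0⟩ := intermediate_value_Icc' zero_le_one hcont
    (show (0:ℝ) ∈ Icc _ _ from ⟨by rw [hb1, hd1]; exact hDu'.le, by rw [hb0, hd0]; exact hDp.le⟩)
  obtain ⟨h1, h2, h3⟩ := hb τ hτ
  exact ⟨p, hp, b τ, hpw ⟨by linarith, by linarith⟩, d τ, hpw ⟨by linarith, by linarith⟩, h1, h2, h0⟩

lemma aux_ftc {f : ℝ → ℝ} {J : Set ℝ} (hJo : IsOpen J) (hJc : J.OrdConnected)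
    (hf : ContinuousOn f J) {o : ℝ} (ho : o ∈ J) :
    (∀ x ∈ J, HasDerivAt (fun t => ∫ y in o..t, f y) (f x) x) ∧
    (∀ s ∈ J, ∀ t ∈ J, ∫ y in s..t, f y = (∫ y in o..t, f y) - ∫ y in o..s, f y) := by
  have hint : ∀ s ∈ J, ∀ t ∈ J, IntervalIntegrable f MeasureTheory.volume s t := fun s hs t ht =>
    (hf.mono (hJc.uIcc_subset hs ht)).intervalIntegrable
  refine ⟨fun x hx => ?_, fun s hs t ht => ?_⟩
  · exact intervalIntegral.integral_hasDerivAt_right (hint o ho x hx)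
      (hf.stronglyMeasurableAtFilter hJo x hx) (hf.continuousAt (hJo.mem_nhds hx))
  · rw [intervalIntegral.integral_interval_sub_left (hint o ho t ht) (hint o ho s hs)]

lemma aux_span {a b c d : ℝ} (h1 : ((a, b) : ℝ × ℝ) ≠ 0) (h2 : ((c, d) : ℝ × ℝ) ≠ 0) :
    Submodule.span ℝ {((a, b) : ℝ × ℝ)} = Submodule.span ℝ {((c, d) : ℝ × ℝ)} ↔
      a * d - b * c = 0 := by
  constructor
  · intro h
    have : ((a, b) : ℝ × ℝ) ∈ Submodule.span ℝ {((c, d) : ℝ × ℝ)} :=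
      h ▸ Submodule.mem_span_singleton_self _
    obtain ⟨k, hk⟩ := Submodule.mem_span_singleton.1 this
    simp only [Prod.smul_mk, smul_eq_mul, Prod.mk.injEq] at hk
    rw [← hk.1, ← hk.2]; ring
  · have key : ∀ a b c d : ℝ, ((c, d) : ℝ × ℝ) ≠ 0 → a * d - b * c = 0 →
        Submodule.span ℝ {((a, b) : ℝ × ℝ)} ≤ Submodule.span ℝ {((c, d) : ℝ × ℝ)} := by
      intro a b c d h2 h
      rw [Submodule.span_singleton_le_iff_mem, Submodule.mem_span_singleton]
      by_cases hc : c = 0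
      · have hd : d ≠ 0 := fun hd => h2 (by simp [hc, hd])
        refine ⟨b / d, ?_⟩
        have ha : a = 0 := by
          subst hc
          simpa [hd] using h
        simp [hc, ha, hd]
      · refine ⟨a / c, ?_⟩
        ext
        · simp [hc]
        · simp only [Prod.smul_mk, smul_eq_mul]
          field_simp
          linarith
    intro h
    exact le_antisymm (key a b c d h2 h) (key c d a b h1 (by linarith))

theorem stmt14 (J : Set ℝ) (hJo : IsOpen J) (hJc : J.OrdConnected)
    (β : ℝ → ℝ) (hβ : ContinuousOn β J)
    (hv : ∀ s ∈ J, ∀ t ∈ J, s ≠ t →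
      (((∫ x in s..t, β x), (∫ x in s..t, x * β x)) : ℝ × ℝ) ≠ 0) :
    (∀ s ∈ J, ∀ t ∈ J, s < t → (∫ x in s..t, β x) ≠ 0) ↔
      (∀ s ∈ J, ∀ t₁ ∈ J \ {s}, ∀ t₂ ∈ J \ {s},
        Submodule.span ℝ {(((∫ x in s..t₁, β x), (∫ x in s..t₁, x * β x)) : ℝ × ℝ)} =
          Submodule.span ℝ {(((∫ x in s..t₂, β x), (∫ x in s..t₂, x * β x)) : ℝ × ℝ)} →
        t₁ = t₂) := by
  rcases J.eq_empty_or_nonempty with rfl | ⟨o, ho⟩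
  · simp
  obtain ⟨hF, hFi⟩ := aux_ftc hJo hJc hβ ho
  obtain ⟨hG, hGi⟩ := aux_ftc (f := fun x => x * β x) hJo hJc (continuousOn_id.mul hβ) ho
  set F : ℝ → ℝ := fun t => ∫ y in o..t, β y with hFdef
  set G : ℝ → ℝ := fun t => ∫ y in o..t, y * β y with hGdef
  have hspan : ∀ s ∈ J, ∀ t₁ ∈ J, ∀ t₂ ∈ J, t₁ ≠ s → t₂ ≠ s →
      (Submodule.span ℝ {(((∫ x in s..t₁, β x), (∫ x in s..t₁, x * β x)) : ℝ × ℝ)} =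
          Submodule.span ℝ {(((∫ x in s..t₂, β x), (∫ x in s..t₂, x * β x)) : ℝ × ℝ)} ↔
        DD F G s t₁ t₂ = 0) := by
    intro s hs t₁ h1 t₂ h2 n1 n2
    rw [aux_span (hv s hs t₁ h1 n1.symm) (hv s hs t₂ h2 n2.symm), hFi s hs t₁ h1, hFi s hs t₂ h2,
      hGi s hs t₁ h1, hGi s hs t₂ h2]
    rfl
  constructor
  · intro ha s hs t₁ h1 t₂ h2 h
    rw [hspan s hs t₁ h1.1 t₂ h2.1 h1.2 h2.2] at h
    by_contra hne
    have hinj : InjOn F J := by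
      intro x hx y hy hxy
      by_contra hn
      rcases lt_or_gt_of_ne hn with hl | hl
      · exact ha x hx y hy hl (by rw [hFi x hx y hy]; exact sub_eq_zero.2 hxy.symm)
      · exact ha y hy x hx hl (by rw [hFi y hy x hx]; exact sub_eq_zero.2 hxy)
    have key : ∀ a ∈ J, ∀ b, ∀ c ∈ J, a < b → b < c → 0 < DD F G a b c := by
      intro a ha b c hc hab hbc
      have hs := hJc.out ha hc
      exact aux_A hab hbc (fun x hx => hF x (hs hx)) (fun x hx => hG x (hs hx)) (hinj.mono hs)
    have n1 : t₁ ≠ s := h1.2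
    have n2 : t₂ ≠ s := h2.2
    have e1 : DD F G s t₂ t₁ = - DD F G s t₁ t₂ := by unfold DD; ring
    have e2 : DD F G t₁ s t₂ = - DD F G s t₁ t₂ := by unfold DD; ring
    have e3 : DD F G t₁ t₂ s = DD F G s t₁ t₂ := by unfold DD; ring
    have e4 : DD F G t₂ s t₁ = DD F G s t₁ t₂ := by unfold DD; ring
    have e5 : DD F G t₂ t₁ s = - DD F G s t₁ t₂ := by unfold DD; ring
    rcases lt_or_gt_of_ne n1 with a1 | a1 <;> rcases lt_or_gt_of_ne n2 with a2 | a2 <;>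
      rcases lt_or_gt_of_ne hne with a3 | a3
    · have := key t₁ h1.1 t₂ s hs a3 a2; linarith
    · have := key t₂ h2.1 t₁ s hs a3 a1; linarith
    · have := key t₁ h1.1 s t₂ h2.1 a1 a2; linarith
    · linarith
    · linarith
    · have := key t₂ h2.1 s t₁ h1.1 a2 a1; linarith
    · have := key s hs t₁ t₂ h2.1 a1 a3; linarith
    · have := key s hs t₂ t₁ h1.1 a2 a3; linarith
  · intro hb s hs t ht hst h0
    have hno : ∀ a ∈ J, ∀ b ∈ J, ∀ c ∈ J, a < b → b < c → DD F G a b c ≠ 0 := by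
      intro a ha b hbJ c hc hab hbc h
      have := hb a ha b ⟨hbJ, hab.ne'⟩ c ⟨hc, (hab.trans hbc).ne'⟩
        ((hspan a ha b hbJ c hc hab.ne' (hab.trans hbc).ne').2 h)
      exact hbc.ne this
    have hsub := hJc.out hs ht
    have hzero : (∀ x ∈ Icc s t, β x = 0) → False := by
      intro hz
      apply hv s hs t ht hst.ne
      have : (∫ x in s..t, x * β x) = ∫ x in s..t, (0:ℝ) := by
        apply intervalIntegral.integral_congr
        intro x hx
        rw [uIcc_of_le hst.le] at hx
        simp [hz x hx]
      rw [h0, this]; simp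
    have hpos : ∃ p ∈ Icc s t, 0 < β p := by
      by_contra! hn
      apply hzero
      intro x hx
      by_contra hx0
      have := intervalIntegral.integral_pos (f := fun x => - β x) hst (hβ.mono hsub).neg
        (fun y hy => by have := hn y ⟨hy.1.le, hy.2⟩; linarith)
        ⟨x, hx, by have := lt_of_le_of_ne (hn x hx) hx0; linarith⟩
      rw [intervalIntegral.integral_neg, h0] at this
      simp at this
    have hneg : ∃ p ∈ Icc s t, β p < 0 := by
      by_contra! hn
      apply hzero
      intro x hx
      by_contra hx0
      have := intervalIntegral.integral_pos (f := β) hst (hβ.mono hsub)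
        (fun y hy => hn y ⟨hy.1.le, hy.2⟩)
        ⟨x, hx, lt_of_le_of_ne (hn x hx) (Ne.symm hx0)⟩
      linarith
    obtain ⟨p, hp, hp0⟩ := hpos
    obtain ⟨q, hq, hq0⟩ := hneg
    have hpq : p ≠ q := by rintro rfl; linarith
    rcases lt_or_gt_of_ne hpq with hl | hl
    · obtain ⟨a, ha, b, hb', c, hc, h1, h2, h3⟩ :=
        aux_B hJo hJc hβ hF hG (hsub hp) (hsub hq) hl hp0 hq0
      exact hno a ha b hb' c hc h1 h2 h3
    · obtain ⟨a, ha, b, hb', c, hc, h1, h2, h3⟩ :=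
        aux_B (β := fun x => - β x) (F := fun x => - F x) (G := fun x => - G x) hJo hJc hβ.neg
          (fun x hx => (hF x hx).neg)
          (fun x hx => by
            have h9 := (hG x hx).neg
            rw [← mul_neg] at h9
            exact h9) (hsub hq) (hsub hp) hl (by linarith) (by linarith)
      rw [DD_neg] at h3
      exact hno a ha b hb' c hc h1 h2 h3
end

section
/- Let J ⊆ ℝ be an open interval and β : J → ℝ continuous with β(x) ≠ 0 for all x ∈ J. Then for all s ≠ t in J the integral ∫ₛᵗ β(x) dx is nonzero, and the function B : J × J → ℝ defined by B(s,t) = (∫ₛᵗ x·β(x) dx)/(∫ₛᵗ β(x) dx) for s ≠ t and B(s,s) = s is of class C¹ on J × J and is strictly increasing in each argument when the other argument is held fixed. -/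
open Set Filter Topology MeasureTheory

/-- Weighted averages of `β` along the segment from `s` to `t`. -/
noncomputable def wAvg (β w : ℝ → ℝ) (s t : ℝ) : ℝ :=
  ∫ u in (0:ℝ)..1, w u * β (s + (t - s) * u)

lemma seg_mem {J : Set ℝ} (hJc : J.OrdConnected) {s t u : ℝ} (hs : s ∈ J) (ht : t ∈ J)
    (hu : u ∈ Icc (0:ℝ) 1) : s + (t - s) * u ∈ J := by
  have h := hJc.convex.add_smul_sub_mem hs ht hu
  simpa [smul_eq_mul, mul_comm] using h

lemma seg_contOn {J : Set ℝ} (hJc : J.OrdConnected) {β w : ℝ → ℝ} (hβ : ContinuousOn β J)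
    (hw : Continuous w) {s t : ℝ} (hs : s ∈ J) (ht : t ∈ J) :
    ContinuousOn (fun u => w u * β (s + (t - s) * u)) (Icc 0 1) := by
  refine hw.continuousOn.mul (hβ.comp (by fun_prop) ?_)
  intro u hu
  exact seg_mem hJc hs ht hu

lemma seg_int {J : Set ℝ} (hJc : J.OrdConnected) {β w : ℝ → ℝ} (hβ : ContinuousOn β J)
    (hw : Continuous w) {s t : ℝ} (hs : s ∈ J) (ht : t ∈ J) :
    IntervalIntegrable (fun u => w u * β (s + (t - s) * u)) volume 0 1 := by
  apply ContinuousOn.intervalIntegrable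
  rw [uIcc_of_le zero_le_one]
  exact seg_contOn hJc hβ hw hs ht

lemma wAvg_contOn {J : Set ℝ} (hJc : J.OrdConnected) {β w : ℝ → ℝ} (hβ : ContinuousOn β J)
    (hw : Continuous w) :
    ContinuousOn (fun p : ℝ × ℝ => wAvg β w p.1 p.2) (J ×ˢ J) := by
  rw [continuousOn_iff_continuous_domRestrict]
  have key : Continuous (fun p : ↥(J ×ˢ J) => ∫ u in (0:ℝ)..1,
      w u * β (p.1.1 + (p.1.2 - p.1.1) * max 0 (min 1 u))) := by
    apply intervalIntegral.continuous_parametric_intervalIntegral_of_continuous'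
    refine (hw.comp continuous_snd).mul ?_
    refine hβ.comp_continuous (f := fun q : ↥(J ×ˢ J) × ℝ =>
      (q.1.1.1 + (q.1.1.2 - q.1.1.1) * max 0 (min 1 q.2))) (by fun_prop) ?_
    intro q
    exact seg_mem hJc q.1.2.1 q.1.2.2 ⟨le_max_left _ _, by simp⟩
  convert key using 2 with p
  simp only [Set.domRestrict, wAvg]
  apply intervalIntegral.integral_congr
  intro u hu
  rw [uIcc_of_le zero_le_one] at hu
  simp [min_eq_right hu.2, max_eq_right hu.1]

lemma beta_mul_pos {J : Set ℝ} (hJc : J.OrdConnected) {β : ℝ → ℝ} (hβ : ContinuousOn β J)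
    (hne : ∀ x ∈ J, β x ≠ 0) {x y : ℝ} (hx : x ∈ J) (hy : y ∈ J) : 0 < β x * β y := by
  by_contra hcon
  have hcon : β x * β y ≤ 0 := not_lt.1 hcon
  have hp : IsPreconnected J := hJc.isPreconnected
  rcases mul_nonpos_iff.1 hcon with ⟨h1, h2⟩ | ⟨h1, h2⟩
  · obtain ⟨z, hz, h⟩ := hp.intermediate_value hy hx hβ (show (0:ℝ) ∈ Icc _ _ from ⟨h2, h1⟩)
    exact hne z hz h
  · obtain ⟨z, hz, h⟩ := hp.intermediate_value hx hy hβ (show (0:ℝ) ∈ Icc _ _ from ⟨h1, h2⟩)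
    exact hne z hz h

lemma wAvg_pos {J : Set ℝ} (hJc : J.OrdConnected) {β w : ℝ → ℝ} (hβ : ContinuousOn β J)
    (hne : ∀ x ∈ J, β x ≠ 0) (hw : Continuous w) (hwp : ∀ u ∈ Ioo (0:ℝ) 1, 0 < w u)
    {x s t : ℝ} (hx : x ∈ J) (hs : s ∈ J) (ht : t ∈ J) : 0 < β x * wAvg β w s t := by
  unfold wAvg
  rw [← intervalIntegral.integral_const_mul]
  refine intervalIntegral.intervalIntegral_pos_of_pos_on
    ((seg_int hJc hβ hw hs ht).const_mul _) ?_ zero_lt_one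
  intro u hu
  have := beta_mul_pos hJc hβ hne hx (seg_mem hJc hs ht (Ioo_subset_Icc_self hu))
  have := mul_pos (hwp u hu) this
  linarith

lemma int_eq (β : ℝ → ℝ) (s t : ℝ) :
    ∫ x in s..t, β x = (t - s) * wAvg β (fun _ => 1) s t := by
  have := intervalIntegral.smul_integral_comp_add_mul (a := 0) (b := 1) β (t - s) s
  simp at this
  simp [wAvg]

lemma int_id_eq {J : Set ℝ} (hJc : J.OrdConnected) {β : ℝ → ℝ} (hβ : ContinuousOn β J)
    {s t : ℝ} (hs : s ∈ J) (ht : t ∈ J) :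
    ∫ x in s..t, x * β x = (t - s) * (t * wAvg β (fun _ => 1) s t
      - (t - s) * wAvg β (fun u => 1 - u) s t) := by
  have h := intervalIntegral.smul_integral_comp_add_mul (a := 0) (b := 1)
    (fun x => x * β x) (t - s) s
  simp only [mul_zero, add_zero, mul_one, add_sub_cancel, smul_eq_mul] at h
  rw [← h]
  unfold wAvg
  congr 1
  rw [← intervalIntegral.integral_const_mul, ← intervalIntegral.integral_const_mul,
    ← intervalIntegral.integral_sub]
  · apply intervalIntegral.integral_congr
    intro u _
    simp only
    ring
  · exact (seg_int hJc hβ (by fun_prop) hs ht).const_mul _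
  · exact (seg_int hJc hβ (by fun_prop) hs ht).const_mul _

/-- The partial derivative of the barycentric map in its second argument. -/
noncomputable def parB (β : ℝ → ℝ) (s t : ℝ) : ℝ :=
  β t * wAvg β (fun u => 1 - u) s t / (wAvg β (fun _ => 1) s t) ^ 2

section
variable {J : Set ℝ} (hJo : IsOpen J) (hJc : J.OrdConnected)
    {β : ℝ → ℝ} (hβ : ContinuousOn β J) (hne : ∀ x ∈ J, β x ≠ 0)
    {B : ℝ → ℝ → ℝ}
    (hB : ∀ s t : ℝ,
      B s t = if s = t then s else (∫ x in s..t, x * β x) / (∫ x in s..t, β x))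
include hJc hβ hne

lemma m_ne {s t : ℝ} (hs : s ∈ J) (ht : t ∈ J) : wAvg β (fun _ => 1) s t ≠ 0 :=
  right_ne_zero_of_mul
    (wAvg_pos hJc hβ hne (w := fun _ => 1) (by fun_prop) (by simp) hs hs ht).ne'

lemma parB_pos {s t : ℝ} (hs : s ∈ J) (ht : t ∈ J) : 0 < parB β s t := by
  have h := m_ne hJc hβ hne hs ht
  have := wAvg_pos hJc hβ hne (w := fun u => 1 - u) (by fun_prop)
    (by intro u hu; simpa using hu.2) ht hs ht
  unfold parB
  positivity

lemma parB_contOn : ContinuousOn (fun p : ℝ × ℝ => parB β p.1 p.2) (J ×ˢ J) := by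
  unfold parB
  refine ContinuousOn.div (ContinuousOn.mul ?_ ?_) (ContinuousOn.pow ?_ 2) ?_
  · exact hβ.comp continuousOn_snd (fun p hp => hp.2)
  · exact wAvg_contOn hJc hβ (by fun_prop)
  · exact wAvg_contOn hJc hβ (by fun_prop)
  · intro p hp
    exact pow_ne_zero 2 (m_ne hJc hβ hne hp.1 hp.2)

include hB

lemma B_eq {s t : ℝ} (hs : s ∈ J) (ht : t ∈ J) :
    B s t = t - (t - s) * (wAvg β (fun u => 1 - u) s t / wAvg β (fun _ => 1) s t) := by
  rw [hB]
  split_ifs with h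
  · subst h; simp
  · have h1 := m_ne hJc hβ hne hs ht
    have h2 : t - s ≠ 0 := sub_ne_zero.2 (Ne.symm h)
    rw [int_id_eq hJc hβ hs ht, int_eq]
    field_simp

include hJo

lemma B_deriv {s t : ℝ} (hs : s ∈ J) (ht : t ∈ J) :
    HasDerivAt (fun t => B s t) (parB β s t) t := by
  have hJt : J ∈ 𝓝 t := hJo.mem_nhds ht
  by_cases hst : s = t
  · subst hst
    rw [hasDerivAt_iff_tendsto_slope]
    have hg : ContinuousAt (fun t => 1 - wAvg β (fun u => 1 - u) s t / wAvg β (fun _ => 1) s t) s := by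
      have hmap : MapsTo (fun t : ℝ => (s, t)) J (J ×ˢ J) := fun t ht => ⟨hs, ht⟩
      refine ContinuousOn.continuousAt (s := J) ?_ hJt
      refine continuousOn_const.sub (ContinuousOn.div ?_ ?_ ?_)
      · exact (wAvg_contOn hJc hβ (w := fun u => 1 - u) (by fun_prop)).comp (by fun_prop) hmap
      · exact (wAvg_contOn hJc hβ (w := fun _ => 1) (by fun_prop)).comp (by fun_prop) hmap
      · intro t ht
        exact m_ne hJc hβ hne hs ht
    have hv : parB β s s = 1 - wAvg β (fun u => 1 - u) s s / wAvg β (fun _ => 1) s s := by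
      have := hne s hs
      have h1 : ∫ u in (0:ℝ)..1, (1 - u) = 1 / 2 := by
        rw [intervalIntegral.integral_sub (by simp) (by simp)]
        simp; norm_num
      simp only [parB, wAvg, sub_self, zero_mul, add_zero, intervalIntegral.integral_mul_const, h1]
      simp
      field_simp
      norm_num
    rw [hv]
    refine (hg.tendsto.mono_left nhdsWithin_le_nhds).congr' ?_
    filter_upwards [mem_nhdsWithin_of_mem_nhds hJt, self_mem_nhdsWithin] with x hx hxs
    have hxs' : x - s ≠ 0 := sub_ne_zero.2 hxs
    rw [slope_def_field, B_eq hJc hβ hne hB hs hx, B_eq hJc hβ hne hB hs hs]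
    simp only [sub_self, zero_mul, sub_zero]
    rw [eq_div_iff hxs']
    ring
  · have hβ2 : ContinuousOn (fun x => x * β x) J := continuousOn_id.mul hβ
    have hsub : uIcc s t ⊆ J := hJc.uIcc_subset hs ht
    have d1 := intervalIntegral.integral_hasDerivAt_right
      (hβ.mono hsub).intervalIntegrable (hβ.stronglyMeasurableAtFilter hJo t ht)
      (hβ.continuousAt hJt)
    have d2 := intervalIntegral.integral_hasDerivAt_right
      (hβ2.mono hsub).intervalIntegrable (hβ2.stronglyMeasurableAtFilter hJo t ht)
      (hβ2.continuousAt hJt)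
    have h1 := m_ne hJc hβ hne hs ht
    have h2 : t - s ≠ 0 := sub_ne_zero.2 (Ne.symm hst)
    have hI : ∫ x in s..t, β x ≠ 0 := by
      rw [int_eq]; exact mul_ne_zero h2 h1
    have d := d2.div d1 hI
    have hev : (fun t => B s t) =ᶠ[𝓝 t]
        ((fun u => ∫ x in s..u, x * β x) / fun u => ∫ x in s..u, β x) := by
      filter_upwards [isOpen_ne.mem_nhds (Ne.symm hst)] with x hx
      simp [hB s x, if_neg (Ne.symm hx)]
    refine (d.congr_of_eventuallyEq hev).congr_deriv ?_
    rw [int_id_eq hJc hβ hs ht, int_eq, parB]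
    field_simp
    ring

end

theorem stmt15 (J : Set ℝ) (hJo : IsOpen J) (hJc : J.OrdConnected)
    (β : ℝ → ℝ) (hβ : ContinuousOn β J) (hβne : ∀ x ∈ J, β x ≠ 0)
    (B : ℝ → ℝ → ℝ)
    (hB : ∀ s t : ℝ,
      B s t = if s = t then s else (∫ x in s..t, x * β x) / (∫ x in s..t, β x)) :
    (∀ s ∈ J, ∀ t ∈ J, s ≠ t → (∫ x in s..t, β x) ≠ 0) ∧
      ContDiffOn ℝ 1 (fun p : ℝ × ℝ => B p.1 p.2) (J ×ˢ J) ∧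
      (∀ t ∈ J, StrictMonoOn (fun s => B s t) J) ∧
      (∀ s ∈ J, StrictMonoOn (fun t => B s t) J) := by
  have hsymm : ∀ s t, B s t = B t s := by
    intro s t
    rw [hB s t, hB t s]
    by_cases h : s = t
    · subst h; rfl
    · rw [if_neg h, if_neg (Ne.symm h), intervalIntegral.integral_symm t s,
        intervalIntegral.integral_symm (f := β) t s, neg_div_neg_eq]
  have hd2 : ∀ s ∈ J, ∀ t ∈ J, HasDerivAt (fun t => B s t) (parB β s t) t :=
    fun s hs t ht => B_deriv hJo hJc hβ hβne hB hs ht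
  have hd1 : ∀ s ∈ J, ∀ t ∈ J, HasDerivAt (fun s => B s t) (parB β t s) s := by
    intro s hs t ht
    have := hd2 t ht s hs
    simpa only [hsymm t] using this
  have hmono : ∀ s ∈ J, StrictMonoOn (fun t => B s t) J := by
    intro s hs
    refine strictMonoOn_of_deriv_pos hJc.convex
      (fun t ht => (hd2 s hs t ht).continuousAt.continuousWithinAt) ?_
    intro t ht
    have ht := interior_subset ht
    rw [(hd2 s hs t ht).deriv]
    exact parB_pos hJc hβ hβne hs ht
  refine ⟨?_, ?_, ?_, hmono⟩
  · intro s hs t ht hst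
    rw [int_eq]
    exact mul_ne_zero (sub_ne_zero.2 (Ne.symm hst)) (m_ne hJc hβ hβne hs ht)
  · have hO : IsOpen (J ×ˢ J) := hJo.prod hJo
    have c2 := parB_contOn hJc hβ hβne
    have c1 : ContinuousOn (fun p : ℝ × ℝ => parB β p.2 p.1) (J ×ˢ J) :=
      c2.comp (f := fun p : ℝ × ℝ => (p.2, p.1)) (by fun_prop) (fun p hp => ⟨hp.2, hp.1⟩)
    let L : ℝ → ℝ →L[ℝ] ℝ := fun c => ContinuousLinearMap.toSpanSingleton ℝ c
    have hL : Continuous L := by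
      exact (ContinuousLinearMap.toSpanSingletonCLE (𝕜 := ℝ) (E := ℝ)).continuous
    have hf : ∀ p ∈ J ×ˢ J, HasFDerivAt (fun p : ℝ × ℝ => B p.1 p.2)
        ((L (parB β p.2 p.1)).coprod (L (parB β p.1 p.2))) p := by
      intro p hp
      refine (hasStrictFDerivAt_uncurry_coprod (𝕜 := ℝ) (u := p) (f := B)
        (f₁ := fun s t => L (parB β t s)) (f₂ := fun s t => L (parB β s t))
        ?_ ?_ ?_ ?_).hasFDerivAt
      · filter_upwards [hO.mem_nhds hp] with v hv
        exact (hd1 v.1 hv.1 v.2 hv.2).hasFDerivAt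
      · filter_upwards [hO.mem_nhds hp] with v hv
        exact (hd2 v.1 hv.1 v.2 hv.2).hasFDerivAt
      · exact hL.continuousAt.comp (c1.continuousAt (hO.mem_nhds hp))
      · exact hL.continuousAt.comp (c2.continuousAt (hO.mem_nhds hp))
    rw [show (1 : WithTop ℕ∞) = 0 + 1 from rfl,
      contDiffOn_succ_iff_hasFDerivWithinAt_of_uniqueDiffOn hO.uniqueDiffOn]
    refine ⟨by simp, fun p => (L (parB β p.2 p.1)).coprod (L (parB β p.1 p.2)), ?_,
      fun p hp => (hf p hp).hasFDerivWithinAt⟩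
    rw [contDiffOn_zero]
    have e : ∀ p : ℝ × ℝ, (L (parB β p.2 p.1)).coprod (L (parB β p.1 p.2)) =
        parB β p.2 p.1 • ContinuousLinearMap.fst ℝ ℝ ℝ
          + parB β p.1 p.2 • ContinuousLinearMap.snd ℝ ℝ ℝ := by
      intro p
      ext <;> simp [L]
    simp only [e]
    exact (c1.smul continuousOn_const).add (c2.smul continuousOn_const)
  · intro t ht
    have := hmono t ht
    simpa only [hsymm t] using this
end

section
/- Let T = (tᵢʲ)₁≤i,j≤2 be a real 2×2 matrix with det T > 0, let e₁, e₂ be the standard basis of ℝ² and set e′ᵢ = tᵢ¹e₁ + tᵢ²e₂ for i = 1, 2. Let J′ ⊆ ℝ be an interval on which t₁¹ + x′·t₂¹ > 0, let φ(x′) = (t₁² + x′·t₂²)/(t₁¹ + x′·t₂¹), let f be continuous on φ(J′), and define f′(x′) = (det T/(t₁¹ + x′·t₂¹)³)·f(φ(x′)) for x′ ∈ J′. Then for all a ≤ b in J′: ∫ₐᵇ f′(x′)·(e′₁ + x′·e′₂) dx′ = ∫_{φ(a)}^{φ(b)} f(x)·(e₁ + x·e₂) dx, as vectors in ℝ². 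-/
theorem stmt16 (t11 t12 t21 t22 : ℝ) (hdet : 0 < t11 * t22 - t12 * t21)
    (J' : Set ℝ) (hJ : J'.OrdConnected)
    (hpos : ∀ x' ∈ J', 0 < t11 + x' * t21)
    (f : ℝ → ℝ)
    (hf : ContinuousOn f ((fun x' => (t12 + x' * t22) / (t11 + x' * t21)) '' J'))
    (f' : ℝ → ℝ)
    (hf' : ∀ x' ∈ J', f' x' = ((t11 * t22 - t12 * t21) / (t11 + x' * t21) ^ 3) *
      f ((t12 + x' * t22) / (t11 + x' * t21))) :
    ∀ a ∈ J', ∀ b ∈ J', a ≤ b →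
      (∫ x' in a..b, f' x' • (((t11, t12) : ℝ × ℝ) + x' • ((t21, t22) : ℝ × ℝ)))
        = ∫ x in ((t12 + a * t22) / (t11 + a * t21))..((t12 + b * t22) / (t11 + b * t21)),
            f x • (((1, 0) : ℝ × ℝ) + x • ((0, 1) : ℝ × ℝ)) := by
  intro a ha b hb _
  have hsub : Set.uIcc a b ⊆ J' := hJ.uIcc_subset ha hb
  have key := intervalIntegral.integral_deriv_smul_comp' (a := a) (b := b)
    (f := fun x' => (t12 + x' * t22) / (t11 + x' * t21))
    (f' := fun x' => (t11 * t22 - t12 * t21) / (t11 + x' * t21) ^ 2)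
    (g := fun x => f x • (((1, 0) : ℝ × ℝ) + x • ((0, 1) : ℝ × ℝ))) ?_ ?_ ?_
  · rw [← key]
    refine intervalIntegral.integral_congr ?_
    intro x hx
    have h0 := (hpos x (hsub hx)).ne'
    simp only [hf' x (hsub hx), Function.comp]
    ext
    · simp
      field_simp
    · simp
      field_simp
  · intro x hx
    have h0 := (hpos x (hsub hx)).ne'
    have h1 : HasDerivAt (fun x : ℝ => t12 + x * t22) (1 * t22) x :=
      ((hasDerivAt_id x).mul_const t22).const_add t12
    have h2 : HasDerivAt (fun x : ℝ => t11 + x * t21) (1 * t21) x :=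
      ((hasDerivAt_id x).mul_const t21).const_add t11
    have h3 := h1.div h2 h0
    have e : (1 * t22 * (t11 + x * t21) - (t12 + x * t22) * (1 * t21)) / (t11 + x * t21) ^ 2
        = (t11 * t22 - t12 * t21) / (t11 + x * t21) ^ 2 := by
      congr 1
      ring
    rw [e] at h3
    exact h3
  · refine ContinuousOn.div (by fun_prop) (by fun_prop) ?_
    intro x hx
    exact pow_ne_zero 2 (hpos x (hsub hx)).ne'
  · exact (hf.mono (Set.image_mono hsub)).smul (by fun_prop)
end

section
/- Let J ⊆ ℝ be an open interval and β₁, β₂ : J → ℝ continuous with β₁(x) > 0 and β₂(x) > 0 for all x ∈ J. If the barycentric maps coincide, i.e. (∫ₛᵗ x·β₁(x) dx)/(∫ₛᵗ β₁(x) dx) = (∫ₛᵗ x·β₂(x) dx)/(∫ₛᵗ β₂(x) dx) for all s, t ∈ J with s < t, then there exists a constant c > 0 such that β₂(x) = c·β₁(x) for all x ∈ J. -/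
theorem aux17 (J : Set ℝ) (hJo : IsOpen J) (hJc : J.OrdConnected)
    (β₁ β₂ : ℝ → ℝ) (h1 : ContinuousOn β₁ J) (h2 : ContinuousOn β₂ J)
    (hid : ∀ s ∈ J, ∀ t ∈ J,
      (∫ x in s..t, x * β₁ x) * (∫ x in s..t, β₂ x) =
        (∫ x in s..t, x * β₂ x) * (∫ x in s..t, β₁ x))
    (s t : ℝ) (hs : s ∈ J) (ht : t ∈ J)
    (hF : (∫ x in s..t, β₁ x) ≠ 0)
    (hne : t * (∫ x in s..t, β₁ x) - (∫ x in s..t, x * β₁ x) ≠ 0) :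
    β₁ t * (∫ x in s..t, β₂ x) = β₂ t * (∫ x in s..t, β₁ x) := by
  have hd : ∀ f : ℝ → ℝ, ContinuousOn f J →
      HasDerivAt (fun u => ∫ x in s..u, f x) (f t) t := by
    intro f hf
    apply intervalIntegral.integral_hasDerivAt_right
    · exact (hf.mono (hJc.uIcc_subset hs ht)).intervalIntegrable
    · exact hf.stronglyMeasurableAtFilter hJo t ht
    · exact hf.continuousAt (hJo.mem_nhds ht)
  have hx1 : ContinuousOn (fun x => x * β₁ x) J := continuousOn_id.mul h1
  have hx2 : ContinuousOn (fun x => x * β₂ x) J := continuousOn_id.mul h2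
  have hA := (hd _ hx1).mul (hd _ h2)
  have hB := (hd _ hx2).mul (hd _ h1)
  have hE := hA.unique (hB.congr_of_eventuallyEq (by
    filter_upwards [hJo.mem_nhds ht] with u hu
    exact hid s hs u hu))
  have h0 := hid s hs t ht
  apply mul_left_cancel₀ hne
  generalize (∫ x in s..t, x * β₁ x) = G1 at *
  generalize (∫ x in s..t, x * β₂ x) = G2 at *
  generalize (∫ x in s..t, β₁ x) = F1 at *
  generalize (∫ x in s..t, β₂ x) = F2 at *
  linear_combination F1 * hE - β₁ t * h0

theorem stmt17 (J : Set ℝ) (hJo : IsOpen J) (hJc : J.OrdConnected)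
    (β₁ β₂ : ℝ → ℝ) (h1 : ContinuousOn β₁ J) (h2 : ContinuousOn β₂ J)
    (hp1 : ∀ x ∈ J, 0 < β₁ x) (hp2 : ∀ x ∈ J, 0 < β₂ x)
    (hbar : ∀ s ∈ J, ∀ t ∈ J, s < t →
      (∫ x in s..t, x * β₁ x) / (∫ x in s..t, β₁ x) =
        (∫ x in s..t, x * β₂ x) / (∫ x in s..t, β₂ x)) :
    ∃ c : ℝ, 0 < c ∧ ∀ x ∈ J, β₂ x = c * β₁ x := by
  have hI : ∀ f : ℝ → ℝ, ContinuousOn f J → ∀ s ∈ J, ∀ t ∈ J,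
      IntervalIntegrable f MeasureTheory.volume s t := fun f hf s hs t ht =>
    (hf.mono (hJc.uIcc_subset hs ht)).intervalIntegrable
  have hpos : ∀ f : ℝ → ℝ, ContinuousOn f J → ∀ s ∈ J, ∀ t ∈ J, s < t →
      (∀ x ∈ Set.Ioo s t, 0 < f x) → 0 < ∫ x in s..t, f x :=
    fun f hf s hs t ht hst h =>
      intervalIntegral.intervalIntegral_pos_of_pos_on (hI f hf s hs t ht) h hst
  have hin : ∀ s ∈ J, ∀ t ∈ J, ∀ x ∈ Set.Ioo s t, x ∈ J := fun s hs t ht x hx =>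
    hJc.out hs ht ⟨hx.1.le, hx.2.le⟩
  have hlt : ∀ s ∈ J, ∀ t ∈ J, s < t →
      (∫ x in s..t, x * β₁ x) * (∫ x in s..t, β₂ x) =
        (∫ x in s..t, x * β₂ x) * (∫ x in s..t, β₁ x) := by
    intro s hs t ht hst
    have a := hpos β₁ h1 s hs t ht hst fun x hx => hp1 x (hin s hs t ht x hx)
    have b := hpos β₂ h2 s hs t ht hst fun x hx => hp2 x (hin s hs t ht x hx)
    exact (div_eq_div_iff a.ne' b.ne').1 (hbar s hs t ht hst)
  have hid : ∀ s ∈ J, ∀ t ∈ J,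
      (∫ x in s..t, x * β₁ x) * (∫ x in s..t, β₂ x) =
        (∫ x in s..t, x * β₂ x) * (∫ x in s..t, β₁ x) := by
    intro s hs t ht
    rcases lt_trichotomy s t with h | h | h
    · exact hlt s hs t ht h
    · subst h; simp
    · have := hlt t ht s hs h
      simp only [intervalIntegral.integral_symm t s]
      linarith
  have hx1 : ContinuousOn (fun x => x * β₁ x) J := continuousOn_id.mul h1
  have key : ∀ s ∈ J, ∀ t ∈ J, s < t → β₂ s * β₁ t = β₂ t * β₁ s := by
    intro s hs t ht hst
    have a := hpos β₁ h1 s hs t ht hst fun x hx => hp1 x (hin s hs t ht x hx)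
    have lin : ∀ c : ℝ, ∫ x in s..t, (c * β₁ x - x * β₁ x) =
        c * (∫ x in s..t, β₁ x) - ∫ x in s..t, x * β₁ x := by
      intro c
      rw [intervalIntegral.integral_sub ((hI _ h1 s hs t ht).const_mul c) (hI _ hx1 s hs t ht),
        intervalIntegral.integral_const_mul]
    have p1 : 0 < t * (∫ x in s..t, β₁ x) - ∫ x in s..t, x * β₁ x := by
      rw [← lin]
      refine hpos _ ((continuousOn_const.mul h1).sub hx1) s hs t ht hst fun x hx => ?_
      show 0 < t * β₁ x - x * β₁ x
      rw [← sub_mul]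
      exact mul_pos (sub_pos.2 hx.2) (hp1 x (hin s hs t ht x hx))
    have p2 : 0 < -(s * (∫ x in s..t, β₁ x) - ∫ x in s..t, x * β₁ x) := by
      rw [← lin, ← intervalIntegral.integral_neg]
      refine hpos _ ((continuousOn_const.mul h1).sub hx1).neg s hs t ht hst fun x hx => ?_
      show 0 < -(s * β₁ x - x * β₁ x)
      rw [← sub_mul, ← neg_mul, neg_sub]
      exact mul_pos (sub_pos.2 hx.1) (hp1 x (hin s hs t ht x hx))
    have e1 := aux17 J hJo hJc β₁ β₂ h1 h2 hid s t hs ht a.ne' p1.ne'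
    have e2 := aux17 J hJo hJc β₁ β₂ h1 h2 hid t s ht hs
      (by rw [intervalIntegral.integral_symm]; exact (neg_neg_of_pos a).ne)
      (by
        simp only [intervalIntegral.integral_symm s t]
        intro h; linarith)
    simp only [intervalIntegral.integral_symm s t] at e2
    apply mul_right_cancel₀ a.ne'
    linear_combination β₁ s * e1 + β₁ t * e2
  rcases J.eq_empty_or_nonempty with h | ⟨p, hp⟩
  · exact ⟨1, one_pos, by simp [h]⟩
  · refine ⟨β₂ p / β₁ p, div_pos (hp2 p hp) (hp1 p hp), fun x hx => ?_⟩
    have := hp1 p hp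
    rw [div_mul_eq_mul_div, eq_div_iff this.ne']
    rcases lt_trichotomy p x with h | h | h
    · exact (key p hp x hx h).symm
    · rw [h]
    · exact key x hx p hp h
end

section
/- Let b be a nondegenerate symmetric bilinear form on ℝ³, and let q, p₁, p₂ ∈ ℝ³ be linearly independent vectors with b(q,q) = b(p₁,p₁) = b(p₂,p₂) = 0 (three distinct points of the conic {b = 0} in the projective plane). Let w ∈ ℝ³ be a nonzero vector with b(w,p₁) = 0 and b(w,p₂) = 0 (a representative of the intersection point p∞ of the tangent lines to the conic at p₁ and at p₂). Then there exist nonzero real numbers λ, μ and real numbers γ, c with c ≠ 0 such that b(q, λ·p₁ + μ·p₂) = 0 and λ·p₁ − μ·p₂ + γ·q = c·w. (Equivalently: in the pencil of lines through the point [q], the tangent line to the conic at [q] — spanned by q and λp₁ + μp₂ — is the harmonic conjugate of the line through [q] and [w] — spanned by q and λp₁ − μp₂ — with respect to the pair of lines joining [q] to [p₁] and to [p₂].) -/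
theorem stmt18 (b : (Fin 3 → ℝ) →ₗ[ℝ] (Fin 3 → ℝ) →ₗ[ℝ] ℝ)
    (hsymm : ∀ u v : Fin 3 → ℝ, b u v = b v u)
    (hnd : ∀ v : Fin 3 → ℝ, (∀ u, b v u = 0) → v = 0)
    (q p₁ p₂ : Fin 3 → ℝ) (hli : LinearIndependent ℝ ![q, p₁, p₂])
    (hq : b q q = 0) (hp₁ : b p₁ p₁ = 0) (hp₂ : b p₂ p₂ = 0)
    (w : Fin 3 → ℝ) (hw : w ≠ 0) (hw₁ : b w p₁ = 0) (hw₂ : b w p₂ = 0) :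
    ∃ lam mu gam c : ℝ, lam ≠ 0 ∧ mu ≠ 0 ∧ c ≠ 0 ∧
      b q (lam • p₁ + mu • p₂) = 0 ∧
      lam • p₁ - mu • p₂ + gam • q = c • w := by
  have hind : ∀ x y z : ℝ, x • q + y • p₁ + z • p₂ = 0 → x = 0 ∧ y = 0 ∧ z = 0 := by
    intro x y z h
    have := Fintype.linearIndependent_iff.1 hli ![x, y, z] (by
      simpa [Fin.sum_univ_three] using h)
    exact ⟨this 0, this 1, this 2⟩
  have hspan : ∀ v : Fin 3 → ℝ, ∃ x y z : ℝ, v = x • q + y • p₁ + z • p₂ := by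
    intro v
    let B := basisOfLinearIndependentOfCardEqFinrank hli (by simp)
    refine ⟨B.repr v 0, B.repr v 1, B.repr v 2, ?_⟩
    have h := B.sum_repr v
    rw [Fin.sum_univ_three] at h
    simpa [B] using h.symm
  have hN : ∀ v, b v q = 0 → b v p₁ = 0 → b v p₂ = 0 → v = 0 := by
    intro v h0 h1 h2
    refine hnd v fun u => ?_
    obtain ⟨x, y, z, rfl⟩ := hspan u
    simp [h0, h1, h2]
  have s1 := hsymm p₁ q
  have s2 := hsymm p₂ q
  have s3 := hsymm p₂ p₁
  have hA : b q p₁ ≠ 0 := by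
    intro hA
    have h := hN ((-b q p₂) • p₁ + (b p₁ p₂) • q) (by simp [hq, s1, hA]) (by simp [hp₁, hA])
      (by simp; ring)
    have h' := hind (b p₁ p₂) (-b q p₂) 0 (by rw [← h]; module)
    have h1 := hN p₁ (by rw [s1, hA]) hp₁ h'.1
    have := hind 0 1 0 (by simp [h1])
    simp at this
  have hB : b q p₂ ≠ 0 := by
    intro hA
    have h := hN ((-b q p₁) • p₂ + (b p₁ p₂) • q) (by simp [hq, s2, hA])
      (by simp [s3]; ring) (by simp [hp₂, hA])
    have h' := hind (b p₁ p₂) 0 (-b q p₁) (by rw [← h]; module)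
    have h1 := hN p₂ (by rw [s2, hA]) (by rw [s3, h'.1]) hp₂
    have := hind 0 0 1 (by simp [h1])
    simp at this
  have hC : b p₁ p₂ ≠ 0 := by
    intro hA
    have h := hN ((-b q p₁) • p₂ + (b q p₂) • p₁) (by simp [s1, s2]; ring)
      (by simp [hp₁, s3, hA]) (by simp [hp₂, hA])
    have h' := hind 0 (b q p₂) (-b q p₁) (by rw [← h]; module)
    exact hB h'.2.1
  obtain ⟨x, y, z, rfl⟩ := hspan w
  simp [hp₁, s3] at hw₁
  simp [hp₂] at hw₂
  have hx : x ≠ 0 := by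
    rintro rfl
    simp [hC] at hw₁ hw₂
    simp [hw₁, hw₂] at hw
  refine ⟨y, -z, x, 1, ?_, ?_, one_ne_zero, ?_, by module⟩
  · rintro rfl
    simp [hx, hB] at hw₂
  · intro hz
    have hz : z = 0 := by linarith
    subst hz
    simp [hx, hA] at hw₁
  · simp
    apply mul_left_cancel₀ hC
    linear_combination (b q p₁) * hw₂ - (b q p₂) * hw₁
end

section
/- Let p∞, p₁, p₂ ∈ ℝ³ be linearly independent vectors, and let q ∈ ℝ³ be a vector not contained in any of the three planes span{p∞,p₁}, span{p∞,p₂}, span{p₁,p₂}. Then the set of symmetric bilinear forms b on ℝ³ satisfying the five linear conditions b(p₁,p₁) = 0, b(p₂,p₂) = 0, b(q,q) = 0, b(p∞,p₁) = 0, b(p∞,p₂) = 0 is a one-dimensional subspace of the space of symmetric bilinear forms on ℝ³, and every nonzero element of this subspace is nondegenerate. (Thus the point [q] lies on a conic through [p₁] and [p₂] tangent there to the lines joining [p∞] to [p₁] and to [p₂] respectively, and this conic is unique.) -/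
theorem stmt19 (pinf p₁ p₂ : Fin 3 → ℝ)
    (hli : LinearIndependent ℝ ![pinf, p₁, p₂])
    (q : Fin 3 → ℝ)
    (hq1 : q ∉ Submodule.span ℝ {pinf, p₁})
    (hq2 : q ∉ Submodule.span ℝ {pinf, p₂})
    (hq3 : q ∉ Submodule.span ℝ {p₁, p₂}) :
    ∃ b₀ : (Fin 3 → ℝ) →ₗ[ℝ] (Fin 3 → ℝ) →ₗ[ℝ] ℝ,
      b₀ ≠ 0 ∧ (∀ u v, b₀ u v = b₀ v u) ∧
      b₀ p₁ p₁ = 0 ∧ b₀ p₂ p₂ = 0 ∧ b₀ q q = 0 ∧ b₀ pinf p₁ = 0 ∧ b₀ pinf p₂ = 0 ∧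
      (∀ b : (Fin 3 → ℝ) →ₗ[ℝ] (Fin 3 → ℝ) →ₗ[ℝ] ℝ,
        (∀ u v, b u v = b v u) →
        b p₁ p₁ = 0 → b p₂ p₂ = 0 → b q q = 0 → b pinf p₁ = 0 → b pinf p₂ = 0 →
        ∃ c : ℝ, b = c • b₀) ∧
      (∀ b : (Fin 3 → ℝ) →ₗ[ℝ] (Fin 3 → ℝ) →ₗ[ℝ] ℝ,
        (∀ u v, b u v = b v u) →
        b p₁ p₁ = 0 → b p₂ p₂ = 0 → b q q = 0 → b pinf p₁ = 0 → b pinf p₂ = 0 →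
        b ≠ 0 → ∀ v : Fin 3 → ℝ, (∀ u, b v u = 0) → v = 0) := by
  obtain ⟨B, hB⟩ : ∃ B : Module.Basis (Fin 3) ℝ (Fin 3 → ℝ), ⇑B = ![pinf, p₁, p₂] :=
    ⟨basisOfLinearIndependentOfCardEqFinrank hli (by simp), by simp⟩
  have hB0 : B 0 = pinf := by simp [hB]
  have hB1 : B 1 = p₁ := by simp [hB]
  have hB2 : B 2 = p₂ := by simp [hB]
  clear hB hli
  subst hB0 hB1 hB2
  have hrep : ∀ u, u = B.coord 0 u • B 0 + B.coord 1 u • B 1 + B.coord 2 u • B 2 := by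
    intro u
    have := B.sum_repr u
    rw [Fin.sum_univ_three] at this
    exact this.symm
  have c00 : B.coord 0 (B 0) = 1 := by simp
  have c01 : B.coord 0 (B 1) = 0 := by simp
  have c02 : B.coord 0 (B 2) = 0 := by simp
  have c10 : B.coord 1 (B 0) = 0 := by simp
  have c11 : B.coord 1 (B 1) = 1 := by simp
  have c12 : B.coord 1 (B 2) = 0 := by simp
  have c20 : B.coord 2 (B 0) = 0 := by simp
  have c21 : B.coord 2 (B 1) = 0 := by simp
  have c22 : B.coord 2 (B 2) = 1 := by simp
  have hq := hrep q
  generalize B.coord 0 = e0 at *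
  generalize B.coord 1 = e1 at *
  generalize B.coord 2 = e2 at *
  have hz : e2 q ≠ 0 := by
    intro h
    exact hq1 (Submodule.mem_span_pair.2 ⟨e0 q, e1 q, by rw [h] at hq; simpa using hq.symm⟩)
  have hy : e1 q ≠ 0 := by
    intro h
    exact hq2 (Submodule.mem_span_pair.2 ⟨e0 q, e2 q, by rw [h] at hq; simpa using hq.symm⟩)
  have hx : e0 q ≠ 0 := by
    intro h
    exact hq3 (Submodule.mem_span_pair.2 ⟨e1 q, e2 q, by rw [h] at hq; simpa using hq.symm⟩)
  clear hq hq1 hq2 hq3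
  have key : ∀ b : (Fin 3 → ℝ) →ₗ[ℝ] (Fin 3 → ℝ) →ₗ[ℝ] ℝ,
        (∀ u v, b u v = b v u) →
        b (B 1) (B 1) = 0 → b (B 2) (B 2) = 0 → b q q = 0 → b (B 0) (B 1) = 0 →
        b (B 0) (B 2) = 0 →
        ∃ c : ℝ, ∀ u v, b u v = c * (2 * e1 q * e2 q * (e0 u * e0 v)
          - e0 q ^ 2 * (e1 u * e2 v + e2 u * e1 v)) := by
    intro b hs h11 h22 hqq h01 h02
    have ex : ∀ u v, b u v = b (B 0) (B 0) * (e0 u * e0 v)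
        + b (B 1) (B 2) * (e1 u * e2 v + e2 u * e1 v) := by
      intro u v
      conv_lhs => rw [hrep u, hrep v]
      simp only [map_add, map_smul, LinearMap.add_apply, LinearMap.smul_apply, smul_eq_mul,
        hs (B 1) (B 0), hs (B 2) (B 0), hs (B 2) (B 1), h11, h22, h01, h02]
      ring
    rw [ex q q] at hqq
    refine ⟨- b (B 1) (B 2) / e0 q ^ 2, fun u v => ?_⟩
    rw [ex u v]
    have : b (B 0) (B 0) = - b (B 1) (B 2) / e0 q ^ 2 * (2 * e1 q * e2 q) := by
      field_simp
      linear_combination hqq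
    rw [this]
    field_simp
    ring
  obtain ⟨b₀, hb₀⟩ : ∃ b₀ : (Fin 3 → ℝ) →ₗ[ℝ] (Fin 3 → ℝ) →ₗ[ℝ] ℝ, ∀ u v, b₀ u v =
      2 * e1 q * e2 q * (e0 u * e0 v) - e0 q ^ 2 * (e1 u * e2 v + e2 u * e1 v) := by
    refine ⟨(2 * e1 q * e2 q) • e0.smulRight e0
      - (e0 q ^ 2) • (e1.smulRight e2 + e2.smulRight e1), fun u v => ?_⟩
    simp
    ring
  refine ⟨b₀, ?_, ?_, ?_, ?_, ?_, ?_, ?_, ?_, ?_⟩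
  · intro h
    have := hb₀ (B 0) (B 0)
    simp [h, c00, c10, c20, hy, hz] at this
  · intro u v
    rw [hb₀, hb₀]; ring
  · simp [hb₀, c01, c11, c21]
  · simp [hb₀, c02, c12, c22]
  · rw [hb₀]; ring
  · simp [hb₀, c00, c10, c20, c01, c11, c21]
  · simp [hb₀, c00, c10, c20, c02, c12, c22]
  · intro b hs h1 h2 h3 h4 h5
    obtain ⟨c, hc⟩ := key b hs h1 h2 h3 h4 h5
    refine ⟨c, LinearMap.ext fun u => LinearMap.ext fun v => ?_⟩
    rw [hc, LinearMap.smul_apply, LinearMap.smul_apply, hb₀, smul_eq_mul]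
  · intro b hs h1 h2 h3 h4 h5 hne v hv
    obtain ⟨c, hc⟩ := key b hs h1 h2 h3 h4 h5
    have hc0 : c ≠ 0 := by
      rintro rfl
      exact hne (LinearMap.ext fun u => LinearMap.ext fun v => by simp [hc])
    have a0 : e0 v = 0 := by
      have := hv (B 0)
      simpa [hc, c00, c10, c20, hc0, hy, hz] using this
    have a2 : e2 v = 0 := by
      have := hv (B 1)
      simpa [hc, c01, c11, c21, hc0, hx] using this
    have a1 : e1 v = 0 := by
      have := hv (B 2)
      simpa [hc, c02, c12, c22, hc0, hx] using this
    rw [hrep v, a0, a1, a2]; simp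
end
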